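/- arXiv:math/0606774 — 2 statements merged into one kernel-verified Lean document; each statement's English description precedes it below -/
import Mathlib

section
/- Let $G$ be a group generated by a finite set $S$ (that is, the subgroup generated by $S$ is all of $G$). Suppose the growth of $G$ is polynomial: there exist constants $C > 0$ and $d \in \mathbb{N}$ such that for every $k \in \mathbb{N}$, the number of elements of $G$ expressible as products of at most $k$ elements of $S \cup S^{-1}$ is at most $C \cdot (k^d + 1)$. Then $G$ is almost nilpotent: $G$ contains a nilpotent subgroup of finite index. -/
/-!
# Groups of polynomial growth are virtually nilpotent

The proof follows the functional-analytic route of Shalom, Kleiner and Ozawa, which replaces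
Gromov's limit spaces by harmonic cocycles, and the gap argument for compact linear groups
instead of Tits' alternative.

*Growth.* `PG G d` says that for every finite `T ⊆ G` the sets `T ^ n` have size `O((n + 1) ^ d)`.
It passes to subgroups and quotients, and the degree drops by one when passing to the kernel of a
surjection onto `ℤ` (`PG.ker`). So, by induction on `d`, it is enough to show three things for an
infinite finitely generated `G` of polynomial growth.

1. Some finite index subgroup `G'` of `G` surjects onto `ℤ` (`VZ.of_growth`).
2. The kernel `K` of that surjection is again finitely generated (`PG.ker_fg`), by Milnor's
   argument: otherwise the products of the `t ^ i e t ^ (-i)` over subsets of `{0, …, k - 1}`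
   are distinct.
3. If `K` is virtually nilpotent, so is `K ⋊ ℤ` (`VN.of_ker`). Here `K` may be replaced by a
   characteristic nilpotent subgroup `N` of finite index; by the same collision argument the
   generator `t` of `ℤ` acts on the finitely generated abelian group `Z(N)` with all eigenvalues of
   modulus at most one, so by Kronecker's theorem a power of it acts unipotently
   (`SmallRel.unipotent`), and one inducts on the nilpotency class.

*Virtual surjection onto `ℤ`.* Fix a symmetric lazy random walk on `G`, with steps weighted by `w`.

* In the regular representation of an infinite group there are unit vectors which are almost
  invariant and whose displacement is almost harmonic: otherwise the return probabilities would
  decay exponentially, against polynomial growth (`exists_almost_harmonic`). An ultralimit of the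
  associated coboundaries is an orthogonal representation `π` on a Hilbert space with a nonzero
  harmonic cocycle `b` (`exists_harmonic`).
* Since the entropy of the walk at time `n` is `O(log n)`, there are infinitely many *good times*
  `n` at which the entropy increment is `O(1 / n)`, so that the law of the walk moves by
  `O(n ^ (-1/2))` in the Hellinger distance when translated by a generator (`exists_good_times`).
  Consequently the limit of the normalized covariances `E⟪b(X_n), u⟫⟪b(X_n), v⟫ / n` along good
  times is a nonzero positive operator `A` of finite trace; harmonicity makes its quadratic form
  `π`-harmonic (`IsHarmonic.exists_operator`). By the equality case of averaging, the top eigenspace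
  of `A`, which is finite-dimensional, is `π`-invariant, and the projection of `b` to it does not
  vanish (`exists_finiteDimensional_harmonic`).
* Thus there is a finite-dimensional orthogonal representation `ρ` of `G` with a nonzero harmonic
  cocycle. If `ρ(G)` is infinite, then the elements of `G` acting close to the identity generate a
  finite index subgroup, whose image is nilpotent: commutators of elements near the identity are
  quadratically smaller, so a long nontrivial left-normed commutator would produce too many distinct
  products. An infinite finitely generated solvable group virtually surjects onto `ℤ`
  (`VZ.of_rep`, `VZ.of_solvable`). If `ρ(G)` is finite, then the cocycle restricts to a nonzero
  homomorphism from a finite index subgroup to a vector space (`VZ.of_harmonic_finite`).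
-/

/-! ### Polynomial growth -/

namespace PolyGrowth

open scoped Pointwise
open Finset

universe u v

/-- `G` has polynomial growth of degree at most `d`: for *every* finite subset `T` of `G`, generating
or not, the product set `T ^ n` has `O((n + 1) ^ d)` elements. Quantifying over all finite sets makes
the property pass to subgroups and quotients with the same degree. -/
def PG (G : Type u) [Group G] (d : ℕ) : Prop :=
  letI := Classical.decEq G
  ∀ T : Finset G, ∃ C : ℕ, ∀ n : ℕ, #(T ^ n) ≤ C * (n + 1) ^ d

theorem PG.bound {G : Type u} [Group G] [DecidableEq G] {d : ℕ} (h : PG G d) (T : Finset G) :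
    ∃ C : ℕ, ∀ n : ℕ, #(T ^ n) ≤ C * (n + 1) ^ d := by
  have := h T
  convert this

theorem PG.mk {G : Type u} [Group G] [DecidableEq G] {d : ℕ}
    (h : ∀ T : Finset G, ∃ C : ℕ, ∀ n : ℕ, #(T ^ n) ≤ C * (n + 1) ^ d) : PG G d := by
  intro T
  have := h T
  convert this

theorem PG.of_injective {G : Type u} {H : Type v} [Group G] [Group H] {d : ℕ} (h : PG G d)
    (f : H →* G) (hf : Function.Injective f) : PG H d := by
  classical
  refine PG.mk fun T => ?_
  obtain ⟨C, hC⟩ := h.bound (T.image f)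
  refine ⟨C, fun n => ?_⟩
  have := hC n
  rw [← Finset.image_pow, Finset.card_image_of_injective _ hf] at this
  exact this

theorem PG.subgroup {G : Type u} [Group G] {d : ℕ} (h : PG G d) (H : Subgroup G) : PG H d :=
  h.of_injective H.subtype H.subtype_injective

theorem PG.of_surjective {G : Type u} {H : Type v} [Group G] [Group H] {d : ℕ} (h : PG G d)
    (f : G →* H) (hf : Function.Surjective f) : PG H d := by
  classical
  refine PG.mk fun T => ?_
  obtain ⟨C, hC⟩ := h.bound (T.image (Function.surjInv hf))
  refine ⟨C, fun n => ?_⟩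
  have h1 : (T.image (Function.surjInv hf)).image f = T := by
    rw [Finset.image_image, show f ∘ Function.surjInv hf = id from
      funext (Function.surjInv_eq hf), Finset.image_id]
  have h2 : #(T ^ n) ≤ #((T.image (Function.surjInv hf)) ^ n) := by
    conv_lhs => rw [← h1, ← Finset.image_pow]
    exact Finset.card_image_le
  exact h2.trans (hC n)

/-- The kernel of a homomorphism onto `ℤ` has growth of one degree less: if `f t` generates `ℤ`, the
products of elements of `T ^ n` with `1, t, …, t ^ n` are all distinct. -/
theorem PG.ker {G : Type u} [Group G] {d : ℕ} (h : PG G (d + 1))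
    (f : G →* Multiplicative ℤ) (t : G) (ht : f t = Multiplicative.ofAdd 1) :
    PG f.ker d := by
  classical
  refine PG.mk fun T => ?_
  set U : Finset G := insert 1 (insert t (T.image f.ker.subtype)) with hU
  obtain ⟨C, hC⟩ := h.bound U
  refine ⟨C * 2 ^ (d + 1), fun n => ?_⟩
  have h1U : (1 : G) ∈ U := by simp [hU]
  have htU : t ∈ U := by simp [hU]
  have hTU : T.image f.ker.subtype ⊆ U := by
    intro x hx; simp only [hU, mem_insert]; tauto
  have hpow : ∀ k : ℕ, f (t ^ k) = Multiplicative.ofAdd (k : ℤ) := by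
    intro k
    rw [map_pow, ht, ← ofAdd_nsmul]; simp
  have key : #((T ^ n) ×ˢ (range (n + 1))) ≤ #(U ^ (2 * n)) := by
    apply Finset.card_le_card_of_injOn (fun p => (p.1 : G) * t ^ p.2)
    · rintro ⟨x, k⟩ hx
      simp only [coe_product, Set.mem_prod, mem_coe, mem_range] at hx
      have hx1 : (x : G) ∈ U ^ n := by
        have : (x : G) ∈ (T ^ n).image f.ker.subtype := Finset.mem_image_of_mem f.ker.subtype hx.1
        rw [Finset.image_pow] at this
        exact Finset.pow_subset_pow_left hTU this
      have hx2 : t ^ k ∈ U ^ n :=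
        Finset.pow_subset_pow_right h1U (by omega) (Finset.pow_mem_pow htU)
      have := Finset.mul_mem_mul hx1 hx2
      rw [← pow_add, ← two_mul] at this
      exact this
    · rintro ⟨x, k⟩ hx ⟨y, l⟩ hy hxy
      simp only at hxy
      have hf := congrArg f hxy
      rw [map_mul, map_mul, f.mem_ker.1 x.2, f.mem_ker.1 y.2, one_mul, one_mul, hpow, hpow] at hf
      have hkl : k = l := by
        have := Multiplicative.ofAdd.injective hf
        exact_mod_cast this
      subst hkl
      have : x = y := Subtype.ext (mul_right_cancel hxy)
      rw [this]
  rw [Finset.card_product, card_range] at key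
  have h3 := key.trans (hC (2 * n))
  have h4 : #(T ^ n) * (n + 1) ≤ (C * 2 ^ (d + 1) * (n + 1) ^ d) * (n + 1) := by
    refine h3.trans ?_
    calc C * (2 * n + 1) ^ (d + 1) ≤ C * (2 * (n + 1)) ^ (d + 1) := by gcongr; omega
      _ = _ := by rw [mul_pow]; ring
  exact Nat.le_of_mul_le_mul_right h4 (Nat.succ_pos n)

/-- A symmetric finite generating set containing `1`. -/
theorem exists_symm_gen (G : Type u) [Group G] [Group.FG G] :
    ∃ S : Finset G, 1 ∈ S ∧ (∀ s ∈ S, s⁻¹ ∈ S) ∧ Subgroup.closure (S : Set G) = ⊤ := by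
  classical
  obtain ⟨S, hS⟩ := (Group.FG.out : (⊤ : Subgroup G).FG)
  refine ⟨insert 1 (S ∪ S⁻¹), by simp, ?_, ?_⟩
  · intro s hs
    simp only [mem_insert, mem_union, mem_inv'] at hs ⊢
    rcases hs with rfl | hs | hs
    · simp
    · simp [hs]
    · simp [hs]
  · rw [eq_top_iff, ← hS]
    apply Subgroup.closure_mono
    intro x hx
    simp only [coe_insert, coe_union, Set.mem_insert_iff, Set.mem_union]
    tauto

theorem PG.finite_of_zero {G : Type u} [Group G] [Group.FG G] (h : PG G 0) : Finite G := by
  classical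
  obtain ⟨S, h1, -, hS⟩ := exists_symm_gen G
  obtain ⟨C, hC⟩ := h.bound S
  by_contra hinf
  rw [not_finite_iff_infinite] at hinf
  have := Finset.add_one_le_card_pow (X := S) h1 (by rw [hS]; exact Set.infinite_univ) C
  have h2 := hC C
  simp at h2
  omega

theorem exists_mem_pow {G : Type u} [Group G] [DecidableEq G] {S : Finset G}
    (hinv : ∀ s ∈ S, s⁻¹ ∈ S) (hS : Subgroup.closure (S : Set G) = ⊤) (g : G) :
    ∃ n, g ∈ S ^ n := by
  have hg : g ∈ Subgroup.closure (S : Set G) := by rw [hS]; trivial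
  induction hg using Subgroup.closure_induction with
  | mem x hx => exact ⟨1, by simpa using hx⟩
  | one => exact ⟨0, by simp⟩
  | mul x y _ _ hx hy =>
    obtain ⟨n, hn⟩ := hx
    obtain ⟨m, hm⟩ := hy
    exact ⟨n + m, by rw [pow_add]; exact Finset.mul_mem_mul hn hm⟩
  | inv x _ hx =>
    obtain ⟨n, hn⟩ := hx
    refine ⟨n, ?_⟩
    have hSS : S⁻¹ = S := by
      ext y
      rw [mem_inv']
      exact ⟨fun h => by simpa using hinv _ h, fun h => hinv _ h⟩
    have : x⁻¹ ∈ (S ^ n)⁻¹ := Finset.inv_mem_inv hn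
    rw [← inv_pow, hSS] at this
    exact this

theorem exists_subset_pow {G : Type u} [Group G] [DecidableEq G] {S : Finset G} (h1 : 1 ∈ S)
    (hinv : ∀ s ∈ S, s⁻¹ ∈ S) (hS : Subgroup.closure (S : Set G) = ⊤) (T : Finset G) :
    ∃ n, T ⊆ S ^ n := by
  induction T using Finset.induction_on with
  | empty => exact ⟨0, by simp⟩
  | insert a T _ ih =>
    obtain ⟨n, hn⟩ := ih
    obtain ⟨m, hm⟩ := exists_mem_pow hinv hS a
    refine ⟨n + m, Finset.insert_subset ?_ ?_⟩
    · exact Finset.pow_subset_pow_right h1 (by omega) hm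
    · exact hn.trans (Finset.pow_subset_pow_right h1 (by omega))

/-- The growth hypothesis on word balls implies `PG`. -/
theorem pg_of_balls {G : Type u} [Group G] (S : Finset G)
    (hgen : Subgroup.closure (S : Set G) = ⊤) (C : ℝ) (hC : 0 < C) (d : ℕ)
    (hpoly : ∀ k : ℕ,
      (Nat.card {g : G | ∃ l : List G, l.length ≤ k ∧
          (∀ x ∈ l, x ∈ S ∨ x⁻¹ ∈ S) ∧ l.prod = g} : ℝ) ≤ C * ((k : ℝ) ^ d + 1)) :
    PG G d := by
  classical
  set R : Finset G := insert 1 (S ∪ S⁻¹) with hR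
  have h1 : 1 ∈ R := by simp [hR]
  have hinv : ∀ s ∈ R, s⁻¹ ∈ R := by
    intro s hs
    simp only [hR, mem_insert, mem_union, mem_inv'] at hs ⊢
    rcases hs with rfl | hs | hs
    · simp
    · simp [hs]
    · simp [hs]
  have hRgen : Subgroup.closure (R : Set G) = ⊤ := by
    rw [eq_top_iff, ← hgen]
    apply Subgroup.closure_mono
    intro x hx
    simp only [hR, coe_insert, coe_union, Set.mem_insert_iff, Set.mem_union]
    tauto
  -- the ball of radius `k` is `R ^ k`
  have hball : ∀ k : ℕ, {g : G | ∃ l : List G, l.length ≤ k ∧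
          (∀ x ∈ l, x ∈ S ∨ x⁻¹ ∈ S) ∧ l.prod = g} = ((R ^ k : Finset G) : Set G) := by
    intro k
    ext g
    simp only [Set.mem_ofPred_eq, mem_coe]
    constructor
    · rintro ⟨l, hl, hlS, rfl⟩
      refine Finset.pow_subset_pow_right h1 hl ?_
      clear hl
      induction l with
      | nil => simp
      | cons a l ih =>
        rw [List.prod_cons, List.length_cons, pow_succ']
        refine Finset.mul_mem_mul ?_ (ih fun x hx => hlS x (List.mem_cons_of_mem _ hx))
        have := hlS a List.mem_cons_self
        simp only [hR, mem_insert, mem_union, mem_inv']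
        tauto
    · intro hg
      induction k generalizing g with
      | zero => exact ⟨[], by simp, by simp, by simpa [eq_comm] using hg⟩
      | succ k ih =>
        rw [pow_succ'] at hg
        obtain ⟨a, ha, b, hb, rfl⟩ := Finset.mem_mul.1 hg
        obtain ⟨l, hl, hlS, rfl⟩ := ih b hb
        by_cases ha1 : a = 1
        · exact ⟨l, by omega, hlS, by simp [ha1]⟩
        · refine ⟨a :: l, by simpa using hl, ?_, by simp⟩
          intro x hx
          rcases List.mem_cons.1 hx with rfl | hx
          · simp only [hR, mem_insert, mem_union, mem_inv'] at ha
            tauto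
          · exact hlS x hx
  have hcard : ∀ k : ℕ, (#(R ^ k) : ℝ) ≤ C * ((k : ℝ) ^ d + 1) := by
    intro k
    have := hpoly k
    rw [hball k, Nat.card_coe_set_eq, Set.ncard_coe_finset] at this
    exact this
  refine PG.mk fun T => ?_
  obtain ⟨L, hL⟩ := exists_subset_pow h1 hinv hRgen T
  refine ⟨⌈C * (2 * (L + 1) ^ d)⌉₊, fun n => ?_⟩
  have h2 : #(T ^ n) ≤ #(R ^ (L * n)) := by
    apply Finset.card_le_card
    rw [pow_mul]
    exact Finset.pow_subset_pow_left hL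
  have h3 : (#(T ^ n) : ℝ) ≤ (⌈C * (2 * (L + 1) ^ d)⌉₊ * (n + 1) ^ d : ℕ) := by
    have e1 : ((L * n : ℕ) : ℝ) ^ d ≤ ((L : ℝ) + 1) ^ d * (n + 1) ^ d := by
      push_cast
      rw [← mul_pow]
      gcongr <;> linarith
    have e2 : (1 : ℝ) ≤ ((L : ℝ) + 1) ^ d * (n + 1) ^ d := by
      apply one_le_mul_of_one_le_of_one_le <;> apply one_le_pow₀ <;> simp
    calc (#(T ^ n) : ℝ) ≤ #(R ^ (L * n)) := by exact_mod_cast h2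
      _ ≤ C * (((L * n : ℕ) : ℝ) ^ d + 1) := hcard _
      _ ≤ C * (((L : ℝ) + 1) ^ d * (n + 1) ^ d + ((L : ℝ) + 1) ^ d * (n + 1) ^ d) := by gcongr
      _ = (C * (2 * (L + 1) ^ d)) * (n + 1) ^ d := by ring
      _ ≤ _ := by
        push_cast
        gcongr
        exact Nat.le_ceil _
  exact_mod_cast h3

end PolyGrowth

/-! ### Virtual surjections onto `ℤ`, and nilpotency from commutators of generators -/

namespace PolyGrowth

open scoped Pointwise commutatorElement
open Finset

universe u v

/-- `G` virtually maps onto `ℤ`: some finite-index subgroup surjects onto `ℤ`. -/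
def VZ (G : Type u) [Group G] : Prop :=
  ∃ G' : Subgroup G, G'.FiniteIndex ∧ ∃ f : G' →* Multiplicative ℤ, Function.Surjective f

theorem VZ.of_subgroup {G : Type u} [Group G] (H : Subgroup G) [H.FiniteIndex] (h : VZ H) :
    VZ G := by
  obtain ⟨K, hK, f, hf⟩ := h
  refine ⟨K.map H.subtype, ?_, f.comp
    (K.equivMapOfInjective H.subtype H.subtype_injective).symm.toMonoidHom, ?_⟩
  · rw [Subgroup.finiteIndex_iff, Subgroup.index_map_subtype]
    exact mul_ne_zero hK.index_ne_zero Subgroup.FiniteIndex.index_ne_zero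
  · rw [MonoidHom.coe_comp]
    exact hf.comp (MulEquiv.surjective _)

theorem VZ.of_surjective {G : Type u} {Q : Type v} [Group G] [Group Q] (φ : G →* Q)
    (hφ : Function.Surjective φ) (h : VZ Q) : VZ G := by
  obtain ⟨K, hK, f, hf⟩ := h
  refine ⟨K.comap φ, ?_, f.comp (φ.subgroupComap K), ?_⟩
  · rw [Subgroup.finiteIndex_iff, Subgroup.index_comap_of_surjective _ hφ]
    exact hK.index_ne_zero
  · rw [MonoidHom.coe_comp]
    exact hf.comp (MonoidHom.subgroupComap_surjective_of_surjective _ _ hφ)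

theorem exists_onto_int_of_comm (A : Type u) [CommGroup A] [Group.FG A] [Infinite A] :
    ∃ f : A →* Multiplicative ℤ, Function.Surjective f := by
  have hfin : Module.Finite ℤ (Additive A) := Module.Finite.iff_addGroup_fg.2 inferInstance
  set T := Submodule.torsion ℤ (Additive A) with hT
  have hTfin : Finite T := Module.finite_of_fg_torsion T (Submodule.torsion_isTorsion)
  have hfree : Module.Free ℤ (Additive A ⧸ T) := inferInstance
  have hnt : Nontrivial (Additive A ⧸ T) := by
    by_contra hn
    rw [not_nontrivial_iff_subsingleton] at hn
    have hTtop : T = ⊤ := Submodule.Quotient.subsingleton_iff.1 hn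
    have : Finite (Additive A) := by
      rw [hTtop] at hTfin
      exact Finite.of_equiv _ (Submodule.topEquiv (R := ℤ) (M := Additive A)).toEquiv
    have : Finite A := this
    exact not_finite A
  let b := Module.Free.chooseBasis ℤ (Additive A ⧸ T)
  have : Nonempty (Module.Free.ChooseBasisIndex ℤ (Additive A ⧸ T)) := b.index_nonempty
  obtain ⟨i⟩ := this
  let g : Additive A →+ ℤ := ((b.coord i).comp T.mkQ).toAddMonoidHom
  have hg : Function.Surjective g := by
    intro n
    obtain ⟨x, hx⟩ := T.mkQ_surjective (n • b i)
    refine ⟨x, ?_⟩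
    change b.coord i (T.mkQ x) = n
    rw [hx]; simp
  exact ⟨AddMonoidHom.toMultiplicativeRight g, fun n => by
    obtain ⟨x, hx⟩ := hg n.toAdd
    exact ⟨x.toMul, by rw [← ofAdd_toAdd n, ← hx]; rfl⟩⟩

theorem exists_onto_int {G : Type u} {A : Type v} [Group G] [CommGroup A] [Group.FG G] (f : G →* A)
    (hf : Infinite f.range) : ∃ g : G →* Multiplicative ℤ, Function.Surjective g := by
  obtain ⟨g, hg⟩ := exists_onto_int_of_comm f.range
  exact ⟨g.comp f.rangeRestrict, hg.comp f.rangeRestrict_surjective⟩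

/-- An infinite finitely generated solvable group virtually surjects onto `ℤ`: look at the first
term of the derived series whose successor has infinite index. -/
theorem VZ.of_solvable {G : Type u} [Group G] [Group.FG G] [Infinite G] [Group.IsSolvable G] : VZ G := by
  classical
  obtain ⟨n, hn⟩ := Group.IsSolvable.solvable (G := G)
  have hex : ∃ n, ¬ (derivedSeries G n).FiniteIndex := by
    refine ⟨n, ?_⟩
    rw [hn, Subgroup.finiteIndex_iff, Subgroup.index_bot, Nat.card_eq_zero_of_infinite]
    simp
  obtain ⟨m, hm, hmin⟩ : ∃ m, ¬ (derivedSeries G (m + 1)).FiniteIndex ∧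
      (derivedSeries G m).FiniteIndex := by
    have h0 : Nat.find hex ≠ 0 := by
      intro h
      have := Nat.find_spec hex
      rw [h, derivedSeries_zero] at this
      exact this inferInstance
    obtain ⟨m, hm⟩ := Nat.exists_eq_succ_of_ne_zero h0
    refine ⟨m, by have := Nat.find_spec hex; rwa [hm] at this, ?_⟩
    have := Nat.find_min hex (m := m) (by omega)
    simpa using this
  set D := derivedSeries G m with hD
  have : VZ D := by
    obtain ⟨g, hg⟩ := exists_onto_int (Abelianization.of (G := D)) (by
      by_contra hfin
      rw [not_infinite_iff_finite] at hfin
      apply hm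
      have h1 : (commutator D).index ≠ 0 := by
        rw [← Abelianization.ker_of, Subgroup.index_ker]
        exact Nat.card_pos.ne'
      have h2 : (commutator D).map D.subtype = derivedSeries G (m + 1) := by
        rw [derivedSeries_succ, ← hD, commutator_def, Subgroup.map_commutator,
          ← MonoidHom.range_eq_map, Subgroup.range_subtype]
      rw [← h2, Subgroup.finiteIndex_iff, Subgroup.index_map_subtype]
      exact mul_ne_zero h1 hmin.index_ne_zero)
    refine ⟨⊤, inferInstance, g.comp (Subgroup.topEquiv).toMonoidHom, ?_⟩
    rw [MonoidHom.coe_comp]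
    exact hg.comp (MulEquiv.surjective _)
  exact VZ.of_subgroup D this

/-- The set of left-normed commutators `[[t₀, t₁], …, tₖ]` of elements of `T`. -/
def iterComm {G : Type u} [Group G] (T : Set G) : ℕ → Set G
  | 0 => T
  | k + 1 => {z | ∃ x ∈ iterComm T k, ∃ t ∈ T, z = ⁅x, t⁆}

theorem iterComm_image {G : Type u} {H : Type v} [Group G] [Group H] (f : G →* H) (T : Set G)
    (k : ℕ) : iterComm (f '' T) k = f '' iterComm T k := by
  induction k with
  | zero => rfl
  | succ k ih =>
    ext z
    simp only [iterComm, ih, Set.mem_ofPred_eq, Set.mem_image]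
    constructor
    · rintro ⟨_, ⟨x, hx, rfl⟩, _, ⟨t, ht, rfl⟩, rfl⟩
      exact ⟨_, ⟨x, hx, t, ht, rfl⟩, by simp⟩
    · rintro ⟨_, ⟨x, hx, t, ht, rfl⟩, rfl⟩
      exact ⟨_, ⟨x, hx, rfl⟩, _, ⟨t, ht, rfl⟩, by simp⟩

/-- If all long enough left-normed commutators of generators are trivial, the group is nilpotent. -/
theorem isNilpotent_of_iterComm (k : ℕ) {G : Type u} [Group G] (T : Set G)
    (hT : Subgroup.closure T = ⊤) (h : iterComm T k ⊆ {1}) : Group.IsNilpotent G := by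
  induction k generalizing G with
  | zero =>
    have : (⊤ : Subgroup G) = ⊥ := by
      rw [← hT, Subgroup.closure_eq_bot_iff]; exact h
    have : Subsingleton G := Subgroup.subsingleton_iff.1 (subsingleton_of_bot_eq_top this.symm)
    infer_instance
  | succ k ih =>
    apply Group.of_quotient_center_nilpotent
    apply ih ((QuotientGroup.mk' (Subgroup.center G)) '' T)
    · rw [← MonoidHom.map_closure, hT, ← MonoidHom.range_eq_map, MonoidHom.range_eq_top]
      exact QuotientGroup.mk'_surjective _
    · rw [iterComm_image]
      rintro _ ⟨x, hx, rfl⟩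
      rw [Set.mem_singleton_iff]
      change ((x : G) : G ⧸ Subgroup.center G) = 1
      rw [QuotientGroup.eq_one_iff]
      -- an iterated commutator whose brackets with all generators vanish is central
      have hc : Subgroup.closure T ≤ Subgroup.centralizer {x} := by
        rw [Subgroup.closure_le]
        intro t ht
        have h1 : ⁅x, t⁆ = 1 := h ⟨x, hx, t, ht, rfl⟩
        rw [SetLike.mem_coe, Subgroup.mem_centralizer_singleton_iff]
        exact ((commutatorElement_eq_one_iff_mul_comm.1 h1)).symm
      rw [hT] at hc
      rw [Subgroup.mem_center_iff]
      intro g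
      exact Subgroup.mem_centralizer_singleton_iff.1 (hc (Subgroup.mem_top g))

end PolyGrowth

/-! ### Groups all of whose subgroups are finitely generated; kernels of maps onto `ℤ` -/

namespace PolyGrowth

open scoped Pointwise commutatorElement
open Finset

universe u v

/-- Every subgroup of `G` is finitely generated. -/
def Noeth (G : Type u) [Group G] : Prop := ∀ H : Subgroup G, H.FG

theorem Noeth.fg {G : Type u} [Group G] (h : Noeth G) : Group.FG G := ⟨h ⊤⟩

theorem Noeth.subgroup {G : Type u} [Group G] (h : Noeth G) (H : Subgroup G) : Noeth H := by
  intro K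
  rw [← Group.fg_iff_subgroup_fg]
  have h1 : Group.FG (K.map H.subtype) := (Group.fg_iff_subgroup_fg _).2 (h _)
  exact Group.fg_of_surjective
    (f := (K.equivMapOfInjective H.subtype H.subtype_injective).symm.toMonoidHom)
    (MulEquiv.surjective _)

theorem Noeth.of_surjective {G : Type u} {Q : Type v} [Group G] [Group Q] (h : Noeth G)
    (f : G →* Q) (hf : Function.Surjective f) : Noeth Q := by
  intro K
  rw [← Group.fg_iff_subgroup_fg]
  have h1 : Group.FG (K.comap f) := (Group.fg_iff_subgroup_fg _).2 (h _)
  exact Group.fg_of_surjective (f := f.subgroupComap K)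
    (MonoidHom.subgroupComap_surjective_of_surjective _ _ hf)

theorem Noeth.of_finite (G : Type u) [Group G] [Finite G] : Noeth G := fun H =>
  (Group.fg_iff_subgroup_fg H).1 inferInstance

theorem fg_of_ker_of_map {G : Type u} {Q : Type v} [Group G] [Group Q] (f : G →* Q)
    (H : Subgroup G) (h1 : (H ⊓ f.ker).FG) (h2 : (H.map f).FG) : H.FG := by
  classical
  obtain ⟨T1, hT1⟩ := h1
  obtain ⟨T2, hT2⟩ := h2
  have hlift : ∀ y ∈ T2, ∃ x ∈ H, f x = y := by
    intro y hy
    have : y ∈ H.map f := hT2 ▸ Subgroup.subset_closure hy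
    simpa using this
  choose! g hg1 hg2 using hlift
  refine ⟨T1 ∪ T2.image g, le_antisymm ?_ ?_⟩
  · rw [Subgroup.closure_le]
    intro x hx
    simp only [coe_union, coe_image, Set.mem_union, Set.mem_image, mem_coe] at hx
    rcases hx with hx | ⟨y, hy, rfl⟩
    · have : x ∈ H ⊓ f.ker := hT1 ▸ Subgroup.subset_closure hx
      exact this.1
    · exact hg1 y hy
  · intro x hx
    set L := Subgroup.closure ((T1 ∪ T2.image g : Finset G) : Set G) with hL
    have hker : H ⊓ f.ker ≤ L := by
      rw [← hT1]; apply Subgroup.closure_mono; simp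
    have hmap : H.map f ≤ L.map f := by
      rw [← hT2, Subgroup.closure_le]
      intro y hy
      refine ⟨g y, Subgroup.subset_closure ?_, hg2 y hy⟩
      simp only [coe_union, coe_image, Set.mem_union, Set.mem_image, mem_coe]
      exact Or.inr ⟨y, hy, rfl⟩
    have hLH : L ≤ H := by
      rw [hL, Subgroup.closure_le]
      intro z hz
      simp only [coe_union, coe_image, Set.mem_union, Set.mem_image, mem_coe] at hz
      rcases hz with hz | ⟨y, hy, rfl⟩
      · have : z ∈ H ⊓ f.ker := hT1 ▸ Subgroup.subset_closure hz
        exact this.1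
      · exact hg1 y hy
    obtain ⟨z, hz, hzx⟩ := hmap (Subgroup.mem_map_of_mem f hx)
    have : z⁻¹ * x ∈ H ⊓ f.ker :=
      ⟨H.mul_mem (H.inv_mem (hLH hz)) hx,
        MonoidHom.mem_ker.2 (by rw [map_mul, map_inv, hzx]; simp)⟩
    have := L.mul_mem hz (hker this)
    simpa using this

theorem Noeth.of_ext {G : Type u} {Q : Type v} [Group G] [Group Q] (f : G →* Q)
    (hk : Noeth f.ker) (hq : Noeth Q) : Noeth G := by
  intro H
  refine fg_of_ker_of_map f H ?_ (hq _)
  have := hk ((H ⊓ f.ker).subgroupOf f.ker)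
  rw [← Group.fg_iff_subgroup_fg] at this ⊢
  exact Group.fg_of_surjective (f := (Subgroup.subgroupOfEquivOfLe inf_le_right).toMonoidHom)
    (MulEquiv.surjective _)

theorem Noeth.of_finiteIndex {G : Type u} [Group G] (H : Subgroup G) [H.FiniteIndex]
    (h : Noeth H) : Noeth G := by
  have hle : H.normalCore ≤ H := H.normalCore_le
  have h2 : Noeth H.normalCore := by
    have := h.subgroup (H.normalCore.subgroupOf H)
    exact this.of_surjective (Subgroup.subgroupOfEquivOfLe hle).toMonoidHom (MulEquiv.surjective _)
  have h3 : Noeth (QuotientGroup.mk' H.normalCore).ker := by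
    rw [QuotientGroup.ker_mk']; exact h2
  exact Noeth.of_ext (QuotientGroup.mk' H.normalCore) h3 (Noeth.of_finite _)

theorem Noeth.int : Noeth (Multiplicative ℤ) := by
  intro H
  rw [← Group.fg_iff_subgroup_fg]
  obtain ⟨g, hg⟩ := IsCyclic.exists_generator (α := H)
  exact Group.fg_iff.2 ⟨{g}, by
    rw [← Subgroup.zpowers_eq_closure]; exact (Subgroup.eq_top_iff' _).2 hg, Set.finite_singleton g⟩

section Collision

variable {G : Type u} [Group G]

/-- The word `∏_{j < k} e^{ε j} t`, where `ε` is the indicator function of `A`. -/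
def word (e t : G) (A : Finset ℕ) : ℕ → G
  | 0 => 1
  | k + 1 => word e t A k * ((if k ∈ A then e else 1) * t)

/-- The product `∏_{j < k} (t ^ j e t⁻ʲ)^{ε j}`, where `ε` is the indicator function of `A`. -/
def cword (e t : G) (A : Finset ℕ) : ℕ → G
  | 0 => 1
  | k + 1 => cword e t A k * (if k ∈ A then t ^ k * e * (t ^ k)⁻¹ else 1)

theorem word_eq (e t : G) (A : Finset ℕ) (k : ℕ) : word e t A k = cword e t A k * t ^ k := by
  induction k with
  | zero => simp [word, cword]
  | succ k ih =>
    rw [word, cword, ih, pow_succ]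
    split_ifs <;> group

theorem word_congr (e t : G) {A B : Finset ℕ} {k : ℕ} (h : ∀ j < k, (j ∈ A ↔ j ∈ B)) :
    word e t A k = word e t B k := by
  induction k with
  | zero => rfl
  | succ k ih =>
    rw [word, word, ih fun j hj => h j (by omega)]
    simp only [h k (by omega)]

theorem word_mem [DecidableEq G] (e t : G) (A : Finset ℕ) (k : ℕ) :
    word e t A k ∈ ({t, e * t} : Finset G) ^ k := by
  induction k with
  | zero => simp [word]
  | succ k ih =>
    rw [word, pow_succ]
    refine Finset.mul_mem_mul ih ?_
    split_ifs <;> simp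

theorem exists_word_of_collision (e t : G) (k : ℕ) (A B : Finset ℕ)
    (hAB : ∃ j < k, ¬ (j ∈ A ↔ j ∈ B)) (h : word e t A k = word e t B k) :
    ∃ m, ∃ A' B' : Finset ℕ, word e t A' m * e = word e t B' m := by
  induction k with
  | zero => obtain ⟨j, hj, -⟩ := hAB; omega
  | succ k ih =>
    by_cases hk : k ∈ A ↔ k ∈ B
    · have hAB' : ∃ j < k, ¬ (j ∈ A ↔ j ∈ B) := by
        obtain ⟨j, hj, hj'⟩ := hAB
        refine ⟨j, ?_, hj'⟩
        have : j ≠ k := by rintro rfl; exact hj' hk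
        omega
      apply ih hAB'
      rw [word, word] at h
      simp only [hk] at h
      exact mul_right_cancel h
    · rw [word, word, ← mul_assoc, ← mul_assoc] at h
      have h := mul_right_cancel h
      by_cases hA : k ∈ A
      · have hB : k ∉ B := by tauto
        simp only [hA, hB, if_true, if_false, mul_one] at h
        exact ⟨k, A, B, h⟩
      · have hB : k ∈ B := by tauto
        simp only [hA, hB, if_true, if_false, mul_one] at h
        exact ⟨k, B, A, h.symm⟩

theorem exists_poly_lt_two_pow (C d : ℕ) : ∃ k : ℕ, C * (k + 1) ^ d < 2 ^ k := by
  have h1 := tendsto_pow_const_div_const_pow_of_one_lt d (r := (2 : ℝ)) (by norm_num)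
  have h2 := (h1.comp (Filter.tendsto_add_atTop_nat 1)).eventually
    (gt_mem_nhds (show (0 : ℝ) < 1 / (2 * (C + 1)) by positivity))
  obtain ⟨k, hk⟩ := h2.exists
  refine ⟨k, ?_⟩
  simp only [Function.comp] at hk
  rw [div_lt_div_iff₀ (by positivity) (by positivity), pow_succ] at hk
  have h3 : (C : ℝ) * ((k : ℝ) + 1) ^ d < 2 ^ k := by
    have : (0 : ℝ) < ((k : ℝ) + 1) ^ d := by positivity
    push_cast at hk
    nlinarith
  exact_mod_cast h3

/-- In a group of polynomial growth the `2 ^ k` products `∏_{j < k} (t ^ j e t⁻ʲ)^{ε j}` cannot all be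
distinct, so some conjugate `t ^ k e t⁻ᵏ` is a quotient of two such products in the previous
conjugates. -/
theorem PG.exists_cword {d : ℕ} (h : PG G d) (e t : G) :
    ∃ k, ∃ A B : Finset ℕ, t ^ k * e * (t ^ k)⁻¹ = (cword e t A k)⁻¹ * cword e t B k := by
  classical
  obtain ⟨C, hC⟩ := h.bound {t, e * t}
  obtain ⟨k, hk⟩ := exists_poly_lt_two_pow C d
  have hcard : #(({t, e * t} : Finset G) ^ k) < #((range k).powerset) := by
    rw [card_powerset, card_range]; exact (hC k).trans_lt hk
  obtain ⟨A, hA, B, hB, hne, hw⟩ := Finset.exists_ne_map_eq_of_card_lt_of_maps_to hcard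
    (f := fun A => word e t A k) (fun A _ => word_mem e t A k)
  obtain ⟨m, A', B', hm⟩ := exists_word_of_collision e t k A B (by
    by_contra! hcon
    apply hne
    rw [mem_powerset] at hA hB
    ext j
    by_cases hj : j < k
    · exact hcon j hj
    · exact ⟨fun h => absurd (mem_range.1 (hA h)) hj, fun h => absurd (mem_range.1 (hB h)) hj⟩) hw
  refine ⟨m, A', B', ?_⟩
  rw [word_eq, word_eq, mul_assoc] at hm
  rw [eq_inv_mul_iff_mul_eq, ← mul_assoc, mul_inv_eq_iff_eq_mul, ← hm]

theorem cword_mem_closure (e t : G) (A : Finset ℕ) (k : ℕ) :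
    cword e t A k ∈ Subgroup.closure ((fun j : ℕ => t ^ j * e * (t ^ j)⁻¹) '' Set.Iio k) := by
  induction k with
  | zero => exact Subgroup.one_mem _
  | succ k ih =>
    rw [cword]
    apply Subgroup.mul_mem
    · exact Subgroup.closure_mono (Set.image_mono (Set.Iio_subset_Iio (by omega))) ih
    · split_ifs
      · exact Subgroup.subset_closure ⟨k, by simp, rfl⟩
      · exact Subgroup.one_mem _

/-- Finitely many of the conjugates `t ^ j e t⁻ʲ`, `j ≥ 0`, generate all of them. -/
theorem PG.exists_fg_conj {d : ℕ} (h : PG G d) (e t : G) :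
    ∃ k : ℕ, ∀ j : ℕ, t ^ j * e * (t ^ j)⁻¹ ∈
      Subgroup.closure ((fun j : ℕ => t ^ j * e * (t ^ j)⁻¹) '' Set.Iio k) := by
  obtain ⟨k, A, B, hk⟩ := h.exists_cword e t
  refine ⟨k, ?_⟩
  set c : ℕ → G := fun j : ℕ => t ^ j * e * (t ^ j)⁻¹ with hc
  set L := Subgroup.closure (c '' Set.Iio k) with hL
  have hck : c k ∈ L := by
    rw [show c k = _ from hk]
    exact L.mul_mem (L.inv_mem (cword_mem_closure e t A k)) (cword_mem_closure e t B k)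
  -- conjugation by `t` shifts the generators by one, and `c k ∈ L` closes the loop
  have hconj : ∀ x ∈ L, t * x * t⁻¹ ∈ L := by
    have : L ≤ L.comap (MulAut.conj t).toMonoidHom := by
      rw [hL, Subgroup.closure_le]
      rintro _ ⟨j, hj, rfl⟩
      have h1 : t * c j * t⁻¹ = c (j + 1) := by
        simp only [hc, pow_succ']; group
      change t * c j * t⁻¹ ∈ L
      rw [h1]
      rcases Nat.lt_or_ge (j + 1) k with hlt | hge
      · exact Subgroup.subset_closure ⟨j + 1, hlt, rfl⟩
      · have : j + 1 = k := le_antisymm hj hge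
        rw [this]; exact hck
    exact fun x hx => this hx
  have h0 : c 0 ∈ L := by
    rcases Nat.eq_zero_or_pos k with h0 | h0
    · rw [h0] at hck; exact hck
    · exact Subgroup.subset_closure ⟨0, h0, rfl⟩
  intro j
  change c j ∈ L
  induction j with
  | zero => exact h0
  | succ j ih =>
    have h1 : t * c j * t⁻¹ = c (j + 1) := by
      simp only [hc, pow_succ']; group
    rw [← h1]; exact hconj _ ih

end Collision

/-- The kernel of a map onto `ℤ` from a finitely generated group of polynomial growth is finitely
generated. -/
theorem PG.ker_fg {G : Type u} [Group G] [Group.FG G] {d : ℕ} (h : PG G d)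
    (f : G →* Multiplicative ℤ) (t : G) (ht : f t = Multiplicative.ofAdd 1) : f.ker.FG := by
  classical
  obtain ⟨S, hS⟩ := (Group.FG.out : (⊤ : Subgroup G).FG)
  -- `S` together with `t` generates; replace each `s ∈ S` by `s * t ^ (-f s)` in the kernel
  let e : G → G := fun s => s * t ^ (-(f s).toAdd)
  have hft : ∀ n : ℤ, f (t ^ n) = Multiplicative.ofAdd n := by
    intro n; rw [map_zpow, ht, ← ofAdd_zsmul]; simp
  have he : ∀ s, e s ∈ f.ker := by
    intro s
    rw [MonoidHom.mem_ker, map_mul, hft, ofAdd_neg]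
    simp
  choose k hk using fun s => h.exists_fg_conj (e s) t
  choose k' hk' using fun s => h.exists_fg_conj (e s) t⁻¹
  let U : Set G := ⋃ s ∈ S, ((fun j : ℕ => t ^ j * e s * (t ^ j)⁻¹) '' Set.Iio (k s) ∪
    (fun j : ℕ => t⁻¹ ^ j * e s * (t⁻¹ ^ j)⁻¹) '' Set.Iio (k' s))
  have hUfin : U.Finite := by
    apply Set.Finite.biUnion S.finite_toSet
    intro s _
    exact ((Set.finite_Iio _).image _).union ((Set.finite_Iio _).image _)
  set L := Subgroup.closure U with hL
  have hmem : ∀ s ∈ S, ∀ n : ℤ, t ^ n * e s * (t ^ n)⁻¹ ∈ L := by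
    intro s hs n
    obtain ⟨m, rfl | rfl⟩ := n.eq_nat_or_neg
    · have := hk s m
      rw [zpow_natCast]
      refine Subgroup.closure_mono ?_ this
      exact Set.subset_union_left.trans (Set.subset_biUnion_of_mem (u := fun s =>
        ((fun j : ℕ => t ^ j * e s * (t ^ j)⁻¹) '' Set.Iio (k s) ∪
        (fun j : ℕ => t⁻¹ ^ j * e s * (t⁻¹ ^ j)⁻¹) '' Set.Iio (k' s))) hs)
    · have := hk' s m
      rw [zpow_neg, zpow_natCast, ← inv_pow]
      refine Subgroup.closure_mono ?_ this
      exact Set.subset_union_right.trans (Set.subset_biUnion_of_mem (u := fun s =>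
        ((fun j : ℕ => t ^ j * e s * (t ^ j)⁻¹) '' Set.Iio (k s) ∪
        (fun j : ℕ => t⁻¹ ^ j * e s * (t⁻¹ ^ j)⁻¹) '' Set.Iio (k' s))) hs)
  have hLker : L ≤ f.ker := by
    rw [hL, Subgroup.closure_le]
    intro x hx
    simp only [U, Set.mem_iUnion] at hx
    obtain ⟨s, -, hx⟩ := hx
    rcases hx with ⟨j, -, rfl⟩ | ⟨j, -, rfl⟩
    · exact (MonoidHom.normal_ker f).conj_mem _ (he s) _
    · exact (MonoidHom.normal_ker f).conj_mem _ (he s) _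
  -- conjugation by powers of `t` preserves `L`
  have hLconj : ∀ n : ℤ, ∀ x ∈ L, t ^ n * x * (t ^ n)⁻¹ ∈ L := by
    intro n
    have : L ≤ L.comap (MulAut.conj (t ^ n)).toMonoidHom := by
      rw [hL, Subgroup.closure_le]
      intro x hx
      change t ^ n * x * (t ^ n)⁻¹ ∈ L
      simp only [U, Set.mem_iUnion] at hx
      obtain ⟨s, hs, hx⟩ := hx
      rcases hx with ⟨j, -, rfl⟩ | ⟨j, -, rfl⟩
      · have := hmem s hs (n + j)
        convert this using 1
        simp only [zpow_add, zpow_natCast]; group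
      · have := hmem s hs (n - j)
        convert this using 1
        simp only [zpow_sub, zpow_natCast]; group
    exact fun x hx => this hx
  have hall : ∀ g : G, ∃ x ∈ L, ∃ n : ℤ, g = x * t ^ n := by
    intro g
    have hg : g ∈ Subgroup.closure (S : Set G) := by rw [hS]; trivial
    induction hg using Subgroup.closure_induction with
    | mem s hs =>
      refine ⟨e s, by simpa using hmem s hs 0, (f s).toAdd, by simp [e]⟩
    | one => exact ⟨1, L.one_mem, 0, by simp⟩
    | mul x y _ _ hx hy =>
      obtain ⟨x, hx, n, rfl⟩ := hx
      obtain ⟨y, hy, m, rfl⟩ := hy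
      refine ⟨x * (t ^ n * y * (t ^ n)⁻¹), L.mul_mem hx (hLconj n y hy), n + m, ?_⟩
      rw [zpow_add]; group
    | inv x _ hx =>
      obtain ⟨x, hx, n, rfl⟩ := hx
      refine ⟨t ^ (-n) * x⁻¹ * (t ^ (-n))⁻¹, hLconj _ _ (L.inv_mem hx), -n, ?_⟩
      group
  have hLeq : L = f.ker := by
    refine le_antisymm hLker fun g hg => ?_
    obtain ⟨x, hx, n, rfl⟩ := hall g
    rw [MonoidHom.mem_ker, map_mul, (MonoidHom.mem_ker).1 (hLker hx), one_mul, hft] at hg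
    have : n = 0 := Multiplicative.ofAdd.injective hg
    rw [this]; simpa using hx
  rw [← hLeq, Subgroup.fg_iff]
  exact ⟨U, rfl, hUfin⟩

end PolyGrowth

/-! ### Automorphisms of finitely generated abelian groups -/

namespace PolyGrowth

open Finset Polynomial

universe u

section

variable {A : Type u} [AddCommGroup A]

/-- A monic integer polynomial all of whose complex roots are nonzero and lie in the closed unit
disc divides some `(X ^ m - 1) ^ r`; this is Kronecker's theorem. -/
theorem exists_dvd_of_roots (χ : ℤ[X]) (hm : χ.Monic)
    (hz : ∀ z ∈ (χ.map (Int.castRingHom ℂ)).roots, z ≠ 0 ∧ ‖z‖ ≤ 1) :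
    ∃ m ≥ 1, ∃ r, χ ∣ (X ^ m - 1) ^ r := by
  set P := χ.map (Int.castRingHom ℂ) with hP
  have hPm : P.Monic := hm.map _
  have hmah : P.mahlerMeasure = 1 := by
    rw [mahlerMeasure_eq_leadingCoeff_mul_prod_roots, hPm.leadingCoeff]
    simp only [norm_one, one_mul]
    apply Multiset.prod_eq_one
    intro x hx
    rw [Multiset.mem_map] at hx
    obtain ⟨z, hz', rfl⟩ := hx
    exact max_eq_left (hz z hz').2
  have hroot : ∀ z ∈ P.roots, ∃ n, 0 < n ∧ z ^ n = 1 := fun z hz' =>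
    pow_eq_one_of_mahlerMeasure_eq_one hmah (hz z hz').1 hz'
  choose! n hn0 hn1 using hroot
  refine ⟨∏ z ∈ P.roots.toFinset, n z, ?_, Multiset.card P.roots, ?_⟩
  · exact Nat.one_le_iff_ne_zero.2 (Finset.prod_ne_zero_iff.2 fun z hz' =>
      (hn0 z (Multiset.mem_toFinset.1 hz')).ne')
  set m := ∏ z ∈ P.roots.toFinset, n z with hmdef
  have hmz : ∀ z ∈ P.roots, z ^ m = 1 := by
    intro z hz'
    obtain ⟨c, hc⟩ := Finset.dvd_prod_of_mem n (Multiset.mem_toFinset.2 hz')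
    rw [hmdef, hc, pow_mul, hn1 z hz', one_pow]
  rw [← Polynomial.map_dvd_map (Int.castRingHom ℂ) Int.cast_injective hm]
  rw [← hP, (IsAlgClosed.splits P).eq_prod_roots_of_monic hPm]
  simp only [Polynomial.map_pow, Polynomial.map_sub, Polynomial.map_X, Polynomial.map_one]
  have key : ∀ s : Multiset ℂ, (∀ z ∈ s, z ^ m = 1) →
      (s.map fun a => X - C a).prod ∣ ((X : ℂ[X]) ^ m - 1) ^ Multiset.card s := by
    intro s
    induction s using Multiset.induction_on with
    | empty => simp
    | cons a s ih =>
      intro hs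
      rw [Multiset.map_cons, Multiset.prod_cons, Multiset.card_cons, pow_succ']
      refine mul_dvd_mul ?_ (ih fun z hz' => hs z (Multiset.mem_cons_of_mem hz'))
      rw [dvd_iff_isRoot]
      simp [hs a (Multiset.mem_cons_self a s)]
  have := key P.roots hmz
  rwa [← (IsAlgClosed.splits P).eq_prod_roots_of_monic hPm] at this ⊢

/-- The relation satisfied by automorphisms coming from conjugation in groups of polynomial
growth: every power of `T` satisfies, at each vector, a monic relation with coefficients in
`{-1, 0, 1}`. -/
def SmallRel (T : Module.End ℤ A) : Prop :=
  ∀ a : A, ∀ p ≥ 1, ∃ k, ∃ η : ℕ → ℤ, (∀ j, |η j| ≤ 1) ∧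
    (T ^ (p * k)) a = ∑ j ∈ range k, η j • (T ^ (p * j)) a

/-- An eigenvalue of the transpose of `T` is nonzero and has modulus at most one. -/
theorem SmallRel.norm_le {T : Module.End ℤ A} (h : SmallRel T) (hT : Function.Surjective T)
    (φ : A →+ ℂ) (z : ℂ) (hφ : ∀ a, φ (T a) = z * φ a) (hne : φ ≠ 0) : z ≠ 0 ∧ ‖z‖ ≤ 1 := by
  obtain ⟨a, ha⟩ : ∃ a, φ a ≠ 0 := by
    by_contra! hc
    exact hne (AddMonoidHom.ext hc)
  refine ⟨?_, ?_⟩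
  · rintro rfl
    obtain ⟨b, rfl⟩ := hT a
    exact ha (by rw [hφ, zero_mul])
  by_contra! hz
  obtain ⟨p, hp⟩ := pow_unbounded_of_one_lt 2 hz
  have hp1 : 1 ≤ p := by
    rcases Nat.eq_zero_or_pos p with rfl | hp'
    · norm_num at hp
    · exact hp'
  have hpow : ∀ n, φ ((T ^ n) a) = z ^ n * φ a := by
    intro n
    induction n with
    | zero => simp
    | succ n ih => rw [pow_succ', Module.End.mul_apply, hφ, ih]; ring
  obtain ⟨k, η, hη, he⟩ := h a p hp1
  have h1 := congrArg φ he
  simp only [map_sum, map_zsmul, hpow, zsmul_eq_mul] at h1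
  have h2 : z ^ (p * k) = ∑ j ∈ range k, (η j : ℂ) * z ^ (p * j) := by
    apply mul_right_cancel₀ ha
    rw [h1, Finset.sum_mul]
    exact Finset.sum_congr rfl fun j _ => by ring
  set x := ‖z‖ ^ p with hx
  have h3 : x ^ k ≤ ∑ j ∈ range k, x ^ j := by
    calc x ^ k = ‖z ^ (p * k)‖ := by rw [norm_pow, pow_mul]
      _ ≤ ∑ j ∈ range k, ‖(η j : ℂ) * z ^ (p * j)‖ := by rw [h2]; exact norm_sum_le _ _
      _ ≤ _ := by
        refine Finset.sum_le_sum fun j _ => ?_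
        rw [norm_mul, norm_pow, pow_mul]
        have : ‖(η j : ℂ)‖ ≤ 1 := by
          rw [Complex.norm_intCast]; exact_mod_cast hη j
        exact mul_le_of_le_one_left (by positivity) this
  have h4 : (∑ j ∈ range k, x ^ j) * (x - 1) = x ^ k - 1 := geom_sum_mul x k
  have h5 : 0 ≤ ∑ j ∈ range k, x ^ j := Finset.sum_nonneg fun j _ => by positivity
  nlinarith

/-- The torsion-free case. -/
theorem SmallRel.unipotent_of_free [Module.Free ℤ A] [Module.Finite ℤ A] {T : Module.End ℤ A}
    (h : SmallRel T) (hT : Function.Surjective T) :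
    ∃ m ≥ 1, ∃ r, (T ^ m - 1) ^ r = 0 := by
  classical
  let b := Module.finBasis ℤ A
  set N := LinearMap.toMatrix b b T with hN
  obtain ⟨m, hm, r, hr⟩ := exists_dvd_of_roots T.charpoly (LinearMap.charpoly_monic T) (by
    intro z hz
    have hz' := (mem_roots'.1 hz).2
    rw [← LinearMap.charpoly_toMatrix T b, ← hN, ← Matrix.charpoly_map, IsRoot.def,
      Matrix.eval_charpoly] at hz'
    obtain ⟨v, hv0, hv⟩ := Matrix.exists_vecMul_eq_zero_iff.2 hz'
    rw [Matrix.vecMul_sub, sub_eq_zero] at hv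
    have hv2 : ∀ j, ∑ i, v i * (N i j : ℂ) = z * v j := by
      intro j
      have := congrFun hv j
      simp [Matrix.vecMul, dotProduct, Matrix.scalar_apply, Matrix.diagonal_apply] at this
      rw [← this, mul_comm]
    let φ : A →+ ℂ :=
      { toFun := fun a => ∑ i, v i * ((b.repr a i : ℤ) : ℂ)
        map_zero' := by simp
        map_add' := fun x y => by simp [mul_add, Finset.sum_add_distrib] }
    refine h.norm_le hT φ z (fun a => ?_) ?_
    · have hr : ∀ i, b.repr (T a) i = ∑ j, N i j * b.repr a j := by
        intro i
        have := congrFun (LinearMap.toMatrix_mulVec_repr b b T a) i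
        rw [← this]; rfl
      show ∑ i, v i * ((b.repr (T a) i : ℤ) : ℂ) = z * ∑ i, v i * ((b.repr a i : ℤ) : ℂ)
      simp only [hr, Int.cast_sum, Int.cast_mul, Finset.mul_sum]
      rw [Finset.sum_comm]
      refine Finset.sum_congr rfl fun j _ => ?_
      rw [← mul_assoc, ← hv2 j, Finset.sum_mul]
      exact Finset.sum_congr rfl fun i _ => by ring
    · intro h0
      apply hv0
      funext i
      have := DFunLike.congr_fun h0 (b i)
      simpa [φ, Finsupp.single_apply] using this)
  refine ⟨m, hm, r, ?_⟩
  obtain ⟨q, hq⟩ := hr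
  have := congrArg (aeval T) hq
  simpa [LinearMap.aeval_self_charpoly] using this

/-- Some power of `T` is unipotent: on the torsion-free quotient this is Kronecker's theorem, and the
finite torsion submodule is fixed pointwise by a further power of `T`. -/
theorem SmallRel.unipotent [Module.Finite ℤ A] {T : Module.End ℤ A}
    (h : SmallRel T) (hT : Function.Bijective T) :
    ∃ m ≥ 1, ∃ r, (T ^ m - 1) ^ r = 0 := by
  let K := Submodule.torsion ℤ A
  have hK : ∀ x, x ∈ K ↔ T x ∈ K := by
    intro x
    simp only [K, Submodule.mem_torsion_iff]
    refine exists_congr fun a => ?_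
    rw [Submonoid.smul_def, Submonoid.smul_def, ← map_smul]
    exact ⟨fun h => by rw [h, map_zero], fun h => hT.1 (by rw [h, map_zero])⟩
  let T' : Module.End ℤ (A ⧸ K) := K.mapQ K T fun x hx => (hK x).1 hx
  have hT' : ∀ n x, (T' ^ n) (K.mkQ x) = K.mkQ ((T ^ n) x) := by
    intro n
    induction n with
    | zero => simp
    | succ n ih =>
      intro x
      rw [pow_succ', pow_succ', Module.End.mul_apply, Module.End.mul_apply, ih]
      rfl
  have h' : SmallRel T' := by
    intro a p hp
    obtain ⟨a, rfl⟩ := K.mkQ_surjective a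
    obtain ⟨k, η, hη, he⟩ := h a p hp
    refine ⟨k, η, hη, ?_⟩
    simp only [hT', he, map_sum, map_zsmul]
  have : Module.IsTorsionFree ℤ (A ⧸ K) := inferInstance
  have : Module.Free ℤ (A ⧸ K) := inferInstance
  obtain ⟨m, hm, r, hr⟩ := h'.unipotent_of_free (by
    intro y
    obtain ⟨y, rfl⟩ := K.mkQ_surjective y
    obtain ⟨x, rfl⟩ := hT.2 y
    exact ⟨K.mkQ x, rfl⟩)
  have : Module.Finite ℤ K := inferInstance
  have hfin : Finite K := Module.finite_of_fg_torsion K (Submodule.torsion_isTorsion)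
  let σ : Equiv.Perm K := Equiv.Perm.subtypePerm (Equiv.ofBijective T hT : Equiv.Perm A)
    (p := fun x => x ∈ K) fun x => (hK x).symm
  have hσ : ∀ n (x : K), ((σ ^ n) x : A) = (T ^ n) x := by
    intro n
    induction n with
    | zero => simp
    | succ n ih =>
      intro x
      rw [pow_succ', pow_succ', Module.End.mul_apply, Equiv.Perm.mul_apply, ← ih]
      rfl
  set c := Nat.card (Equiv.Perm K) with hc
  have hc1 : 1 ≤ c := Nat.card_pos
  have hcK : ∀ x ∈ K, (T ^ (m * c)) x = x := by
    intro x hx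
    rw [← hσ (m * c) ⟨x, hx⟩, mul_comm, pow_mul, hc, pow_card_eq_one', one_pow]
    rfl
  refine ⟨m * c, Nat.mul_pos hm hc1, r + 1, ?_⟩
  have hd1 : ((X : ℤ[X]) ^ m - 1) ^ r ∣ (X ^ (m * c) - 1) ^ r :=
    pow_dvd_pow_of_dvd (by rw [pow_mul]; exact sub_one_dvd_pow_sub_one _ c) r
  have hr' : (T' ^ (m * c) - 1) ^ r = 0 := by
    obtain ⟨q, hq⟩ := hd1
    have := congrArg (aeval T') hq
    simpa [hr] using this
  have hsub : ∀ (n : ℕ) (x : A), ((T' ^ (m * c) - 1) ^ n) (K.mkQ x) = K.mkQ (((T ^ (m * c) - 1) ^ n) x) := by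
    intro n
    induction n with
    | zero => simp
    | succ n ih =>
      intro x
      rw [pow_succ', pow_succ', Module.End.mul_apply, Module.End.mul_apply, ih,
        LinearMap.sub_apply, LinearMap.sub_apply, hT', map_sub]
      rfl
  refine LinearMap.ext fun x => ?_
  have hx : ((T ^ (m * c) - 1) ^ r) x ∈ K := by
    rw [← Submodule.Quotient.mk_eq_zero, ← Submodule.mkQ_apply, ← hsub, hr']
    rfl
  rw [pow_succ', Module.End.mul_apply, LinearMap.sub_apply, hcK _ hx]
  simp

end

end PolyGrowth

/-! ### Extensions of virtually nilpotent groups by `ℤ` -/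

namespace PolyGrowth

open Finset
open scoped commutatorElement

universe u

theorem iterComm_subset {G : Type u} [Group G] {T : Set G} {N : Subgroup G} (h : T ⊆ N) (k : ℕ) :
    iterComm T k ⊆ N := by
  induction k with
  | zero => exact h
  | succ k ih =>
    rintro _ ⟨x, hx, t, ht, rfl⟩
    rw [SetLike.mem_coe, commutatorElement_def]
    exact N.mul_mem (N.mul_mem (N.mul_mem (ih hx) (h ht)) (N.inv_mem (ih hx))) (N.inv_mem (h ht))

/-- Conjugation by `t` on a normal abelian subgroup `Z`, as a `ℤ`-linear map, has a power which
is unipotent.  The conclusion is phrased with iterated commutators. -/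
theorem exists_unipotent {G : Type u} [Group G] {d : ℕ} (h : PG G d) (hN : Noeth G)
    (Z : Subgroup G) [Z.Normal] (hZ : ∀ x ∈ Z, ∀ y ∈ Z, x * y = y * x) (t : G) :
    ∃ m ≥ 1, ∃ r, ∀ m', m ∣ m' → ∀ u : ℕ → G, u 0 ∈ Z →
      (∀ j, u (j + 1) = ⁅u j, t ^ m'⁆) → u r = 1 := by
  classical
  let _ : CommGroup Z := { (inferInstance : Group Z) with
    mul_comm := fun x y => Subtype.ext (hZ x x.2 y y.2) }
  have : Group.FG Z := (Group.fg_iff_subgroup_fg Z).2 (hN Z)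
  have : Module.Finite ℤ (Additive Z) := Module.Finite.iff_addGroup_fg.2 inferInstance
  let T : Module.End ℤ (Additive Z) :=
    (MonoidHom.toAdditive (MulAut.conjNormal t : Z ≃* Z).toMonoidHom).toIntLinearMap
  have hTval : ∀ a : Additive Z, ((T a).toMul : G) = t * a.toMul * t⁻¹ := fun a => rfl
  have hTpow : ∀ (n : ℕ) (a : Additive Z),
      (((T ^ n) a).toMul : G) = t ^ n * a.toMul * (t ^ n)⁻¹ := by
    intro n
    induction n with
    | zero => simp
    | succ n ih =>
      intro a
      rw [pow_succ' T, Module.End.mul_apply, hTval, ih, pow_succ']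
      group
  have hbij : Function.Bijective T := (MulAut.conjNormal t : Z ≃* Z).bijective
  have hsmall : SmallRel T := by
    intro a p _
    have hcw : ∀ A k, cword (a.toMul : G) (t ^ p) A k =
        ((∑ j ∈ range k, (if j ∈ A then (1 : ℤ) else 0) • (T ^ (p * j)) a : Additive Z).toMul
          : G) := by
      intro A k
      induction k with
      | zero => simp [cword]
      | succ k ih =>
        rw [cword, ih, Finset.sum_range_succ, toMul_add, Subgroup.coe_mul]
        split_ifs
        · rw [one_smul, hTpow, pow_mul]
        · simp
    obtain ⟨k, A, B, hk⟩ := h.exists_cword (a.toMul : G) (t ^ p)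
    refine ⟨k, fun j => (if j ∈ B then 1 else 0) - (if j ∈ A then 1 else 0), ?_, ?_⟩
    · intro j
      dsimp only
      split_ifs <;> simp
    · apply Additive.toMul.injective
      apply Subtype.ext
      rw [hTpow, pow_mul, hk, hcw, hcw]
      simp only [sub_smul, Finset.sum_sub_distrib]
      rw [sub_eq_neg_add, toMul_add, toMul_neg]
      rfl
  obtain ⟨m, hm, r, hr⟩ := hsmall.unipotent hbij
  refine ⟨m, hm, r, ?_⟩
  rintro _ ⟨c, rfl⟩ u hu0 hu
  -- `j ↦ u j` is the orbit of `u 0` under `1 - T ^ (m * c)`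
  have hr' : (1 - T ^ (m * c)) ^ r = 0 := by
    have hd1 : ((Polynomial.X : Polynomial ℤ) ^ m - 1) ^ r ∣ (1 - Polynomial.X ^ (m * c)) ^ r := by
      refine pow_dvd_pow_of_dvd ?_ r
      rw [pow_mul, ← neg_sub (_ ^ c), dvd_neg]
      exact sub_one_dvd_pow_sub_one _ c
    obtain ⟨q, hq⟩ := hd1
    have := congrArg (Polynomial.aeval T) hq
    simpa [hr] using this
  have key : ∀ j, u j = ((((1 - T ^ (m * c)) ^ j) (Additive.ofMul ⟨u 0, hu0⟩)).toMul : G) := by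
    intro j
    induction j with
    | zero => simp
    | succ j ih =>
      rw [hu, pow_succ', Module.End.mul_apply, LinearMap.sub_apply, Module.End.one_apply,
        sub_eq_add_neg, toMul_add, toMul_neg, Subgroup.coe_mul, Subgroup.coe_inv, hTpow, ← ih,
        commutatorElement_def]
      group
  rw [key, hr']
  rfl

/-- If `N` is a nilpotent normal subgroup of a polycyclic group of polynomial growth, then `N`
together with a suitable power of a given element `t` generates a nilpotent subgroup. -/
theorem exists_iterComm (n : ℕ) {G : Type u} [Group G] {d : ℕ} (h : PG G d) (hN : Noeth G)
    (N : Subgroup G) [N.Normal] (hn : N.lowerCentralSeries n = ⊥) (t : G) :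
    ∃ m ≥ 1, ∃ k, ∀ m', m ∣ m' → iterComm ((N : Set G) ∪ {t ^ m'}) k ⊆ {1} := by
  induction n generalizing G with
  | zero =>
    rw [Subgroup.lowerCentralSeries_zero] at hn
    subst hn
    refine ⟨1, le_rfl, 1, fun m' _ => ?_⟩
    rintro _ ⟨x, hx, y, hy, rfl⟩
    simp only [iterComm, Subgroup.coe_bot, Set.mem_union, Set.mem_singleton_iff] at hx hy
    rcases hx with rfl | rfl <;> rcases hy with rfl | rfl <;> simp
  | succ n ih =>
    set Z := N.lowerCentralSeries n with hZdef
    have hZN : Z ≤ N := Subgroup.lowerCentralSeries_le_self N n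
    have hcomm : ∀ x ∈ Z, ∀ y ∈ N, x * y = y * x := by
      intro x hx y hy
      rw [← commutatorElement_eq_one_iff_mul_comm]
      have := Subgroup.commutator_mem_commutator hx hy
      rw [hZdef, ← Subgroup.lowerCentralSeries_succ, hn] at this
      exact this
    have hZn : Z.Normal := inferInstance
    let π := QuotientGroup.mk' Z
    have hπ : Function.Surjective π := QuotientGroup.mk'_surjective Z
    have : (N.map π).Normal := Subgroup.Normal.map inferInstance π hπ
    obtain ⟨m1, hm1, k1, h1⟩ := ih (h.of_surjective π hπ) (hN.of_surjective π hπ) (N.map π) (by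
      rw [← Subgroup.map_lowerCentralSeries, ← hZdef, Subgroup.map_eq_bot_iff,
        QuotientGroup.ker_mk']) (π t)
    obtain ⟨m2, hm2, r, h2⟩ := exists_unipotent h hN Z
      (fun x hx y hy => hcomm x hx y (hZN hy)) t
    refine ⟨m1 * m2, Nat.mul_pos hm1 hm2, k1 + r, fun m' hm' => ?_⟩
    set T := (N : Set G) ∪ {t ^ m'} with hT
    have hk1 : iterComm T k1 ⊆ Z := by
      intro x hx
      have : π x ∈ iterComm (π '' T) k1 := by
        rw [iterComm_image]; exact ⟨x, hx, rfl⟩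
      have hT' : π '' T = ((N.map π : Subgroup _) : Set _) ∪ {π t ^ m'} := by
        rw [hT, Set.image_union, Set.image_singleton, map_pow]; rfl
      rw [hT'] at this
      have := h1 m' (Dvd.dvd.trans (Dvd.intro _ rfl) hm') this
      rw [← QuotientGroup.ker_mk' Z]
      exact this
    -- follow an iterated commutator from the stage where it enters `Z`
    have key : ∀ j, ∀ x ∈ iterComm T (k1 + j), x = 1 ∨ ∃ u : ℕ → G, u 0 ∈ Z ∧
        (∀ i, u (i + 1) = ⁅u i, t ^ m'⁆) ∧ u j = x := by
      intro j
      induction j with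
      | zero =>
        intro x hx
        right
        exact ⟨fun i => Nat.rec x (fun _ y => ⁅y, t ^ m'⁆) i, hk1 hx, fun i => rfl, rfl⟩
      | succ j ihj =>
        rintro _ ⟨x, hx, y, hy, rfl⟩
        rcases ihj x hx with rfl | ⟨u, hu0, hu, rfl⟩
        · left; simp
        have huZ : ∀ i, u i ∈ Z := by
          intro i
          induction i with
          | zero => exact hu0
          | succ i ihi =>
            rw [hu, commutatorElement_def, mul_assoc, mul_assoc]
            exact Z.mul_mem ihi (by
              rw [← mul_assoc]; exact hZn.conj_mem _ (Z.inv_mem ihi) _)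
        rcases hy with hy | hy
        · left
          rw [commutatorElement_eq_one_iff_mul_comm]
          exact hcomm _ (huZ j) _ hy
        · right
          rw [Set.mem_singleton_iff] at hy
          exact ⟨u, hu0, hu, by rw [hu, hy]⟩
    intro x hx
    rcases key r x hx with rfl | ⟨u, hu0, hu, rfl⟩
    · rfl
    · exact h2 m' (Dvd.dvd.trans (Dvd.intro_left _ rfl) hm') u hu0 hu

/-- The existence of a nilpotent subgroup of finite index. -/
def VN (G : Type u) [Group G] : Prop := ∃ N : Subgroup G, N.FiniteIndex ∧ Group.IsNilpotent N

theorem VN.of_finiteIndex {G : Type u} [Group G] (H : Subgroup G) [H.FiniteIndex] (h : VN H) :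
    VN G := by
  obtain ⟨N, hN, hn⟩ := h
  refine ⟨N.map H.subtype, ⟨?_⟩, ?_⟩
  · rw [Subgroup.index_map_subtype]
    exact mul_ne_zero hN.index_ne_zero Subgroup.FiniteIndex.index_ne_zero
  · have e := N.equivMapOfInjective H.subtype H.subtype_injective
    exact Group.nilpotent_of_surjective e.toMonoidHom e.surjective

theorem isNilpotent_of_le {G : Type u} [Group G] {H K : Subgroup G} (hle : H ≤ K)
    [Group.IsNilpotent K] : Group.IsNilpotent H := by
  have e := Subgroup.subgroupOfEquivOfLe hle
  exact Group.nilpotent_of_surjective e.toMonoidHom e.surjective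

/-- In a finitely generated group, the intersection of the kernels of all homomorphisms to a given
finite group is a characteristic subgroup of finite index. -/
theorem exists_characteristic {K : Type u} [Group K] [Group.FG K] (h : VN K) :
    ∃ N : Subgroup K, N.Characteristic ∧ N.FiniteIndex ∧ Group.IsNilpotent N := by
  obtain ⟨N0, hN0, hn⟩ := h
  let P := Equiv.Perm (K ⧸ N0)
  have hfin : Finite (K →* P) := by
    obtain ⟨S, hS⟩ := (Group.FG.out : (⊤ : Subgroup K).FG)
    refine Finite.of_injective (fun (φ : K →* P) (s : S) => φ s) fun φ ψ hφψ => ?_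
    apply MonoidHom.eq_of_eqOn_dense hS
    intro s hs
    exact congrFun hφψ ⟨s, hs⟩
  let N : Subgroup K := ⨅ φ : K →* P, φ.ker
  refine ⟨N, ?_, ?_, ?_⟩
  · rw [Subgroup.characteristic_iff_le_comap]
    intro σ x hx
    rw [Subgroup.mem_comap, Subgroup.mem_iInf]
    intro φ
    exact (Subgroup.mem_iInf.1 hx) (φ.comp σ.toMonoidHom)
  · exact Subgroup.finiteIndex_iInf fun φ => Subgroup.finiteIndex_ker φ
  · have : N ≤ N0 := by
      refine (iInf_le _ (MulAction.toPermHom K (K ⧸ N0))).trans ?_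
      rw [← Subgroup.normalCore_eq_ker]
      exact N0.normalCore_le
    exact isNilpotent_of_le this

/-- A group of polynomial growth which is an extension of `ℤ` by a finitely generated virtually
nilpotent group is virtually nilpotent. -/
theorem VN.of_ker {G : Type u} [Group G] {d : ℕ} (h : PG G d) (hN : Noeth G)
    (f : G →* Multiplicative ℤ) (t : G) (ht : f t = Multiplicative.ofAdd 1) (hk : VN f.ker) :
    VN G := by
  have : Group.FG f.ker := (Group.fg_iff_subgroup_fg _).2 (hN _)
  obtain ⟨N1, hchar, hfi, hnil⟩ := exists_characteristic hk
  let N : Subgroup G := N1.map f.ker.subtype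
  have hNn : N.Normal := inferInstance
  have hNnil : Group.IsNilpotent N := by
    have e := N1.equivMapOfInjective f.ker.subtype f.ker.subtype_injective
    exact Group.nilpotent_of_surjective e.toMonoidHom e.surjective
  obtain ⟨n, hn⟩ := Subgroup.isNilpotent_iff_lowerCentralSeries N |>.1 hNnil
  obtain ⟨m, hm, k, hmk⟩ := exists_iterComm n h hN N hn t
  let T : Set G := (N : Set G) ∪ {t ^ m}
  let H : Subgroup G := Subgroup.closure T
  have hHnil : Group.IsNilpotent H := by
    let T' : Set H := (fun x : H => (x : G)) ⁻¹' T
    have hT' : H.subtype '' T' = T := by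
      rw [Subgroup.coe_subtype]
      exact Subtype.image_preimage_coe _ _ |>.trans
        (Set.inter_eq_right.2 Subgroup.subset_closure)
    refine isNilpotent_of_iterComm k T' (Subgroup.closure_closure_coe_preimage) ?_
    intro x hx
    have : H.subtype x ∈ iterComm T k := by
      rw [← hT', iterComm_image]; exact ⟨x, hx, rfl⟩
    exact Subtype.ext (hmk m dvd_rfl this)
  refine ⟨H, ?_, hHnil⟩
  -- the cosets of `H` are represented by the products `t ^ r * x` with `0 ≤ r < m` and `x`
  -- running over representatives of `f.ker` modulo `N`
  have hft : ∀ i : ℤ, f (t ^ i) = Multiplicative.ofAdd i := by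
    intro i; rw [map_zpow, ht, ← ofAdd_zsmul]; simp
  have htm : t ^ m ∈ H := Subgroup.subset_closure (Or.inr rfl)
  have hNH : N ≤ H := fun x hx => Subgroup.subset_closure (Or.inl hx)
  have hsurj : Function.Surjective
      (fun p : Fin m × (f.ker ⧸ N1) => ((t ^ (p.1 : ℕ) * (p.2.out : f.ker) : G) : G ⧸ H)) := by
    intro q
    obtain ⟨g, rfl⟩ := QuotientGroup.mk_surjective q
    set i : ℤ := (f g).toAdd with hi
    have hmz : (0 : ℤ) < m := by exact_mod_cast hm
    have hr0 := Int.emod_nonneg i hmz.ne'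
    have hrm := Int.emod_lt_of_pos i hmz
    obtain ⟨r, hr⟩ := Int.eq_ofNat_of_zero_le hr0
    have hx : (t ^ r)⁻¹ * g * ((t ^ m) ^ (i / m))⁻¹ ∈ f.ker := by
      rw [MonoidHom.mem_ker, map_mul, map_mul, map_inv, map_inv, ← zpow_natCast, hft,
        ← zpow_natCast, ← zpow_mul, hft]
      apply Multiplicative.toAdd.injective
      simp only [toAdd_mul, toAdd_inv, toAdd_ofAdd, toAdd_one, ← hi]
      have := Int.emod_add_mul_ediv i m
      rw [hr] at this
      linarith
    set x : f.ker := ⟨_, hx⟩ with hxdef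
    obtain ⟨y, hy⟩ := QuotientGroup.mk_out_eq_mul N1 x
    refine ⟨(⟨r, by omega⟩, (x : f.ker ⧸ N1)), ?_⟩
    simp only [hy]
    rw [QuotientGroup.eq]
    have hyH : ((y : f.ker) : G) ∈ H := hNH ⟨y, y.2, rfl⟩
    have : (t ^ r * ((x * y : f.ker) : G))⁻¹ * g = ((y : f.ker) : G)⁻¹ * (t ^ m) ^ (i / m) := by
      simp only [Subgroup.coe_mul, hxdef]
      group
    rw [this]
    exact H.mul_mem (H.inv_mem hyH) (H.zpow_mem htm _)
  have : Finite (G ⧸ H) := Finite.of_surjective _ hsurj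
  exact Subgroup.finiteIndex_of_finite_quotient

end PolyGrowth

/-! ### Finite-dimensional orthogonal representations -/

namespace PolyGrowth

open Finset
open scoped Pointwise commutatorElement

universe u v

/-- Abstract properties of the function `x ↦ ‖ρ x - 1‖` for an orthogonal representation `ρ`. -/
structure IsLength {G : Type u} [Group G] (ℓ : G → ℝ) : Prop where
  nonneg : ∀ x, 0 ≤ ℓ x
  one : ℓ 1 = 0
  inv : ∀ x, ℓ x⁻¹ = ℓ x
  mul_le : ∀ x y, ℓ (x * y) ≤ ℓ x + ℓ y
  comm_le : ∀ x y, ℓ ⁅x, y⁆ ≤ 2 * ℓ x * ℓ y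
  pow_ge : ∀ (N : ℕ) x, N * ℓ x ≤ 1 / 2 → ∀ i, 1 ≤ i → i < N → ℓ x / 2 ≤ ℓ (x ^ i)

section

variable {G : Type u} [Group G] {ℓ : G → ℝ}

theorem IsLength.pow_le (hl : IsLength ℓ) (x : G) (i : ℕ) : ℓ (x ^ i) ≤ i * ℓ x := by
  induction i with
  | zero => simp [hl.one]
  | succ i ih =>
    rw [pow_succ]
    push_cast
    linarith [hl.mul_le (x ^ i) x]

/-- Two products with the same first factor and different powers of `z`, or with well separated
first factors, remain separated. -/
theorem IsLength.sep (hl : IsLength ℓ) {N : ℕ} {z : G} (hz : N * ℓ z ≤ 1 / 2) {i j : ℕ}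
    (hi : i < N) (hj : j < N) (hij : i ≠ j) : ℓ z / 2 ≤ ℓ ((z ^ i)⁻¹ * z ^ j) := by
  wlog h : i < j generalizing i j
  · have := this hj hi hij.symm (by omega)
    rwa [← hl.inv ((z ^ j)⁻¹ * z ^ i), mul_inv_rev, inv_inv] at this
  have : (z ^ i)⁻¹ * z ^ j = z ^ (j - i) := by
    rw [inv_mul_eq_iff_eq_mul, ← pow_add]; congr 1; omega
  rw [this]
  exact hl.pow_ge N z hz _ (by omega) (by omega)

/-- A nontrivial iterated commutator of `m + 1` elements of small length gives rise to
`N ^ (m + 1)` distinct elements in a ball of radius `N * 4 ^ (m + 1)`. -/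
theorem IsLength.exists_many [DecidableEq G] (hl : IsLength ℓ) {N : ℕ} (hN : 1 ≤ N)
    (T U : Finset G) (hT : ∀ x ∈ T, 32 * N * ℓ x ≤ 1)
    (hTU : T ⊆ U) (h1 : 1 ∈ U) (hinv : U⁻¹ = U) (m : ℕ) (z : G)
    (hz : z ∈ iterComm (T : Set G) m) (hz0 : ℓ z ≠ 0) :
    z ∈ U ^ (4 ^ m) ∧ 32 * N * ℓ z ≤ 1 ∧ ∃ F : Finset G, F ⊆ U ^ (N * 4 ^ (m + 1)) ∧
      N ^ (m + 1) ≤ #F ∧ ∀ p ∈ F, ∀ q ∈ F, p ≠ q → ℓ z / 4 ≤ ℓ (p⁻¹ * q) := by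
  have hN' : (1 : ℝ) ≤ N := by exact_mod_cast hN
  induction m generalizing z with
  | zero =>
    have hzT : z ∈ T := hz
    have hzpos : 0 < ℓ z := lt_of_le_of_ne (hl.nonneg z) (Ne.symm hz0)
    have hzN : N * ℓ z ≤ 1 / 2 := by nlinarith [hT z hzT]
    refine ⟨by simpa using hTU hzT, hT z hzT, (range N).image (z ^ ·), ?_, ?_, ?_⟩
    · intro x hx
      obtain ⟨i, hi, rfl⟩ := Finset.mem_image.1 hx
      have h2 : z ^ i ∈ U ^ i := Finset.pow_mem_pow (hTU hzT)
      exact Finset.pow_subset_pow_right h1 (by have := Finset.mem_range.1 hi; omega) h2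
    · rw [Finset.card_image_of_injOn]
      · simp
      intro i hi j hj hij
      by_contra hne
      have := hl.sep hzN (Finset.mem_range.1 hi) (Finset.mem_range.1 hj) hne
      rw [show z ^ i = z ^ j from hij, inv_mul_cancel, hl.one] at this
      linarith
    · intro p hp q hq hpq
      obtain ⟨i, hi, rfl⟩ := Finset.mem_image.1 hp
      obtain ⟨j, hj, rfl⟩ := Finset.mem_image.1 hq
      have := hl.sep hzN (Finset.mem_range.1 hi) (Finset.mem_range.1 hj)
        (fun h => hpq (by simp only [h]))
      linarith
  | succ m ih =>
    obtain ⟨x, hx, t, ht, rfl⟩ := hz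
    have hcl := hl.comm_le x t
    have htT := hT t ht
    set z := ⁅x, t⁆ with hzdef
    have hzpos : 0 < ℓ z := lt_of_le_of_ne (hl.nonneg z) (Ne.symm hz0)
    have hx0 : ℓ x ≠ 0 := by
      intro h
      rw [h] at hcl
      linarith
    obtain ⟨hxU, hxs, F, hFU, hFc, hF⟩ := ih x hx hx0
    have hxn := hl.nonneg x
    have htn := hl.nonneg t
    -- the length drops by a factor `16 N` at each step
    have hdrop : 16 * N * ℓ z ≤ ℓ x := by
      have : 16 * N * ℓ z ≤ 16 * N * (2 * ℓ x * ℓ t) :=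
        mul_le_mul_of_nonneg_left hcl (by positivity)
      nlinarith
    have hzx : ℓ z ≤ ℓ x := by nlinarith
    have hzs : 32 * N * ℓ z ≤ 1 :=
      (mul_le_mul_of_nonneg_left hzx (by positivity)).trans hxs
    have hzN : N * ℓ z ≤ 1 / 2 := by nlinarith
    have hzU : z ∈ U ^ (4 ^ (m + 1)) := by
      have h4 : 4 ^ m + 1 + 4 ^ m + 1 ≤ 4 ^ (m + 1) := by
        have := Nat.one_le_pow m 4 (by norm_num)
        rw [pow_succ]; omega
      refine Finset.pow_subset_pow_right h1 h4 ?_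
      rw [hzdef, commutatorElement_def, pow_add, pow_add, pow_add, pow_one]
      refine Finset.mul_mem_mul (Finset.mul_mem_mul (Finset.mul_mem_mul hxU (hTU ht)) ?_) ?_
      · rw [← hinv, inv_pow]; exact Finset.inv_mem_inv hxU
      · rw [← hinv]; exact Finset.inv_mem_inv (hTU ht)
    refine ⟨hzU, hzs, ?_⟩
    have hsep : ∀ p ∈ F, ∀ q ∈ F, ∀ i < N, ∀ j < N, (p, i) ≠ (q, j) →
        ℓ z / 4 ≤ ℓ ((p * z ^ i)⁻¹ * (q * z ^ j)) := by
      intro p hp q hq i hi j hj hne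
      by_cases hpq : p = q
      · subst hpq
        have hij : i ≠ j := fun h => hne (by rw [h])
        have := hl.sep hzN hi hj hij
        rw [show (p * z ^ i)⁻¹ * (p * z ^ j) = (z ^ i)⁻¹ * z ^ j by group]
        linarith
      · have h3 := hF p hp q hq hpq
        have h4 : p⁻¹ * q = z ^ i * ((p * z ^ i)⁻¹ * (q * z ^ j)) * (z ^ j)⁻¹ := by group
        have h5 := hl.mul_le (z ^ i * ((p * z ^ i)⁻¹ * (q * z ^ j))) (z ^ j)⁻¹
        have h6 := hl.mul_le (z ^ i) ((p * z ^ i)⁻¹ * (q * z ^ j))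
        rw [hl.inv] at h5
        rw [h4] at h3
        have h7 := hl.pow_le z i
        have h8 := hl.pow_le z j
        have hiN : (i : ℝ) * ℓ z ≤ N * ℓ z :=
          mul_le_mul_of_nonneg_right (by exact_mod_cast hi.le) hzpos.le
        have hjN : (j : ℝ) * ℓ z ≤ N * ℓ z :=
          mul_le_mul_of_nonneg_right (by exact_mod_cast hj.le) hzpos.le
        nlinarith
    refine ⟨(F ×ˢ range N).image fun p => p.1 * z ^ p.2, ?_, ?_, ?_⟩
    · intro y hy
      obtain ⟨⟨p, i⟩, hpi, rfl⟩ := Finset.mem_image.1 hy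
      rw [Finset.mem_product, Finset.mem_range] at hpi
      have h2 : N * 4 ^ (m + 1) + 4 ^ (m + 1) * i ≤ N * 4 ^ (m + 1 + 1) := by
        have : 4 ^ (m + 1) * i ≤ 4 ^ (m + 1) * N := Nat.mul_le_mul_left _ hpi.2.le
        rw [pow_succ 4 (m + 1)]
        nlinarith
      refine Finset.pow_subset_pow_right h1 h2 ?_
      rw [pow_add, pow_mul U (4 ^ (m + 1)) i]
      exact Finset.mul_mem_mul (hFU hpi.1) (Finset.pow_mem_pow hzU)
    · rw [Finset.card_image_of_injOn]
      · rw [Finset.card_product, Finset.card_range, pow_succ]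
        exact Nat.mul_le_mul_right _ hFc
      rintro ⟨p, i⟩ hp ⟨q, j⟩ hq hpq
      simp only [coe_product, Set.mem_prod, mem_coe, Finset.mem_range] at hp hq
      by_contra hne
      have := hsep p hp.1 q hq.1 i hp.2 j hq.2 hne
      rw [show p * z ^ i = q * z ^ j from hpq, inv_mul_cancel, hl.one] at this
      linarith
    · intro y hy y' hy' hne
      obtain ⟨⟨p, i⟩, hp, rfl⟩ := Finset.mem_image.1 hy
      obtain ⟨⟨q, j⟩, hq, rfl⟩ := Finset.mem_image.1 hy'
      rw [Finset.mem_product, Finset.mem_range] at hp hq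
      exact hsep p hp.1 q hq.1 i hp.2 j hq.2 fun h => hne (by
        rw [Prod.mk.injEq] at h
        simp only [h.1, h.2])

/-- In a group of polynomial growth, long iterated commutators of short elements have length
zero. -/
theorem IsLength.exists_iterComm_zero (hl : IsLength ℓ) {d : ℕ} (h : PG G d) (T : Finset G)
    (hT : ∀ x ∈ T, 32 * (2 * 4 ^ d : ℕ) * ℓ x ≤ 1) :
    ∃ m, ∀ z ∈ iterComm (T : Set G) m, ℓ z = 0 := by
  classical
  by_contra! hcon
  obtain ⟨N, hN⟩ : ∃ N, N = 2 * 4 ^ d := ⟨_, rfl⟩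
  rw [← hN] at hT
  have hN1 : 1 ≤ N := by rw [hN]; have := Nat.one_le_pow d 4 (by norm_num); omega
  let U : Finset G := insert 1 (T ∪ T⁻¹)
  have hU1 : 1 ∈ U := Finset.mem_insert_self _ _
  have hUinv : U⁻¹ = U := by
    ext x
    simp only [U, Finset.mem_inv', Finset.mem_insert, Finset.mem_union, inv_inv, inv_eq_one]
    tauto
  obtain ⟨C, hC⟩ := h.bound U
  have hbd : ∀ m : ℕ, 2 ^ (m + 1) ≤ C * (2 * N) ^ d := by
    intro m
    obtain ⟨z, hz, hz0⟩ := hcon m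
    obtain ⟨-, -, F, hFU, hFc, -⟩ := hl.exists_many hN1 T U hT
      (fun x hx => Finset.mem_insert_of_mem (Finset.mem_union_left _ hx)) hU1 hUinv m z hz hz0
    have h1 : N ^ (m + 1) ≤ C * (N * 4 ^ (m + 1) + 1) ^ d :=
      hFc.trans ((Finset.card_le_card hFU).trans (hC _))
    have h2 : N * 4 ^ (m + 1) + 1 ≤ 2 * N * 4 ^ (m + 1) := by
      have : 1 ≤ N * 4 ^ (m + 1) := Nat.mul_pos hN1 (by positivity)
      rw [mul_assoc 2 N]; omega
    have h3 : N ^ (m + 1) ≤ C * (2 * N) ^ d * (4 ^ d) ^ (m + 1) := by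
      refine h1.trans ?_
      rw [mul_assoc, ← pow_mul 4 d, mul_comm d, pow_mul, ← mul_pow]
      exact Nat.mul_le_mul_left _ (Nat.pow_le_pow_left h2 d)
    rw [show N ^ (m + 1) = 2 ^ (m + 1) * (4 ^ d) ^ (m + 1) by rw [hN, mul_pow]] at h3
    exact Nat.le_of_mul_le_mul_right h3 (by positivity)
  have := hbd (C * (2 * N) ^ d)
  have h2 := @Nat.lt_two_pow_self (C * (2 * N) ^ d + 1)
  omega

end

section

variable {E : Type v} [NormedAddCommGroup E] [NormedSpace ℝ E] {G : Type u} [Group G]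

/-- The distance of `ρ x` to the identity in operator norm. -/
noncomputable def repLen (ρ : G →* (E ≃ₗᵢ[ℝ] E)) (x : G) : ℝ :=
  ‖((ρ x).toContinuousLinearEquiv : E →L[ℝ] E) - 1‖

/-- The representation as a homomorphism to the algebra of operators. -/
noncomputable def repHom (ρ : G →* (E ≃ₗᵢ[ℝ] E)) : G →* (E →L[ℝ] E) where
  toFun x := ((ρ x).toContinuousLinearEquiv : E →L[ℝ] E)
  map_one' := by ext; simp
  map_mul' x y := by ext; simp

theorem repHom_norm_le (ρ : G →* (E ≃ₗᵢ[ℝ] E)) (x : G) : ‖repHom ρ x‖ ≤ 1 :=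
  ContinuousLinearMap.opNorm_le_bound _ zero_le_one fun v => by
    rw [one_mul]; exact ((ρ x).norm_map v).le

theorem repLen_eq (ρ : G →* (E ≃ₗᵢ[ℝ] E)) (x : G) : repLen ρ x = ‖repHom ρ x - 1‖ := rfl

theorem norm_repHom_mul (ρ : G →* (E ≃ₗᵢ[ℝ] E)) (x : G) (a : E →L[ℝ] E) :
    ‖repHom ρ x * a‖ ≤ ‖a‖ :=
  (norm_mul_le _ _).trans (mul_le_of_le_one_left (norm_nonneg _) (repHom_norm_le ρ x))

theorem norm_mul_repHom (ρ : G →* (E ≃ₗᵢ[ℝ] E)) (x : G) (a : E →L[ℝ] E) :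
    ‖a * repHom ρ x‖ ≤ ‖a‖ :=
  (norm_mul_le _ _).trans (mul_le_of_le_one_right (norm_nonneg _) (repHom_norm_le ρ x))

theorem repHom_mul_inv (ρ : G →* (E ≃ₗᵢ[ℝ] E)) (x : G) : repHom ρ x * repHom ρ x⁻¹ = 1 := by
  rw [← map_mul, mul_inv_cancel, map_one]

theorem repLen_inv_mul_le (ρ : G →* (E ≃ₗᵢ[ℝ] E)) (x y : G) :
    repLen ρ (x⁻¹ * y) ≤ ‖repHom ρ y - repHom ρ x‖ := by
  have : repHom ρ (x⁻¹ * y) - 1 = repHom ρ x⁻¹ * (repHom ρ y - repHom ρ x) := by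
    rw [map_mul, mul_sub, ← map_mul _ _ x, inv_mul_cancel, map_one]
  rw [repLen_eq, this]
  exact norm_repHom_mul ρ _ _

theorem repLen_isLength (ρ : G →* (E ≃ₗᵢ[ℝ] E)) : IsLength (repLen ρ) where
  nonneg x := norm_nonneg _
  one := by rw [repLen_eq, map_one, sub_self, norm_zero]
  inv := by
    have h : ∀ x, repLen ρ x⁻¹ ≤ repLen ρ x := by
      intro x
      have := repLen_inv_mul_le ρ x 1
      rw [mul_one, map_one] at this
      rwa [repLen_eq ρ x, norm_sub_rev]
    intro x
    refine le_antisymm (h x) ?_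
    simpa using h x⁻¹
  mul_le x y := by
    have : repHom ρ (x * y) - 1 = repHom ρ x * (repHom ρ y - 1) + (repHom ρ x - 1) := by
      rw [map_mul]; noncomm_ring
    rw [repLen_eq, this, add_comm (repLen ρ x)]
    exact (norm_add_le _ _).trans (add_le_add (norm_repHom_mul ρ _ _) le_rfl)
  comm_le x y := by
    set a := repHom ρ x - 1 with ha
    set b := repHom ρ y - 1 with hb
    have : repHom ρ ⁅x, y⁆ - 1 = (a * b - b * a) * repHom ρ x⁻¹ * repHom ρ y⁻¹ := by
      have h1 : a * b - b * a = repHom ρ x * repHom ρ y - repHom ρ y * repHom ρ x := by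
        rw [ha, hb]; noncomm_ring
      rw [h1, commutatorElement_def, map_mul, map_mul, map_mul, sub_mul, sub_mul,
        mul_assoc (repHom ρ y), repHom_mul_inv, mul_one, repHom_mul_inv]
    rw [repLen_eq, this]
    refine (norm_mul_repHom ρ _ _).trans ((norm_mul_repHom ρ _ _).trans ?_)
    refine (norm_sub_le _ _).trans ?_
    have h1 := norm_mul_le a b
    have h2 := norm_mul_le b a
    rw [repLen_eq, repLen_eq, ← ha, ← hb]
    linarith
  pow_ge N x hx i hi hiN := by
    set a := repHom ρ x with ha
    have hpow : ∀ j : ℕ, ‖a ^ j - 1‖ ≤ j * ‖a - 1‖ := by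
      intro j
      induction j with
      | zero => simp
      | succ j ih =>
        have : a ^ (j + 1) - 1 = (a ^ j - 1) * a + (a - 1) := by rw [pow_succ]; noncomm_ring
        rw [this]
        push_cast
        have h1 := norm_add_le ((a ^ j - 1) * a) (a - 1)
        have h2 := norm_mul_repHom ρ x (a ^ j - 1)
        rw [← ha] at h2
        linarith
    -- `a ^ j - 1 - j (a - 1)` is of second order
    have hdiff : ∀ j : ℕ, ‖a ^ j - 1 - j • (a - 1)‖ ≤ j * (j * ‖a - 1‖) * ‖a - 1‖ := by
      intro j
      induction j with
      | zero => simp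
      | succ j ih =>
        have : a ^ (j + 1) - 1 - (j + 1) • (a - 1) =
            (a ^ j - 1 - j • (a - 1)) + (a ^ j - 1) * (a - 1) := by
          rw [pow_succ, succ_nsmul]; noncomm_ring
        rw [this]
        have h1 := norm_add_le (a ^ j - 1 - j • (a - 1)) ((a ^ j - 1) * (a - 1))
        have h2 := norm_mul_le (a ^ j - 1) (a - 1)
        have h3 := mul_le_mul_of_nonneg_right (hpow j) (norm_nonneg (a - 1))
        push_cast
        have h4 : 0 ≤ ‖a - 1‖ := norm_nonneg _
        have h5 : 0 ≤ (j : ℝ) * (‖a - 1‖ * ‖a - 1‖) := by positivity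
        have h6 : 0 ≤ ‖a - 1‖ * ‖a - 1‖ := by positivity
        nlinarith
    have h0 : 0 ≤ ‖a - 1‖ := norm_nonneg _
    rw [repLen_eq, repLen_eq, map_pow, ← ha]
    rw [repLen_eq, ← ha] at hx
    have h1 : ‖i • (a - 1)‖ = i * ‖a - 1‖ := by
      rw [← Nat.cast_smul_eq_nsmul ℝ, norm_smul, Real.norm_natCast]
    have h2 : ‖i • (a - 1)‖ ≤ ‖a ^ i - 1‖ + ‖a ^ i - 1 - i • (a - 1)‖ := by
      have := norm_sub_le (a ^ i - 1) (a ^ i - 1 - i • (a - 1))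
      rwa [sub_sub_cancel] at this
    have h3 : (i : ℝ) * ‖a - 1‖ ≤ 1 / 2 :=
      (mul_le_mul_of_nonneg_right (by exact_mod_cast hiN.le) h0).trans hx
    have hi' : (1 : ℝ) ≤ i := by exact_mod_cast hi
    have h4 := hdiff i
    have h5 : (i : ℝ) * (i * ‖a - 1‖) * ‖a - 1‖ ≤ 1 / 2 * (i * ‖a - 1‖) := by
      have := mul_le_mul_of_nonneg_right h3 (show (0 : ℝ) ≤ i * ‖a - 1‖ by positivity)
      linarith
    nlinarith

theorem repLen_eq_zero {ρ : G →* (E ≃ₗᵢ[ℝ] E)} {x : G} (h : repLen ρ x = 0) : ρ x = 1 := by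
  rw [repLen_eq, norm_eq_zero, sub_eq_zero] at h
  ext v
  exact DFunLike.congr_fun h v

theorem exists_finset_closure {V : Set G} (h : (Subgroup.closure V).FG) :
    ∃ T : Finset G, (T : Set G) ⊆ V ∧ Subgroup.closure (T : Set G) = Subgroup.closure V := by
  classical
  obtain ⟨S, hS⟩ := h
  have key : ∀ x ∈ Subgroup.closure V, ∃ T : Finset G, (T : Set G) ⊆ V ∧
      x ∈ Subgroup.closure (T : Set G) := by
    intro x hx
    induction hx using Subgroup.closure_induction with
    | mem x hx => exact ⟨{x}, by simpa using hx, Subgroup.subset_closure (by simp)⟩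
    | one => exact ⟨∅, by simp, Subgroup.one_mem _⟩
    | mul x y _ _ hx hy =>
      obtain ⟨T1, h1, h1'⟩ := hx
      obtain ⟨T2, h2, h2'⟩ := hy
      refine ⟨T1 ∪ T2, by simp [h1, h2], Subgroup.mul_mem _ ?_ ?_⟩
      · exact Subgroup.closure_mono (by simp) h1'
      · exact Subgroup.closure_mono (by simp) h2'
    | inv x _ hx =>
      obtain ⟨T1, h1, h1'⟩ := hx
      exact ⟨T1, h1, Subgroup.inv_mem _ h1'⟩
  have hSV : ∀ s ∈ S, s ∈ Subgroup.closure V := fun s hs => hS ▸ Subgroup.subset_closure hs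
  choose! T hT hT' using key
  refine ⟨S.biUnion T, ?_, le_antisymm (Subgroup.closure_mono ?_) ?_⟩
  · simpa using fun s hs => hT s (hSV s hs)
  · simpa using fun s hs => hT s (hSV s hs)
  · rw [← hS, Subgroup.closure_le]
    intro s hs
    refine Subgroup.closure_mono ?_ (hT' s (hSV s hs))
    intro x hx
    simp only [coe_biUnion, Set.mem_iUnion, mem_coe]
    exact ⟨s, hs, hx⟩

theorem repLen_closure_finiteIndex [FiniteDimensional ℝ E] (ρ : G →* (E ≃ₗᵢ[ℝ] E)) {ε : ℝ}
    (hε : 0 < ε) : (Subgroup.closure {x : G | repLen ρ x < ε}).FiniteIndex := by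
  set H := Subgroup.closure {x : G | repLen ρ x < ε} with hH
  have htb : TotallyBounded (Set.range (repHom ρ)) := by
    refine (isCompact_closedBall (0 : E →L[ℝ] E) 1).totallyBounded.subset ?_
    rintro _ ⟨x, rfl⟩
    simpa using repHom_norm_le ρ x
  obtain ⟨t, htf, ht⟩ := Metric.totallyBounded_iff.1 htb (ε / 2) (half_pos hε)
  have hex : ∀ x : G, ∃ y ∈ t, dist (repHom ρ x) y < ε / 2 := by
    intro x
    have := ht ⟨x, rfl⟩
    simpa using this
  choose c hc hcd using hex
  have : Finite t := htf
  have hfin : Finite (G ⧸ H) := by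
    refine Finite.of_injective (fun q : G ⧸ H => (⟨c q.out, hc _⟩ : t)) ?_
    intro q q' hqq
    have hcc : c q.out = c q'.out := congrArg Subtype.val hqq
    rw [← q.out_eq', ← q'.out_eq']
    refine QuotientGroup.eq.2 (Subgroup.subset_closure ?_)
    refine (repLen_inv_mul_le ρ _ _).trans_lt ?_
    rw [← dist_eq_norm]
    have h1 := hcd q.out
    have h2 := hcd q'.out
    rw [hcc] at h1
    have := dist_triangle_right (repHom ρ q'.out) (repHom ρ q.out) (c q'.out)
    linarith
  exact Subgroup.finiteIndex_of_finite_quotient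

/-- A group of polynomial growth with an infinite finite-dimensional orthogonal representation is
virtually indicable: its image contains a nilpotent subgroup of finite index. -/
theorem VZ.of_rep [FiniteDimensional ℝ E] [Group.FG G] {d : ℕ} (h : PG G d)
    (ρ : G →* (E ≃ₗᵢ[ℝ] E)) (hinf : Infinite ρ.range) : VZ G := by
  set ε : ℝ := 1 / (32 * (2 * 4 ^ d : ℕ)) with hεdef
  have hε : 0 < ε := by positivity
  set V := {x : G | repLen ρ x < ε} with hV
  set H := Subgroup.closure V with hH
  have hfi : H.FiniteIndex := repLen_closure_finiteIndex ρ hε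
  have hHFG : Group.FG H := inferInstance
  obtain ⟨T, hTV, hTH⟩ := exists_finset_closure ((Group.fg_iff_subgroup_fg H).1 hHFG)
  obtain ⟨m, hm⟩ := (repLen_isLength ρ).exists_iterComm_zero h T (by
    intro x hx
    have : repLen ρ x < ε := hTV hx
    rw [hεdef, lt_div_iff₀ (by positivity)] at this
    linarith)
  let ψ : H →* (E ≃ₗᵢ[ℝ] E) := ρ.comp H.subtype
  let T' : Set H := (fun x : H => (x : G)) ⁻¹' T
  have hTsub : (T : Set G) ⊆ H := hTV.trans Subgroup.subset_closure
  have hT' : H.subtype '' T' = T := by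
    rw [Subgroup.coe_subtype]
    exact (Subtype.image_preimage_coe _ _).trans (Set.inter_eq_right.2 hTsub)
  have hT'top : Subgroup.closure T' = ⊤ := by
    apply Subgroup.map_injective H.subtype_injective
    rw [MonoidHom.map_closure, hT', hTH, ← MonoidHom.range_eq_map, Subgroup.range_subtype]
  have hnil : Group.IsNilpotent ψ.range := by
    refine isNilpotent_of_iterComm m (ψ.rangeRestrict '' T') ?_ ?_
    · rw [← MonoidHom.map_closure, hT'top, ← MonoidHom.range_eq_map, MonoidHom.range_eq_top]
      exact ψ.rangeRestrict_surjective
    · rw [iterComm_image]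
      rintro _ ⟨x, hx, rfl⟩
      have hx' : H.subtype x ∈ iterComm (T : Set G) m := by
        rw [← hT', iterComm_image]; exact ⟨x, hx, rfl⟩
      exact Subtype.ext (repLen_eq_zero (hm _ hx'))
  have hrinf : Infinite ψ.range := by
    by_contra hfin
    rw [not_infinite_iff_finite] at hfin
    have hmap : ψ.range = H.map ρ := by
      rw [MonoidHom.range_comp, Subgroup.range_subtype]
    have h1 : (ψ.range.subgroupOf ρ.range).FiniteIndex := by
      have : ψ.range.subgroupOf ρ.range = H.map ρ.rangeRestrict := by
        rw [hmap]
        ext ⟨y, hy⟩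
        simp only [Subgroup.mem_subgroupOf, Subgroup.mem_map]
        constructor
        · rintro ⟨x, hx, hxy⟩; exact ⟨x, hx, Subtype.ext hxy⟩
        · rintro ⟨x, hx, hxy⟩; exact ⟨x, hx, congrArg Subtype.val hxy⟩
      rw [this]
      constructor
      exact ne_zero_of_dvd_ne_zero hfi.index_ne_zero
        (Subgroup.index_map_dvd H ρ.rangeRestrict_surjective)
    have h2 : Finite (ψ.range.subgroupOf ρ.range) :=
      Finite.of_injective (fun x => (⟨x.1.1, x.2⟩ : ψ.range)) fun x y hxy => by
        have := congrArg Subtype.val hxy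
        exact Subtype.ext (Subtype.ext this)
    have h3 : Finite ρ.range := by
      have h4 := Subgroup.card_mul_index (ψ.range.subgroupOf ρ.range)
      apply Nat.finite_of_card_ne_zero
      rw [← h4]
      exact mul_ne_zero Nat.card_pos.ne' h1.index_ne_zero
    exact not_finite ρ.range
  have hRFG : Group.FG ψ.range := Group.fg_of_surjective ψ.rangeRestrict_surjective
  exact VZ.of_subgroup H (VZ.of_surjective ψ.rangeRestrict ψ.rangeRestrict_surjective
    VZ.of_solvable)

end

end PolyGrowth

/-! ### Entropy of the random walk -/

namespace PolyGrowth

open Finset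
open scoped Pointwise

universe u

/-- A symmetric probability distribution `w` with support the finite symmetric set `S`, giving mass
at least `1 / 2` to the identity. -/
structure IsWeight {G : Type u} [Group G] (S : Finset G) (w : G → ℝ) : Prop where
  one_mem : 1 ∈ S
  inv_mem : ∀ s ∈ S, s⁻¹ ∈ S
  pos : ∀ s ∈ S, 0 < w s
  sum_eq : ∑ s ∈ S, w s = 1
  symm : ∀ s, w s⁻¹ = w s
  half : 1 / 2 ≤ w 1

theorem exists_isWeight {G : Type u} [Group G] (S : Finset G) (h1 : 1 ∈ S)
    (hinv : ∀ s ∈ S, s⁻¹ ∈ S) : ∃ w : G → ℝ, IsWeight S w := by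
  classical
  have hc : (0 : ℝ) < #S := by exact_mod_cast Finset.card_pos.2 ⟨1, h1⟩
  refine ⟨fun s => (if s = 1 then 1 / 2 else 0) + 1 / (2 * #S), h1, hinv, ?_, ?_, ?_, ?_⟩
  · intro s _
    have : (0 : ℝ) < 1 / (2 * #S) := by positivity
    split_ifs <;> linarith
  · rw [Finset.sum_add_distrib, Finset.sum_ite_eq' S 1, if_pos h1, Finset.sum_const, nsmul_eq_mul]
    field_simp
    norm_num
  · intro s
    simp
  · have : (0 : ℝ) < 1 / (2 * #S) := by positivity
    simp

/-- The expectations of `F` and its translate are close when the Hellinger distance is small. -/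
theorem sq_diff_le {G : Type u} (p q F : G → ℝ) (B : Finset G) (hp : ∀ x, 0 ≤ p x) (hq : ∀ x, 0 ≤ q x) :
    (∑ x ∈ B, p x * F x - ∑ x ∈ B, q x * F x) ^ 2 ≤ (∑ x ∈ B, (√(p x) - √(q x)) ^ 2) *
      (2 * (∑ x ∈ B, p x * F x ^ 2 + ∑ x ∈ B, q x * F x ^ 2)) := by
  have h1 : ∑ x ∈ B, p x * F x - ∑ x ∈ B, q x * F x =
      ∑ x ∈ B, (√(p x) - √(q x)) * ((√(p x) + √(q x)) * F x) := by
    rw [← Finset.sum_sub_distrib]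
    refine Finset.sum_congr rfl fun x _ => ?_
    have h2 := Real.mul_self_sqrt (hp x)
    have h3 := Real.mul_self_sqrt (hq x)
    linear_combination (-F x) * h2 + F x * h3
  rw [h1]
  refine (Finset.sum_mul_sq_le_sq_mul_sq _ _ _).trans ?_
  refine mul_le_mul_of_nonneg_left ?_ (Finset.sum_nonneg fun x _ => sq_nonneg _)
  rw [← Finset.sum_add_distrib, Finset.mul_sum]
  refine Finset.sum_le_sum fun x _ => ?_
  have h2 := Real.sq_sqrt (hp x)
  have h3 := Real.sq_sqrt (hq x)
  have h4 : (√(p x) + √(q x)) ^ 2 ≤ 2 * (p x + q x) := by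
    nlinarith [sq_nonneg (√(p x) - √(q x))]
  rw [mul_pow]
  nlinarith [mul_le_mul_of_nonneg_right h4 (sq_nonneg (F x))]

section

variable {G : Type u} [Group G] (S : Finset G) (w : G → ℝ)

/-- The `n`-step distribution of the random walk with increments distributed according to `w`. -/
noncomputable def mu [DecidableEq G] : ℕ → G → ℝ
  | 0 => fun x => if x = 1 then 1 else 0
  | n + 1 => fun x => ∑ s ∈ S, w s * mu n (s⁻¹ * x)

/-- The expectation of `F` with respect to the `n`-step distribution. -/
noncomputable def Ex : ℕ → (G → ℝ) → ℝ
  | 0 => fun F => F 1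
  | n + 1 => fun F => ∑ s ∈ S, w s * Ex n fun x => F (s * x)

theorem Ex_add (n : ℕ) (F F' : G → ℝ) :
    Ex S w n (fun x => F x + F' x) = Ex S w n F + Ex S w n F' := by
  induction n generalizing F F' with
  | zero => rfl
  | succ n ih =>
    simp only [Ex]
    rw [← Finset.sum_add_distrib]
    exact Finset.sum_congr rfl fun s _ => by rw [ih, mul_add]

theorem Ex_mul (n : ℕ) (c : ℝ) (F : G → ℝ) : Ex S w n (fun x => c * F x) = c * Ex S w n F := by
  induction n generalizing F with
  | zero => rfl
  | succ n ih =>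
    simp only [Ex]
    rw [Finset.mul_sum]
    exact Finset.sum_congr rfl fun s _ => by rw [ih]; ring

theorem Ex_sub (n : ℕ) (F F' : G → ℝ) :
    Ex S w n (fun x => F x - F' x) = Ex S w n F - Ex S w n F' := by
  have := Ex_add S w n (fun x => F x - F' x) F'
  simp only [sub_add_cancel] at this
  linarith

variable {S w}

theorem Ex_const (hw : IsWeight S w) (n : ℕ) (c : ℝ) : Ex S w n (fun _ => c) = c := by
  induction n with
  | zero => rfl
  | succ n ih => simp only [Ex, ih]; rw [← Finset.sum_mul, hw.sum_eq, one_mul]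

theorem Ex_mono (hw : IsWeight S w) (n : ℕ) {F F' : G → ℝ} (h : ∀ x, F x ≤ F' x) :
    Ex S w n F ≤ Ex S w n F' := by
  induction n generalizing F F' with
  | zero => exact h 1
  | succ n ih =>
    exact Finset.sum_le_sum fun s hs =>
      mul_le_mul_of_nonneg_left (ih fun x => h _) (hw.pos s hs).le

theorem Ex_nonneg (hw : IsWeight S w) (n : ℕ) {F : G → ℝ} (h : ∀ x, 0 ≤ F x) :
    0 ≤ Ex S w n F := by
  simpa [Ex_const hw] using Ex_mono hw n h

variable [DecidableEq G]

theorem mu_nonneg (hw : IsWeight S w) (n : ℕ) (x : G) : 0 ≤ mu S w n x := by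
  induction n generalizing x with
  | zero => simp only [mu]; split_ifs <;> norm_num
  | succ n ih => exact Finset.sum_nonneg fun s hs => mul_nonneg (hw.pos s hs).le (ih _)

theorem mu_eq_zero (n : ℕ) (x : G) (hx : x ∉ S ^ n) : mu S w n x = 0 := by
  induction n generalizing x with
  | zero =>
    simp only [mu]
    rw [if_neg]
    simpa using hx
  | succ n ih =>
    refine Finset.sum_eq_zero fun s hs => ?_
    rw [ih, mul_zero]
    intro h
    apply hx
    rw [pow_succ']
    have := Finset.mul_mem_mul hs h
    simpa using this

theorem le_mu_succ (hw : IsWeight S w) (n : ℕ) (s : G) (hs : s ∈ S) (x : G) :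
    w s * mu S w n (s⁻¹ * x) ≤ mu S w (n + 1) x :=
  Finset.single_le_sum (f := fun s => w s * mu S w n (s⁻¹ * x))
    (fun t ht => mul_nonneg (hw.pos t ht).le (mu_nonneg hw n _)) hs

theorem sum_mu_mul (n : ℕ) (F : G → ℝ) (B : Finset G) (hB : ∀ x ∉ B, mu S w n x = 0) :
    ∑ x ∈ B, mu S w n x * F x = ∑ x ∈ S ^ n, mu S w n x * F x := by
  trans ∑ x ∈ B ∪ S ^ n, mu S w n x * F x
  · refine Finset.sum_subset Finset.subset_union_left fun x _ hx => ?_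
    rw [hB x hx, zero_mul]
  · symm
    refine Finset.sum_subset Finset.subset_union_right fun x _ hx => ?_
    rw [mu_eq_zero n x hx, zero_mul]

theorem sum_mu_translate (n : ℕ) (s : G) (F : G → ℝ) (B : Finset G)
    (hB : ∀ x ∉ B, mu S w n (s⁻¹ * x) = 0) :
    ∑ x ∈ B, mu S w n (s⁻¹ * x) * F x = ∑ x ∈ S ^ n, mu S w n x * F (s * x) := by
  rw [← sum_mu_mul n (fun x => F (s * x)) (B.image (s⁻¹ * ·))]
  · rw [Finset.sum_image fun x _ y _ h => mul_left_cancel h]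
    simp
  · intro x hx
    have := hB (s * x) (fun h => hx (Finset.mem_image.2 ⟨s * x, h, by simp⟩))
    simpa using this

theorem sum_mu (n : ℕ) (F : G → ℝ) : ∑ x ∈ S ^ n, mu S w n x * F x = Ex S w n F := by
  induction n generalizing F with
  | zero => simp [mu, Ex]
  | succ n ih =>
    simp only [Ex, mu, Finset.sum_mul]
    rw [Finset.sum_comm]
    refine Finset.sum_congr rfl fun s hs => ?_
    rw [← ih, ← sum_mu_translate n s F (S ^ (n + 1)), Finset.mul_sum]
    · exact Finset.sum_congr rfl fun x _ => by ring
    · intro x hx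
      apply mu_eq_zero
      intro h
      apply hx
      rw [pow_succ']
      simpa using Finset.mul_mem_mul hs h

theorem sum_mu_B (n : ℕ) (F : G → ℝ) (B : Finset G) (hB : ∀ x ∉ B, mu S w n x = 0) :
    ∑ x ∈ B, mu S w n x * F x = Ex S w n F := by
  rw [sum_mu_mul n F B hB, sum_mu]

theorem sum_mu_translate_B (n : ℕ) (s : G) (F : G → ℝ) (B : Finset G)
    (hB : ∀ x ∉ B, mu S w n (s⁻¹ * x) = 0) :
    ∑ x ∈ B, mu S w n (s⁻¹ * x) * F x = Ex S w n (fun x => F (s * x)) := by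
  rw [sum_mu_translate n s F B hB, sum_mu]

variable (S w) in
/-- The Shannon entropy of the `n`-step distribution. -/
noncomputable def ent (n : ℕ) : ℝ := - Ex S w n fun x => Real.log (mu S w n x)

theorem ent_le (hw : IsWeight S w) (n : ℕ) : ent S w n ≤ Real.log #(S ^ n) := by
  have hne : (0 : ℝ) < #(S ^ n) := by
    exact_mod_cast Finset.card_pos.2 ⟨1, Finset.one_mem_pow hw.one_mem⟩
  obtain ⟨N, hN⟩ : ∃ N : ℝ, N = #(S ^ n) := ⟨_, rfl⟩
  rw [← hN] at hne ⊢
  have hpt : ∀ x, - (mu S w n x * (Real.log (mu S w n x) + Real.log N)) ≤ 1 / N - mu S w n x := by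
    intro x
    rcases (mu_nonneg hw n x).eq_or_lt with h | h
    · rw [← h]; simp; positivity
    · set p := mu S w n x
      have h1 := Real.log_le_sub_one_of_pos (show 0 < 1 / (p * N) by positivity)
      rw [Real.log_div one_ne_zero (by positivity), Real.log_one, Real.log_mul h.ne' hne.ne'] at h1
      have h2 := mul_le_mul_of_nonneg_left h1 h.le
      have h3 : p * (1 / (p * N) - 1) = 1 / N - p := by field_simp
      rw [h3] at h2
      linarith
  have hsum := Finset.sum_le_sum fun x (_ : x ∈ S ^ n) => hpt x
  rw [Finset.sum_neg_distrib, sum_mu n fun x => Real.log (mu S w n x) + Real.log N,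
    Ex_add, Ex_const hw, Finset.sum_sub_distrib, Finset.sum_const, nsmul_eq_mul, ← hN] at hsum
  have h1 : ∑ x ∈ S ^ n, mu S w n x = 1 := by
    have := sum_mu (S := S) (w := w) n fun _ => 1
    rw [Ex_const hw] at this
    simpa using this
  rw [h1, mul_one_div_cancel hne.ne'] at hsum
  rw [ent]
  linarith

/-- The Kullback–Leibler divergence dominates the squared Hellinger distance (pointwise form). -/
theorem hellinger_pt {p q : ℝ} (hp : 0 ≤ p) (hq : 0 ≤ q) (h : 0 < p → 0 < q) :
    (√p - √q) ^ 2 + (p - q) ≤ p * (Real.log p - Real.log q) := by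
  rcases hp.eq_or_lt with rfl | hp
  · simp [Real.sq_sqrt hq]
  have hq' := h hp
  have h1 := Real.log_le_sub_one_of_pos (show 0 < √q / √p by positivity)
  rw [Real.log_div (by positivity) (by positivity), Real.log_sqrt hq, Real.log_sqrt hp.le] at h1
  have h2 := mul_le_mul_of_nonneg_left h1 hp.le
  have h3 : p * (√q / √p - 1) = √p * √q - p := by
    have : √p ≠ 0 := by positivity
    field_simp
    linear_combination (-√q) * Real.mul_self_sqrt hp.le
  rw [h3] at h2
  nlinarith [Real.sq_sqrt hp.le, Real.sq_sqrt hq]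

/-- The increment of the entropy controls the Hellinger distance between translates. -/
theorem ent_increment (hw : IsWeight S w) (n : ℕ) :
    ∑ s ∈ S, w s * ∑ x ∈ S ^ (n + 1), (√(mu S w n (s⁻¹ * x)) - √(mu S w (n + 1) x)) ^ 2 ≤
      ent S w (n + 1) - ent S w n := by
  have h0 : ent S w (n + 1) - ent S w n = ∑ s ∈ S, w s *
      (Ex S w n (fun x => Real.log (mu S w n x)) -
        Ex S w n (fun x => Real.log (mu S w (n + 1) (s * x)))) := by
    simp only [mul_sub, Finset.sum_sub_distrib]
    rw [← Finset.sum_mul, hw.sum_eq, ent, ent]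
    simp only [Ex]
    ring
  rw [h0]
  refine Finset.sum_le_sum fun s hs => mul_le_mul_of_nonneg_left ?_ (hw.pos s hs).le
  have hB : ∀ x ∉ S ^ (n + 1), mu S w n (s⁻¹ * x) = 0 := by
    intro x hx
    apply mu_eq_zero
    intro h
    apply hx
    rw [pow_succ']
    simpa using Finset.mul_mem_mul hs h
  have e1 := sum_mu_translate_B n s (fun x => Real.log (mu S w n (s⁻¹ * x))) _ hB
  have e2 := sum_mu_translate_B n s (fun x => Real.log (mu S w (n + 1) x)) _ hB
  have e3 := sum_mu_translate_B n s (fun _ => 1) _ hB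
  have e4 := sum_mu (S := S) (w := w) (n + 1) (fun _ => 1)
  rw [Ex_const hw] at e3 e4
  simp only [mul_one, inv_mul_cancel_left] at e1 e3 e4
  rw [← e1, ← e2, ← Finset.sum_sub_distrib]
  have : ∑ x ∈ S ^ (n + 1), ((√(mu S w n (s⁻¹ * x)) - √(mu S w (n + 1) x)) ^ 2 +
      (mu S w n (s⁻¹ * x) - mu S w (n + 1) x)) ≤ ∑ x ∈ S ^ (n + 1),
      (mu S w n (s⁻¹ * x) * Real.log (mu S w n (s⁻¹ * x)) -
        mu S w n (s⁻¹ * x) * Real.log (mu S w (n + 1) x)) := by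
    refine Finset.sum_le_sum fun x _ => ?_
    rw [← mul_sub]
    refine hellinger_pt (mu_nonneg hw _ _) (mu_nonneg hw _ _) fun h => ?_
    exact lt_of_lt_of_le (mul_pos (hw.pos s hs) h) (le_mu_succ hw n s hs x)
  rw [Finset.sum_add_distrib, Finset.sum_sub_distrib, e3, e4] at this
  simpa using this

/-- For logarithmically growing sequences, infinitely many increments are `O(1 / n)`. -/
theorem exists_small_increment (H : ℕ → ℝ) (a b : ℝ)
    (h : ∀ n : ℕ, H n ≤ a + b * Real.log (n + 1)) :
    ∃ᶠ n : ℕ in Filter.atTop, H (n + 1) - H n ≤ (|b| + 1) / (n + 1) := by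
  by_contra hcon
  rw [Filter.not_frequently, Filter.eventually_atTop] at hcon
  obtain ⟨N, hN⟩ := hcon
  have hstep : ∀ n : ℕ, Real.log ((n + 1 : ℕ) + 1) - Real.log (n + 1) ≤ 1 / (n + 1) := by
    intro n
    have hn : (0 : ℝ) < n + 1 := by positivity
    have h1 := Real.log_le_sub_one_of_pos (show (0 : ℝ) < ((n + 1 : ℕ) + 1) / (n + 1) by positivity)
    rw [Real.log_div (by positivity) hn.ne'] at h1
    refine h1.trans (le_of_eq ?_)
    push_cast
    field_simp
    ring
  have hlow : ∀ k : ℕ, H N + (|b| + 1) * (Real.log ((N + k : ℕ) + 1) - Real.log (N + 1)) ≤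
      H (N + k) := by
    intro k
    induction k with
    | zero => simp
    | succ k ih =>
      have h1 := not_le.1 (hN (N + k) (by omega))
      have h2 := mul_le_mul_of_nonneg_left (hstep (N + k)) (show 0 ≤ |b| + 1 by positivity)
      rw [mul_one_div] at h2
      rw [← add_assoc N k 1]
      linarith
  have hbd : ∀ k : ℕ, Real.log ((N + k : ℕ) + 1) ≤ a - H N + (|b| + 1) * Real.log (N + 1) := by
    intro k
    have h1 := hlow k
    have h2 := h (N + k)
    have h3 : 0 ≤ Real.log ((N + k : ℕ) + 1) := Real.log_nonneg (by
      have : (0 : ℝ) ≤ (N + k : ℕ) := by positivity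
      linarith)
    have h4 : b * Real.log ((N + k : ℕ) + 1) ≤ |b| * Real.log ((N + k : ℕ) + 1) :=
      mul_le_mul_of_nonneg_right (le_abs_self b) h3
    linarith
  have ht : Filter.Tendsto (fun k : ℕ => Real.log ((N + k : ℕ) + 1)) Filter.atTop
      Filter.atTop := by
    refine Real.tendsto_log_atTop.comp (Filter.tendsto_atTop_add_const_right _ _ ?_)
    exact tendsto_natCast_atTop_atTop.comp
      (Filter.tendsto_atTop_mono (fun k => Nat.le_add_left k N) Filter.tendsto_id)
  obtain ⟨k, hk⟩ := (ht.eventually_gt_atTop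
    (a - H N + (|b| + 1) * Real.log (N + 1))).exists
  exact absurd (hbd k) (not_le.2 hk)

/-- In a group of polynomial growth, expectations at infinitely many times are almost invariant
under translation by generators, with a loss of order `1 / n`. -/
theorem exists_good_times (hw : IsWeight S w) {d : ℕ} (h : PG G d) :
    ∃ C : ℝ, 0 < C ∧ ∃ᶠ n : ℕ in Filter.atTop, ∀ s ∈ S, ∀ F : G → ℝ,
      (Ex S w n (fun x => F (s * x)) - Ex S w n F) ^ 2 ≤
        C / (n + 1) * (Ex S w n (fun x => F (s * x) ^ 2) + Ex S w n fun x => F x ^ 2) := by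
  obtain ⟨A, hA⟩ := h.bound S
  have hA0 : 0 < A := by
    have := hA 0
    simp only [pow_zero, Finset.card_one, zero_add, one_pow, mul_one] at this
    omega
  have hent : ∀ n : ℕ, ent S w n ≤ Real.log A + d * Real.log (n + 1) := by
    intro n
    refine (ent_le hw n).trans ?_
    have h1 : (#(S ^ n) : ℝ) ≤ A * (n + 1) ^ d := by exact_mod_cast hA n
    have h2 : (0 : ℝ) < #(S ^ n) := by
      exact_mod_cast Finset.card_pos.2 ⟨1, Finset.one_mem_pow hw.one_mem⟩
    refine (Real.log_le_log h2 h1).trans (le_of_eq ?_)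
    rw [Real.log_mul (by positivity) (by positivity), Real.log_pow]
  have hfreq := exists_small_increment (ent S w) _ _ hent
  obtain ⟨s0, hs0, hmin⟩ := Finset.exists_min_image S w ⟨1, hw.one_mem⟩
  have hw0 := hw.pos s0 hs0
  refine ⟨8 * ((|(d : ℝ)| + 1) / w s0), by positivity, hfreq.mono fun n hn s hs F => ?_⟩
  set K := (|(d : ℝ)| + 1) / (n + 1) with hK
  set B := S ^ (n + 1) with hBdef
  -- each generator moves the distribution by at most `K / w s0` in squared Hellinger distance
  have hhell : ∀ s ∈ S, ∑ x ∈ B, (√(mu S w n (s⁻¹ * x)) - √(mu S w (n + 1) x)) ^ 2 ≤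
      K / w s0 := by
    intro s hs
    rw [le_div_iff₀ hw0, mul_comm]
    refine le_trans ?_ ((ent_increment hw n).trans hn)
    refine le_trans (mul_le_mul_of_nonneg_right (hmin s hs)
      (Finset.sum_nonneg fun x _ => sq_nonneg _)) ?_
    exact Finset.single_le_sum (f := fun s => w s *
      ∑ x ∈ B, (√(mu S w n (s⁻¹ * x)) - √(mu S w (n + 1) x)) ^ 2)
      (fun t ht => mul_nonneg (hw.pos t ht).le (Finset.sum_nonneg fun x _ => sq_nonneg _)) hs
  have h1 := hhell s hs
  have h2 := hhell 1 hw.one_mem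
  simp only [inv_one, one_mul] at h2
  have h3 : ∑ x ∈ B, (√(mu S w n (s⁻¹ * x)) - √(mu S w n x)) ^ 2 ≤ 4 * (K / w s0) := by
    have : ∑ x ∈ B, (√(mu S w n (s⁻¹ * x)) - √(mu S w n x)) ^ 2 ≤
        ∑ x ∈ B, (2 * (√(mu S w n (s⁻¹ * x)) - √(mu S w (n + 1) x)) ^ 2 +
          2 * (√(mu S w n x) - √(mu S w (n + 1) x)) ^ 2) := by
      refine Finset.sum_le_sum fun x _ => ?_
      nlinarith [sq_nonneg ((√(mu S w n (s⁻¹ * x)) - √(mu S w (n + 1) x)) +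
        (√(mu S w n x) - √(mu S w (n + 1) x)))]
    rw [Finset.sum_add_distrib, ← Finset.mul_sum, ← Finset.mul_sum] at this
    linarith
  have hB : ∀ s ∈ S, ∀ x ∉ B, mu S w n (s⁻¹ * x) = 0 := by
    intro s hs x hx
    apply mu_eq_zero
    intro h
    apply hx
    rw [hBdef, pow_succ']
    simpa using Finset.mul_mem_mul hs h
  have hB1 : ∀ x ∉ B, mu S w n x = 0 := by simpa using hB 1 hw.one_mem
  have h4 := sq_diff_le (fun x => mu S w n (s⁻¹ * x)) (mu S w n) F B
    (fun x => mu_nonneg hw n _) (fun x => mu_nonneg hw n x)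
  rw [sum_mu_translate_B n s F B (hB s hs), sum_mu_B n F B hB1,
    sum_mu_translate_B n s (fun x => F x ^ 2) B (hB s hs),
    sum_mu_B n (fun x => F x ^ 2) B hB1] at h4
  refine h4.trans ?_
  have h5 : 0 ≤ Ex S w n (fun x => F (s * x) ^ 2) + Ex S w n fun x => F x ^ 2 :=
    add_nonneg (Ex_nonneg hw n fun x => sq_nonneg _) (Ex_nonneg hw n fun x => sq_nonneg _)
  have h6 : 8 * ((|(d : ℝ)| + 1) / w s0) / (n + 1) = 2 * (4 * (K / w s0)) := by
    rw [hK]; ring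
  rw [h6]
  nlinarith [mul_le_mul_of_nonneg_right h3 h5]

end

end PolyGrowth

/-! ### Almost harmonic vectors in the regular representation -/

namespace PolyGrowth

open Finset
open scoped Pointwise

universe u v

section

variable {G : Type u} [Group G] (S : Finset G) (w : G → ℝ)
variable {E : Type v} [NormedAddCommGroup E] [InnerProductSpace ℝ E] (ρ : G →* (E ≃ₗᵢ[ℝ] E))

local notation "⟪" x "," y "⟫" => inner ℝ x y

/-- The averaging (Markov) operator `v ↦ ∑ w(s) ρ(s) v` of an orthogonal representation. -/
noncomputable def avg : E →ₗ[ℝ] E := ∑ s ∈ S, w s • ((ρ s).toLinearEquiv : E →ₗ[ℝ] E)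

theorem avg_apply (v : E) : avg S w ρ v = ∑ s ∈ S, w s • ρ s v := by
  simp [avg, LinearMap.sum_apply]

theorem inner_rep_left (s : G) (x y : E) : ⟪ρ s x, y⟫ = ⟪x, ρ s⁻¹ y⟫ := by
  rw [← (ρ s⁻¹).inner_map_map (ρ s x) y]
  congr 1
  change (ρ s⁻¹ * ρ s) x = x
  rw [← map_mul]
  simp

variable {S w}

theorem sum_inv (hw : IsWeight S w) {M : Type*} [AddCommMonoid M] (f : G → M) :
    ∑ s ∈ S, f s⁻¹ = ∑ s ∈ S, f s :=
  Finset.sum_nbij' (·⁻¹) (·⁻¹) hw.inv_mem hw.inv_mem (by simp) (by simp) (by simp)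

theorem avg_symm (hw : IsWeight S w) (x y : E) : ⟪avg S w ρ x, y⟫ = ⟪x, avg S w ρ y⟫ := by
  rw [avg_apply, avg_apply, sum_inner, inner_sum, ← sum_inv hw]
  refine Finset.sum_congr rfl fun s _ => ?_
  rw [inner_smul_left, inner_smul_right, hw.symm, inner_rep_left, inv_inv]
  rfl

theorem two_inner_lap (hw : IsWeight S w) (v : E) :
    2 * ⟪v - avg S w ρ v, v⟫ = ∑ s ∈ S, w s * ‖ρ s v - v‖ ^ 2 := by
  have h1 : ⟪avg S w ρ v, v⟫ = ∑ s ∈ S, w s * ⟪ρ s v, v⟫ := by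
    rw [avg_apply, sum_inner]
    exact Finset.sum_congr rfl fun s _ => by rw [inner_smul_left]; rfl
  have h2 : ⟪v, v⟫ = ∑ s ∈ S, w s * ⟪v, v⟫ := by rw [← Finset.sum_mul, hw.sum_eq, one_mul]
  rw [inner_sub_left, h1, h2, ← Finset.sum_sub_distrib, Finset.mul_sum]
  refine Finset.sum_congr rfl fun s _ => ?_
  rw [norm_sub_sq_real, LinearIsometryEquiv.norm_map, real_inner_self_eq_norm_sq]
  ring

theorem inner_lap_nonneg (hw : IsWeight S w) (v : E) : 0 ≤ ⟪v - avg S w ρ v, v⟫ := by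
  have h1 : 0 ≤ ∑ s ∈ S, w s * ‖ρ s v - v‖ ^ 2 :=
    Finset.sum_nonneg fun s hs => mul_nonneg (hw.pos s hs).le (sq_nonneg _)
  have := two_inner_lap ρ hw v
  linarith

/-- Positivity of the averaging operator; this is where `1 / 2 ≤ w 1` is used. -/
theorem inner_avg_nonneg (hw : IsWeight S w) (v : E) : 0 ≤ ⟪avg S w ρ v, v⟫ := by
  classical
  have h1 : ⟪avg S w ρ v, v⟫ = ∑ s ∈ S, w s * ⟪ρ s v, v⟫ := by
    rw [avg_apply, sum_inner]
    exact Finset.sum_congr rfl fun s _ => by rw [inner_smul_left]; rfl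
  have h2 := hw.sum_eq
  rw [← Finset.add_sum_erase _ _ hw.one_mem] at h1 h2
  have h3 : ∑ s ∈ S.erase 1, w s * -‖v‖ ^ 2 ≤ ∑ s ∈ S.erase 1, w s * ⟪ρ s v, v⟫ := by
    refine Finset.sum_le_sum fun s hs => mul_le_mul_of_nonneg_left ?_
      (hw.pos s (Finset.mem_of_mem_erase hs)).le
    have := neg_le_of_abs_le (abs_real_inner_le_norm (ρ s v) v)
    rw [LinearIsometryEquiv.norm_map] at this
    nlinarith
  rw [← Finset.sum_mul] at h3
  have h4 : ⟪ρ 1 v, v⟫ = ‖v‖ ^ 2 := by rw [map_one, ← real_inner_self_eq_norm_sq]; rfl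
  rw [h4] at h1
  nlinarith [hw.half, sq_nonneg ‖v‖]

theorem energy_succ (hw : IsWeight S w) (v : E) :
    ⟪avg S w ρ v - avg S w ρ (avg S w ρ v), avg S w ρ v⟫ ≤
      ⟪v - avg S w ρ v, v⟫ - ‖v - avg S w ρ v‖ ^ 2 := by
  have h1 := inner_avg_nonneg ρ hw (v - avg S w ρ v)
  have h2 := avg_symm ρ hw v (avg S w ρ v)
  rw [← real_inner_self_eq_norm_sq]
  rw [map_sub] at h1
  simp only [inner_sub_left, inner_sub_right] at *
  rw [real_inner_comm v (avg S w ρ v)] at *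
  rw [real_inner_comm v (avg S w ρ (avg S w ρ v))] at *
  linarith [real_inner_comm v (avg S w ρ v), real_inner_comm v (avg S w ρ (avg S w ρ v))]

theorem norm_avg_sq (v : E) :
    ‖v‖ ^ 2 - ‖avg S w ρ v‖ ^ 2 ≤ 2 * ⟪v - avg S w ρ v, v⟫ := by
  have h := norm_sub_sq_real v (avg S w ρ v)
  have h1 := sq_nonneg ‖v - avg S w ρ v‖
  have h2 := real_inner_comm v (avg S w ρ v)
  rw [inner_sub_left, real_inner_self_eq_norm_sq]
  linarith

end

/-- The left regular representation, on an inner product space with orthonormal basis `G`. -/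
theorem exists_regular (G : Type u) [Group G] : ∃ (E : Type u) (_ : NormedAddCommGroup E)
    (_ : InnerProductSpace ℝ E) (ρ : G →* (E ≃ₗᵢ[ℝ] E)) (δ : G → E),
    Orthonormal ℝ δ ∧ ∀ g x, ρ g (δ x) = δ (g * x) := by
  classical
  let hb : HilbertBasis G ℝ (lp (fun _ : G => ℝ) 2) := default
  have ho := hb.orthonormal
  let E := Submodule.span ℝ (Set.range hb)
  let b : Module.Basis G ℝ E := Module.Basis.span ho.linearIndependent
  have hbo : Orthonormal ℝ b := by
    have : (Subtype.val ∘ b : G → _) = hb := by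
      funext i
      exact congrArg Subtype.val (Module.Basis.span_apply ho.linearIndependent i)
    rw [← this] at ho
    exact (orthonormal_iff_ite.2 fun i j => by
      have := orthonormal_iff_ite.1 ho i j
      simpa using this)
  refine ⟨E, inferInstance, inferInstance,
    { toFun := fun g => hbo.equiv hbo (Equiv.mulLeft g), map_one' := ?_, map_mul' := ?_ }, b, hbo,
    fun g x => ?_⟩
  · apply LinearIsometryEquiv.toLinearEquiv_injective
    apply b.ext'
    intro i
    change hbo.equiv hbo (Equiv.mulLeft 1) (b i) = b i
    simp
  · intro g g'
    apply LinearIsometryEquiv.toLinearEquiv_injective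
    apply b.ext'
    intro i
    change hbo.equiv hbo (Equiv.mulLeft (g * g')) (b i) =
      hbo.equiv hbo (Equiv.mulLeft g) (hbo.equiv hbo (Equiv.mulLeft g') (b i))
    simp
  · change hbo.equiv hbo (Equiv.mulLeft g) (b x) = _
    simp

section

variable {G : Type u} [Group G] {S : Finset G} {w : G → ℝ}
variable {E : Type v} [NormedAddCommGroup E] [InnerProductSpace ℝ E] (ρ : G →* (E ≃ₗᵢ[ℝ] E))

local notation "⟪" x "," y "⟫" => inner ℝ x y

theorem inner_iterate_avg {δ : G → E} (hδ : ∀ g x, ρ g (δ x) = δ (g * x)) (n : ℕ) (y : E) :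
    ⟪(avg S w ρ)^[n] (δ 1), y⟫ = Ex S w n fun x => ⟪δ x, y⟫ := by
  induction n generalizing y with
  | zero => rfl
  | succ n ih =>
    rw [Function.iterate_succ_apply', avg_apply, sum_inner]
    refine Finset.sum_congr rfl fun s _ => ?_
    rw [inner_smul_left, inner_rep_left, ih]
    simp only [← inner_rep_left, hδ]
    rfl

/-- The `n`-th iterate has mass one on at most `#(S ^ n)` points. -/
theorem one_le_card_mul_norm_sq (hw : IsWeight S w) [DecidableEq G] {δ : G → E}
    (ho : Orthonormal ℝ δ) (hδ : ∀ g x, ρ g (δ x) = δ (g * x)) (n : ℕ) :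
    1 ≤ #(S ^ n) * ‖(avg S w ρ)^[n] (δ 1)‖ ^ 2 := by
  set u := (avg S w ρ)^[n] (δ 1) with hu
  have h1 : ⟪u, ∑ x ∈ S ^ n, δ x⟫ = 1 := by
    rw [hu, inner_iterate_avg ρ hδ, ← sum_mu n, ← Ex_const hw n 1, ← sum_mu n]
    refine Finset.sum_congr rfl fun x hx => ?_
    rw [inner_sum]
    simp only [orthonormal_iff_ite.1 ho]
    simp [hx]
  have h2 : ‖∑ x ∈ S ^ n, δ x‖ ^ 2 = #(S ^ n) := by
    rw [← real_inner_self_eq_norm_sq]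
    simp only [inner_sum, sum_inner, orthonormal_iff_ite.1 ho]
    simp
  have h3 := real_inner_mul_inner_self_le u (∑ x ∈ S ^ n, δ x)
  rw [h1, real_inner_self_eq_norm_sq, real_inner_self_eq_norm_sq, h2] at h3
  linarith

/-- Each group element moves `u k` little if each generator does. -/
theorem tendsto_rep_sub (hgen : Subgroup.closure (S : Set G) = ⊤) (u : ℕ → E)
    (h : ∀ s ∈ S, Filter.Tendsto (fun k => ‖ρ s (u k) - u k‖) Filter.atTop (nhds 0)) (g : G) :
    Filter.Tendsto (fun k => ‖ρ g (u k) - u k‖) Filter.atTop (nhds 0) := by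
  have hg : g ∈ Subgroup.closure (S : Set G) := hgen ▸ Subgroup.mem_top g
  induction hg using Subgroup.closure_induction with
  | mem x hx => exact h x hx
  | one => simp
  | mul x y _ _ hx hy =>
    refine squeeze_zero (fun _ => norm_nonneg _) (fun k => ?_) (by simpa using hy.add hx)
    rw [map_mul, LinearIsometryEquiv.coe_mul, Function.comp_apply,
      ← (ρ x).norm_map (ρ y (u k) - u k), map_sub]
    refine le_trans (le_of_eq ?_) (norm_add_le _ _)
    congr 1
    abel
  | inv x _ hx =>
    refine hx.congr fun k => ?_
    rw [← (ρ x).norm_map (ρ x⁻¹ (u k) - u k), map_sub]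
    have : ρ x (ρ x⁻¹ (u k)) = u k := by
      change (ρ x * ρ x⁻¹) (u k) = _
      rw [← map_mul]
      simp
    rw [this, norm_sub_rev]

theorem avg_iterate_symm (hw : IsWeight S w) (n : ℕ) (x y : E) :
    ⟪(avg S w ρ)^[n] x, y⟫ = ⟪x, (avg S w ρ)^[n] y⟫ := by
  induction n generalizing x y with
  | zero => rfl
  | succ n ih =>
    rw [Function.iterate_succ_apply', avg_symm ρ hw, ih, Function.iterate_succ_apply]

/-- Absence of a spectral gap: in the regular representation of an infinite group of polynomial
growth the Laplacian `1 - avg` has arbitrarily small positive spectrum. Otherwise the return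
probabilities would decay exponentially. -/
theorem exists_almost_harmonic_aux (hw : IsWeight S w)
    (hgen : Subgroup.closure (S : Set G) = ⊤) {d : ℕ} (h : PG G d) [Infinite G] {δ : G → E}
    (ho : Orthonormal ℝ δ) (hδ : ∀ g x, ρ g (δ x) = δ (g * x)) (ε : ℝ) (hε : 0 < ε) :
    ∃ v : E, 0 < ⟪v - avg S w ρ v, v⟫ ∧
      ‖v - avg S w ρ v‖ ^ 2 ≤ ε * ⟪v - avg S w ρ v, v⟫ := by
  classical
  by_contra! hcon
  obtain ⟨c, hc0, hc1, hcε⟩ : ∃ c : ℝ, 0 < c ∧ c < 1 ∧ c ≤ ε :=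
    ⟨min ε (1 / 2), by positivity, by have := min_le_right ε (1 / 2); linarith, min_le_left _ _⟩
  have hgap : ∀ v : E, c * ⟪v - avg S w ρ v, v⟫ ≤ ‖v - avg S w ρ v‖ ^ 2 := by
    intro v
    rcases (inner_lap_nonneg ρ hw v).eq_or_lt with h0 | h0
    · rw [← h0, mul_zero]; positivity
    · exact (mul_le_mul_of_nonneg_right hcε h0.le).trans (hcon v h0).le
  set u : ℕ → E := fun k => (avg S w ρ)^[k] (δ 1) with hu
  have hus : ∀ k, u (k + 1) = avg S w ρ (u k) := fun k => Function.iterate_succ_apply' _ _ _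
  set e : ℕ → ℝ := fun k => ⟪u k - avg S w ρ (u k), u k⟫ with he
  have he0 : ∀ k, 0 ≤ e k := fun k => inner_lap_nonneg ρ hw _
  have hes : ∀ k, e (k + 1) ≤ (1 - c) * e k := by
    intro k
    have h1 := energy_succ ρ hw (u k)
    have h2 := hgap (u k)
    simp only [he, hus]
    linarith
  have hek : ∀ k, e k ≤ (1 - c) ^ k * e 0 := by
    intro k
    induction k with
    | zero => simp
    | succ k ih =>
      rw [pow_succ', mul_assoc]
      exact (hes k).trans (mul_le_mul_of_nonneg_left ih (by linarith))
  have hgeo : Filter.Tendsto (fun k : ℕ => (1 - c) ^ k) Filter.atTop (nhds 0) :=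
    tendsto_pow_atTop_nhds_zero_of_lt_one (by linarith) (by linarith)
  have het : Filter.Tendsto e Filter.atTop (nhds 0) :=
    squeeze_zero he0 hek (by simpa using hgeo.mul_const (e 0))
  -- the norms tend to zero because the group is infinite
  have hmove : ∀ g, Filter.Tendsto (fun k => ‖ρ g (u k) - u k‖) Filter.atTop (nhds 0) := by
    refine tendsto_rep_sub ρ hgen u fun s hs => ?_
    have hws := hw.pos s hs
    have h1 : ∀ k, ‖ρ s (u k) - u k‖ ^ 2 ≤ 2 / w s * e k := by
      intro k
      have h2 := two_inner_lap ρ hw (u k)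
      have h3 := Finset.single_le_sum (f := fun s => w s * ‖ρ s (u k) - u k‖ ^ 2)
        (fun t ht => mul_nonneg (hw.pos t ht).le (sq_nonneg _)) hs
      rw [div_mul_eq_mul_div, le_div_iff₀ hws]
      simp only [he]
      linarith
    have h2 : Filter.Tendsto (fun k => ‖ρ s (u k) - u k‖ ^ 2) Filter.atTop (nhds 0) :=
      squeeze_zero (fun _ => sq_nonneg _) h1 (by simpa using het.const_mul (2 / w s))
    have h3 := h2.sqrt
    simpa [Real.sqrt_sq (norm_nonneg _)] using h3
  have hcoord : ∀ k, ‖u k‖ ^ 2 = ⟪u (2 * k), δ 1⟫ := by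
    intro k
    rw [← real_inner_self_eq_norm_sq, hu]
    simp only
    rw [two_mul, Function.iterate_add_apply, avg_iterate_symm ρ hw k, real_inner_comm]
  have hle : ∀ k, ‖u (k + 1)‖ ^ 2 ≤ ‖u k‖ ^ 2 := by
    intro k
    have h1 : ‖u (k + 1)‖ ≤ ‖u k‖ := by
      rw [hus, avg_apply]
      refine (norm_sum_le _ _).trans (le_of_eq ?_)
      trans ∑ s ∈ S, w s * ‖u k‖
      · refine Finset.sum_congr rfl fun s hs => ?_
        rw [norm_smul, LinearIsometryEquiv.norm_map, Real.norm_of_nonneg (hw.pos s hs).le]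
      · rw [← Finset.sum_mul, hw.sum_eq, one_mul]
    gcongr
  have hle1 : ∀ k, ‖u k‖ ^ 2 ≤ 1 := by
    intro k
    induction k with
    | zero => simp [hu, ho.1 1]
    | succ k ih => exact (hle k).trans ih
  have hnorm : Filter.Tendsto (fun k => ‖u k‖ ^ 2) Filter.atTop (nhds 0) := by
    have h1 : Filter.Tendsto (fun k => ⟪u k, δ 1⟫) Filter.atTop (nhds 0) := by
      rw [Metric.tendsto_atTop]
      intro η hη
      obtain ⟨m, hm⟩ := exists_nat_gt (4 / η ^ 2)
      obtain ⟨F, hF⟩ := Infinite.exists_subset_card_eq G m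
      have hev : ∀ᶠ k in Filter.atTop, ∀ g ∈ F, ‖ρ g⁻¹ (u k) - u k‖ < η / 2 := by
        rw [Filter.eventually_all_finset]
        intro g _
        exact (hmove g⁻¹).eventually_lt_const (by positivity)
      obtain ⟨N, hN⟩ := Filter.eventually_atTop.1 hev
      refine ⟨N, fun k hk => ?_⟩
      rw [Real.dist_eq, sub_zero]
      by_contra! hbig
      have h2 : ∀ g ∈ F, (η / 2) ^ 2 ≤ ‖⟪δ g, u k⟫‖ ^ 2 := by
        intro g hg
        have h3 := hN k hk g hg
        have h4 : ⟪δ g, u k⟫ = ⟪u k, δ 1⟫ + ⟪ρ g⁻¹ (u k) - u k, δ 1⟫ := by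
          rw [inner_sub_left, inner_rep_left, inv_inv, hδ, mul_one, real_inner_comm]
          ring
        have h5 : |⟪ρ g⁻¹ (u k) - u k, δ 1⟫| ≤ ‖ρ g⁻¹ (u k) - u k‖ := by
          have := abs_real_inner_le_norm (ρ g⁻¹ (u k) - u k) (δ 1)
          rwa [ho.1 1, mul_one] at this
        have h6 : η / 2 ≤ ‖⟪δ g, u k⟫‖ := by
          rw [h4, Real.norm_eq_abs]
          have := abs_sub_abs_le_abs_sub (⟪u k, δ 1⟫) (-⟪ρ g⁻¹ (u k) - u k, δ 1⟫)
          rw [abs_neg, sub_neg_eq_add] at this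
          linarith
        gcongr
      have h7 := Finset.sum_le_sum h2
      have h8 := (h7.trans (ho.sum_inner_products_le (u k) (s := F))).trans (hle1 k)
      rw [Finset.sum_const, hF, nsmul_eq_mul] at h8
      rw [div_lt_iff₀ (by positivity)] at hm
      nlinarith
    have h2 : Filter.Tendsto (fun k : ℕ => 2 * k) Filter.atTop Filter.atTop :=
      Filter.tendsto_atTop_mono (fun k => Nat.le_mul_of_pos_left k two_pos) Filter.tendsto_id
    simp only [hcoord]
    exact h1.comp h2
  -- hence they decay exponentially
  have hdecay : ∀ k, ‖u k‖ ^ 2 ≤ 2 * e 0 / c * (1 - c) ^ k := by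
    intro k
    have h1 : ∀ j, ‖u k‖ ^ 2 - ‖u (k + j)‖ ^ 2 ≤
        2 * e 0 / c * ((1 - c) ^ k - (1 - c) ^ (k + j)) := by
      intro j
      induction j with
      | zero => simp
      | succ j ih =>
        have h2 := norm_avg_sq (S := S) (w := w) ρ (u (k + j))
        rw [← hus] at h2
        have h3 := hek (k + j)
        have h4 : 2 * e 0 / c * ((1 - c) ^ (k + j) - (1 - c) ^ (k + j + 1)) =
            2 * ((1 - c) ^ (k + j) * e 0) := by
          rw [pow_succ]
          field_simp
          ring
        have h5 : ⟪u (k + j) - u (k + j + 1), u (k + j)⟫ = e (k + j) := by rw [he, hus]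
        rw [h5] at h2
        rw [← add_assoc]
        linarith
    have h2 : Filter.Tendsto (fun j => k + j) Filter.atTop Filter.atTop :=
      Filter.tendsto_atTop_mono (fun j => Nat.le_add_left j k) Filter.tendsto_id
    have h3 := (hnorm.comp h2).const_sub (‖u k‖ ^ 2)
    have h4 := ((hgeo.comp h2).const_sub ((1 - c) ^ k)).const_mul (2 * e 0 / c)
    simpa using le_of_tendsto_of_tendsto' h3 h4 h1
  obtain ⟨A, hA⟩ := h.bound S
  have hlow : ∀ k : ℕ, 1 ≤ A * (2 * e 0 / c) * ((k + 1 : ℝ) ^ d * (1 - c) ^ k) := by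
    intro k
    have h1 := one_le_card_mul_norm_sq ρ hw ho hδ k
    have h2 : (#(S ^ k) : ℝ) ≤ A * (k + 1) ^ d := by exact_mod_cast hA k
    have h3 := mul_le_mul h2 (hdecay k) (sq_nonneg _) (by positivity)
    calc (1 : ℝ) ≤ _ := h1
      _ ≤ _ := h3
      _ = _ := by ring
  have hz : Filter.Tendsto (fun k : ℕ => (k + 1 : ℝ) ^ d * (1 - c) ^ k) Filter.atTop (nhds 0) := by
    have h1 := (tendsto_pow_const_mul_const_pow_of_lt_one d (r := 1 - c) (by linarith)
      (by linarith)).comp (Filter.tendsto_add_atTop_nat 1)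
    have h2 := h1.mul_const (1 - c)⁻¹
    rw [zero_mul] at h2
    refine h2.congr fun k => ?_
    have : 1 - c ≠ 0 := by linarith
    simp only [Function.comp_apply]
    push_cast
    rw [pow_succ (1 - c) k]
    field_simp
  have hz' := hz.const_mul (A * (2 * e 0 / c))
  rw [mul_zero] at hz'
  exact absurd (ge_of_tendsto' hz' hlow) (by norm_num)

end

/-- In the regular representation of an infinite group of polynomial growth, the displacement
`v - avg v` can be made arbitrarily small compared with the energy `⟨v - avg v, v⟩`. -/
theorem exists_almost_harmonic {G : Type u} [Group G] {S : Finset G} {w : G → ℝ}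
    (hw : IsWeight S w) (hgen : Subgroup.closure (S : Set G) = ⊤) {d : ℕ} (h : PG G d)
    [Infinite G] : ∃ (E : Type u) (_ : NormedAddCommGroup E) (_ : InnerProductSpace ℝ E)
    (ρ : G →* (E ≃ₗᵢ[ℝ] E)), ∀ ε : ℝ, 0 < ε → ∃ v : E, 0 < inner ℝ (v - avg S w ρ v) v ∧
      ‖v - avg S w ρ v‖ ^ 2 ≤ ε * inner ℝ (v - avg S w ρ v) v := by
  obtain ⟨E, i1, i2, ρ, δ, ho, hδ⟩ := exists_regular G
  exact ⟨E, i1, i2, ρ, exists_almost_harmonic_aux ρ hw hgen h ho hδ⟩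

end PolyGrowth

/-! ### Ultralimits and the harmonic cocycle -/

namespace PolyGrowth

open Finset
open scoped Pointwise

universe u v

/-- The limit of a real sequence along an ultrafilter (meaningful for bounded sequences). -/
noncomputable def ulim (U : Ultrafilter ℕ) (a : ℕ → ℝ) : ℝ := Filter.limUnder (U : Filter ℕ) a

theorem tendsto_ulim (U : Ultrafilter ℕ) {a : ℕ → ℝ} {C : ℝ} (h : ∀ n, |a n| ≤ C) :
    Filter.Tendsto a U (nhds (ulim U a)) := by
  have h1 := (isCompact_Icc (a := -C) (b := C)).ultrafilter_le_nhds (U.map a) (by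
    rw [Filter.le_principal_iff]
    exact Filter.mem_map.2 (Filter.Eventually.of_forall fun n => abs_le.1 (h n)))
  obtain ⟨x, _, hx⟩ := h1
  exact tendsto_nhds_limUnder ⟨x, hx⟩

theorem ulim_eq {U : Ultrafilter ℕ} {a : ℕ → ℝ} {l : ℝ} (h : Filter.Tendsto a U (nhds l)) :
    ulim U a = l := h.limUnder_eq

local notation "⟪" x "," y "⟫" => inner ℝ x y

section Completion

variable {V : Type v} [SeminormedAddCommGroup V] [InnerProductSpace ℝ V]

theorem compl_coe (T : V →ₗᵢ[ℝ] V) (x : V) : UniformSpace.Completion.map T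
    (x : UniformSpace.Completion V) = ((T x : V) : UniformSpace.Completion V) :=
  UniformSpace.Completion.map_coe T.isometry.uniformContinuous x

theorem compl_add (T : V →ₗᵢ[ℝ] V) (x y : UniformSpace.Completion V) :
    UniformSpace.Completion.map T (x + y) =
      UniformSpace.Completion.map T x + UniformSpace.Completion.map T y := by
  have hc : Continuous (UniformSpace.Completion.map T) := UniformSpace.Completion.continuous_map
  induction x, y using UniformSpace.Completion.induction_on₂ with
  | hp =>
    exact isClosed_eq (hc.comp (continuous_fst.add continuous_snd))
      ((hc.comp continuous_fst).add (hc.comp continuous_snd))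
  | ih x y =>
    rw [← UniformSpace.Completion.coe_add, compl_coe, compl_coe, compl_coe, map_add,
      UniformSpace.Completion.coe_add]

theorem compl_smul (T : V →ₗᵢ[ℝ] V) (c : ℝ) (x : UniformSpace.Completion V) :
    UniformSpace.Completion.map T (c • x) = c • UniformSpace.Completion.map T x := by
  have hc : Continuous (UniformSpace.Completion.map T) := UniformSpace.Completion.continuous_map
  induction x using UniformSpace.Completion.induction_on with
  | hp => exact isClosed_eq (hc.comp (continuous_const_smul c)) (hc.const_smul c)
  | ih x =>
    rw [← UniformSpace.Completion.coe_smul, compl_coe, compl_coe, map_smul,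
      UniformSpace.Completion.coe_smul]

theorem compl_norm (T : V →ₗᵢ[ℝ] V) (x : UniformSpace.Completion V) :
    ‖UniformSpace.Completion.map T x‖ = ‖x‖ := by
  have hc : Continuous (UniformSpace.Completion.map T) := UniformSpace.Completion.continuous_map
  induction x using UniformSpace.Completion.induction_on with
  | hp => exact isClosed_eq hc.norm continuous_norm
  | ih x =>
    rw [compl_coe, UniformSpace.Completion.norm_coe, UniformSpace.Completion.norm_coe, T.norm_map]

/-- The extension of a linear isometry to the completion. -/
noncomputable def complMap (T : V →ₗᵢ[ℝ] V) :
    UniformSpace.Completion V →ₗᵢ[ℝ] UniformSpace.Completion V where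
  toFun := UniformSpace.Completion.map T
  map_add' := compl_add T
  map_smul' := compl_smul T
  norm_map' := compl_norm T

theorem complMap_coe (T : V →ₗᵢ[ℝ] V) (x : V) :
    complMap T (x : UniformSpace.Completion V) = ((T x : V) : UniformSpace.Completion V) :=
  UniformSpace.Completion.map_coe T.isometry.uniformContinuous x

theorem complMap_comp (T T' T'' : V →ₗᵢ[ℝ] V) (h : ∀ x, T'' x = T (T' x))
    (x : UniformSpace.Completion V) : complMap T'' x = complMap T (complMap T' x) := by
  induction x using UniformSpace.Completion.induction_on with
  | hp =>
    exact isClosed_eq (complMap T'').continuous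
      ((complMap T).continuous.comp (complMap T').continuous)
  | ih x => rw [complMap_coe, complMap_coe, complMap_coe, h]

theorem complMap_id (T : V →ₗᵢ[ℝ] V) (h : ∀ x, T x = x) (x : UniformSpace.Completion V) :
    complMap T x = x := by
  induction x using UniformSpace.Completion.induction_on with
  | hp => exact isClosed_eq (complMap T).continuous continuous_id
  | ih x => rw [complMap_coe, h]

theorem exists_completion_rep {G : Type u} [Group G] (T : G → (V →ₗᵢ[ℝ] V))
    (h1 : ∀ x, T 1 x = x) (hm : ∀ g g' x, T (g * g') x = T g (T g' x)) :
    ∃ π : G →* (UniformSpace.Completion V ≃ₗᵢ[ℝ] UniformSpace.Completion V),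
      ∀ g (x : V), π g (x : UniformSpace.Completion V) =
        ((T g x : V) : UniformSpace.Completion V) := by
  have hinv : ∀ g g', g * g' = 1 → ∀ x, complMap (T g) (complMap (T g') x) = x := by
    intro g g' h x
    rw [← complMap_comp (T g) (T g') (T 1) (by intro x; rw [← hm, h]), complMap_id _ h1]
  refine ⟨{ toFun := fun g =>
              { toFun := complMap (T g)
                invFun := complMap (T g⁻¹)
                map_add' := map_add _
                map_smul' := map_smul _
                left_inv := hinv _ _ (inv_mul_cancel g)
                right_inv := hinv _ _ (mul_inv_cancel g)
                norm_map' := (complMap (T g)).norm_map }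
            map_one' := ?_
            map_mul' := ?_ }, fun g x => complMap_coe _ _⟩
  · ext x
    exact complMap_id _ h1 x
  · intro g g'
    ext x
    exact complMap_comp _ _ _ (hm g g') x

end Completion

section Ultraproduct

variable (E : Type v) [NormedAddCommGroup E] [InnerProductSpace ℝ E]

/-- The space of bounded sequences in `E`. -/
def bddSeq : Submodule ℝ (ℕ → E) where
  carrier := {f | ∃ C, ∀ n, ‖f n‖ ≤ C}
  add_mem' := by
    rintro f g ⟨C, hC⟩ ⟨D, hD⟩
    exact ⟨C + D, fun n => (norm_add_le _ _).trans (add_le_add (hC n) (hD n))⟩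
  zero_mem' := ⟨0, fun n => by simp⟩
  smul_mem' := by
    rintro c f ⟨C, hC⟩
    exact ⟨‖c‖ * C, fun n => by
      rw [Pi.smul_apply, norm_smul]
      exact mul_le_mul_of_nonneg_left (hC n) (norm_nonneg c)⟩

variable {E} in
theorem tendsto_inner_bddSeq (U : Ultrafilter ℕ) (f g : bddSeq E) :
    Filter.Tendsto (fun n => ⟪f.1 n, g.1 n⟫) U (nhds (ulim U fun n => ⟪f.1 n, g.1 n⟫)) := by
  obtain ⟨C, hC⟩ := f.2
  obtain ⟨D, hD⟩ := g.2
  refine tendsto_ulim U (C := C * D) fun n => (abs_real_inner_le_norm _ _).trans ?_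
  exact mul_le_mul (hC n) (hD n) (norm_nonneg _) ((norm_nonneg _).trans (hC n))

/-- A copy of `bddSeq E`, carrying the seminorm defined by the ultralimit of the inner products
instead of the topology inherited from the product space. -/
def USeq (_ : Ultrafilter ℕ) : Type v := bddSeq E

noncomputable instance (U : Ultrafilter ℕ) : AddCommGroup (USeq E U) :=
  inferInstanceAs (AddCommGroup (bddSeq E))

noncomputable instance (U : Ultrafilter ℕ) : Module ℝ (USeq E U) :=
  inferInstanceAs (Module ℝ (bddSeq E))

/-- The identity map from bounded sequences. -/
def USeq.of (U : Ultrafilter ℕ) : bddSeq E →ₗ[ℝ] USeq E U := LinearMap.id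

/-- The ultralimit inner product on bounded sequences. -/
@[reducible] noncomputable def USeq.core (U : Ultrafilter ℕ) :
    PreInnerProductSpace.Core ℝ (USeq E U) where
  inner f g := ulim U fun n => ⟪(show bddSeq E from f).1 n, (show bddSeq E from g).1 n⟫
  conj_inner_symm f g := by
    simp only [conj_trivial]
    congr 1
    funext n
    exact real_inner_comm _ _
  re_inner_nonneg f := by
    refine ge_of_tendsto (tendsto_inner_bddSeq U f f) (Filter.Eventually.of_forall fun n => ?_)
    exact real_inner_self_nonneg
  add_left f g h := by
    refine ulim_eq (((tendsto_inner_bddSeq U f h).add (tendsto_inner_bddSeq U g h)).congr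
      fun n => ?_)
    exact (inner_add_left _ _ _).symm
  smul_left f g r := by
    refine ulim_eq (((tendsto_inner_bddSeq U f g).const_mul r).congr fun n => ?_)
    exact (real_inner_smul_left _ _ _).symm

noncomputable instance (U : Ultrafilter ℕ) : SeminormedAddCommGroup (USeq E U) :=
  InnerProductSpace.Core.toSeminormedAddCommGroup (c := USeq.core E U)

noncomputable instance (U : Ultrafilter ℕ) : InnerProductSpace ℝ (USeq E U) :=
  InnerProductSpace.ofCore (USeq.core E U)

variable {E}

theorem USeq.inner_of (U : Ultrafilter ℕ) (f g : bddSeq E) :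
    ⟪USeq.of E U f, USeq.of E U g⟫ = ulim U fun n => ⟪f.1 n, g.1 n⟫ := rfl

/-- Ultraproducts of orthogonal representations. -/
theorem exists_ultraproduct {G : Type u} [Group G] (ρ : G →* (E ≃ₗᵢ[ℝ] E)) (U : Ultrafilter ℕ) :
    ∃ (H : Type v) (_ : NormedAddCommGroup H) (_ : InnerProductSpace ℝ H) (_ : CompleteSpace H)
      (π : G →* (H ≃ₗᵢ[ℝ] H)) (ι : bddSeq E →ₗ[ℝ] H),
      (∀ f g : bddSeq E, ⟪ι f, ι g⟫ = ulim U fun n => ⟪f.1 n, g.1 n⟫) ∧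
      ∀ g (f f' : bddSeq E), (∀ n, f'.1 n = ρ g (f.1 n)) → π g (ι f) = ι f' := by
  let T0 : G → bddSeq E → bddSeq E := fun g f => ⟨fun n => ρ g (f.1 n), by
    obtain ⟨C, hC⟩ := f.2
    exact ⟨C, fun n => by rw [LinearIsometryEquiv.norm_map]; exact hC n⟩⟩
  have hT0 : ∀ g f f', ⟪USeq.of E U (T0 g f), USeq.of E U (T0 g f')⟫ =
      ⟪USeq.of E U f, USeq.of E U f'⟫ := by
    intro g f f'
    rw [USeq.inner_of, USeq.inner_of]
    congr 1
    funext n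
    exact (ρ g).inner_map_map _ _
  let T1 : G → (USeq E U →ₗ[ℝ] USeq E U) := fun g =>
    { toFun := T0 g
      map_add' := fun f f' => Subtype.ext (funext fun n => map_add (ρ g) _ _)
      map_smul' := fun c f => Subtype.ext (funext fun n => map_smul (ρ g) c _) }
  let T : G → (USeq E U →ₗᵢ[ℝ] USeq E U) := fun g =>
    { T1 g with
      norm_map' := fun f => by
        have h1 : ‖T1 g f‖ ^ 2 = ‖f‖ ^ 2 := by
          rw [← real_inner_self_eq_norm_sq, ← real_inner_self_eq_norm_sq]
          exact hT0 g f f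
        exact (pow_left_inj₀ (norm_nonneg _) (norm_nonneg _) two_ne_zero).1 h1 }
  obtain ⟨π, hπ⟩ := exists_completion_rep T
    (fun f => Subtype.ext (funext fun n => by
      change ρ 1 ((show bddSeq E from f).1 n) = _
      rw [map_one]; rfl))
    (fun g g' f => Subtype.ext (funext fun n => by
      change ρ (g * g') ((show bddSeq E from f).1 n) = ρ g (ρ g' _)
      rw [map_mul]; rfl))
  refine ⟨UniformSpace.Completion (USeq E U), inferInstance, inferInstance, inferInstance, π,
    (UniformSpace.Completion.toComplₗᵢ (𝕜 := ℝ) (E := USeq E U)).toLinearMap ∘ₗ USeq.of E U,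
    fun f g => ?_, fun g f f' h => ?_⟩
  · exact UniformSpace.Completion.inner_coe _ _
  · refine (hπ g (USeq.of E U f)).trans ?_
    change ((T g (USeq.of E U f) : USeq E U) : UniformSpace.Completion (USeq E U)) =
      ((USeq.of E U f' : USeq E U) : UniformSpace.Completion (USeq E U))
    congr 1
    exact Subtype.ext (funext fun n => (h n).symm)

end Ultraproduct

/-- A harmonic cocycle `b` for the orthogonal representation `π`, i.e. a harmonic map which is
equivariant for an affine isometric action with linear part `π`. -/
structure IsHarmonic {G : Type u} [Group G] (S : Finset G) (w : G → ℝ) {H : Type v}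
    [NormedAddCommGroup H] [InnerProductSpace ℝ H] (π : G →* (H ≃ₗᵢ[ℝ] H)) (b : G → H) : Prop where
  map_mul : ∀ x y, b (x * y) = b x + π x (b y)
  harm : ∑ s ∈ S, w s • b s = 0

/-- Existence of a nontrivial harmonic cocycle (a special case of theorems of Mok and of
Korevaar and Schoen). -/
theorem exists_harmonic {G : Type u} [Group G] {S : Finset G} {w : G → ℝ} (hw : IsWeight S w)
    (hgen : Subgroup.closure (S : Set G) = ⊤) {d : ℕ} (h : PG G d) [Infinite G] :
    ∃ (H : Type u) (_ : NormedAddCommGroup H) (_ : InnerProductSpace ℝ H) (_ : CompleteSpace H)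
      (π : G →* (H ≃ₗᵢ[ℝ] H)) (b : G → H), IsHarmonic S w π b ∧
        ∑ s ∈ S, w s * ‖b s‖ ^ 2 = 1 := by
  obtain ⟨E, i1, i2, ρ, hE⟩ := exists_almost_harmonic hw hgen h
  have hE' : ∀ n : ℕ, ∃ v : E, ∑ s ∈ S, w s * ‖ρ s v - v‖ ^ 2 = 1 ∧
      ‖v - avg S w ρ v‖ ^ 2 ≤ 1 / ((n : ℝ) + 1) := by
    intro n
    obtain ⟨v, hv0, hv⟩ := hE (1 / ((n : ℝ) + 1)) (by positivity)
    set q := ⟪v - avg S w ρ v, v⟫ with hq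
    have hr : 0 < √(2 * q) := by positivity
    have hr2 : √(2 * q) ^ 2 = 2 * q := Real.sq_sqrt (by positivity)
    refine ⟨(√(2 * q))⁻¹ • v, ?_, ?_⟩
    · have h1 := two_inner_lap ρ hw v
      rw [← hq, ← hr2] at h1
      simp only [map_smul, ← smul_sub, norm_smul, mul_pow, norm_inv, Real.norm_of_nonneg hr.le]
      have h2 : ∑ s ∈ S, w s * ((√(2 * q))⁻¹ ^ 2 * ‖ρ s v - v‖ ^ 2) =
          (√(2 * q))⁻¹ ^ 2 * ∑ s ∈ S, w s * ‖ρ s v - v‖ ^ 2 := by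
        rw [Finset.mul_sum]
        exact Finset.sum_congr rfl fun s _ => by ring
      rw [h2, ← h1, ← mul_pow, inv_mul_cancel₀ hr.ne', one_pow]
    · rw [map_smul, ← smul_sub, norm_smul, mul_pow, norm_inv, Real.norm_of_nonneg hr.le, inv_pow,
        hr2, inv_mul_le_iff₀ (by positivity)]
      refine hv.trans ?_
      have : 0 < 1 / ((n : ℝ) + 1) := by positivity
      nlinarith
  choose v hv1 hv2 using hE'
  have hbd : ∀ g, (fun n => v n - ρ g (v n)) ∈ bddSeq E := by
    intro g
    have hg : g ∈ Subgroup.closure (S : Set G) := hgen ▸ Subgroup.mem_top g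
    induction hg using Subgroup.closure_induction with
    | mem s hs =>
      have hws := hw.pos s hs
      refine ⟨√(1 / w s), fun n => ?_⟩
      apply Real.le_sqrt_of_sq_le
      rw [le_div_iff₀ hws, norm_sub_rev, mul_comm, ← hv1 n]
      exact Finset.single_le_sum (f := fun s => w s * ‖ρ s (v n) - v n‖ ^ 2)
        (fun t ht => mul_nonneg (hw.pos t ht).le (sq_nonneg _)) hs
    | one => exact ⟨0, fun n => by simp⟩
    | mul x y _ _ hx hy =>
      obtain ⟨C, hC⟩ := hx
      obtain ⟨D, hD⟩ := hy
      refine ⟨C + D, fun n => ?_⟩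
      have : v n - ρ (x * y) (v n) = (v n - ρ x (v n)) + ρ x (v n - ρ y (v n)) := by
        rw [map_mul, map_sub, LinearIsometryEquiv.coe_mul, Function.comp_apply]
        abel
      simp only [this]
      refine (norm_add_le _ _).trans (add_le_add (hC n) ?_)
      rw [LinearIsometryEquiv.norm_map]
      exact hD n
    | inv x _ hx =>
      obtain ⟨C, hC⟩ := hx
      refine ⟨C, fun n => ?_⟩
      have h1 : ρ x (ρ x⁻¹ (v n)) = v n := by
        change (ρ x * ρ x⁻¹) (v n) = _
        rw [← map_mul]
        simp
      have h2 := hC n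
      change ‖v n - ρ x (v n)‖ ≤ C at h2
      change ‖v n - ρ x⁻¹ (v n)‖ ≤ C
      rwa [← (ρ x).norm_map (v n - ρ x⁻¹ (v n)), map_sub, h1, norm_sub_rev]
  let U : Ultrafilter ℕ := Filter.hyperfilter ℕ
  have hU : (U : Filter ℕ) ≤ Filter.atTop := by
    rw [← Nat.cofinite_eq_atTop]
    exact Filter.hyperfilter_le_cofinite
  obtain ⟨H, j1, j2, j3, π, ι, hι, hπ⟩ := exists_ultraproduct ρ U
  let b0 : G → bddSeq E := fun g => ⟨fun n => v n - ρ g (v n), hbd g⟩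
  refine ⟨H, j1, j2, j3, π, fun g => ι (b0 g), ⟨fun x y => ?_, ?_⟩, ?_⟩
  · rw [← sub_eq_iff_eq_add', ← map_sub]
    symm
    apply hπ
    intro n
    change v n - ρ (x * y) (v n) - (v n - ρ x (v n)) = ρ x (v n - ρ y (v n))
    rw [map_mul, map_sub, LinearIsometryEquiv.coe_mul, Function.comp_apply]
    abel
  · simp only [← map_smul, ← map_sum]
    rw [← inner_self_eq_zero (𝕜 := ℝ), hι]
    apply ulim_eq
    refine squeeze_zero (fun n => real_inner_self_nonneg) (fun n => ?_)
      (tendsto_one_div_add_atTop_nhds_zero_nat.mono_left hU)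
    refine le_trans (le_of_eq ?_) (hv2 n)
    rw [← real_inner_self_eq_norm_sq]
    have h1 : (∑ s ∈ S, w s • b0 s : bddSeq E).1 n = v n - avg S w ρ (v n) := by
      rw [Submodule.coe_sum, Finset.sum_apply, avg_apply]
      change ∑ s ∈ S, w s • (v n - ρ s (v n)) = _
      simp only [smul_sub, Finset.sum_sub_distrib]
      rw [← Finset.sum_smul, hw.sum_eq, one_smul]
    rw [h1]
  · have h1 : Filter.Tendsto (fun n => ∑ s ∈ S, w s * ⟪(b0 s).1 n, (b0 s).1 n⟫) U
        (nhds (∑ s ∈ S, w s * ‖ι (b0 s)‖ ^ 2)) := by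
      refine tendsto_finsetSum _ fun s _ => Filter.Tendsto.const_mul _ ?_
      rw [← real_inner_self_eq_norm_sq, hι]
      exact tendsto_inner_bddSeq U _ _
    refine tendsto_nhds_unique (h1.congr fun n => ?_) tendsto_const_nhds
    rw [← hv1 n]
    refine Finset.sum_congr rfl fun s _ => ?_
    rw [real_inner_self_eq_norm_sq, norm_sub_rev]

end PolyGrowth

/-! ### The top eigenspace of a positive operator of finite trace -/

namespace PolyGrowth

open Finset

universe u

section TraceClass

variable {H : Type u} [NormedAddCommGroup H] [InnerProductSpace ℝ H]
  {A : H →L[ℝ] H}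

/-- The Cauchy–Schwarz inequality for a positive form, evaluated at `x` and `A x`. -/
theorem norm_sq_le_of_pos (hsym : ∀ x y, inner ℝ (A x) y = inner ℝ x (A y))
    (hpos : ∀ x, 0 ≤ inner ℝ (A x) x) (hA : 0 < ‖A‖) (x : H) :
    ‖A x‖ ^ 2 ≤ ‖A‖ * inner ℝ (A x) x := by
  have h1 := hpos (x - ‖A‖⁻¹ • A x)
  have h2 : inner ℝ (A (A x)) (A x) ≤ ‖A‖ * ‖A x‖ ^ 2 := by
    calc inner ℝ (A (A x)) (A x) ≤ ‖A (A x)‖ * ‖A x‖ := real_inner_le_norm _ _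
      _ ≤ (‖A‖ * ‖A x‖) * ‖A x‖ := by gcongr; exact A.le_opNorm _
      _ = _ := by ring
  have h3 : inner ℝ (A (x - ‖A‖⁻¹ • A x)) (x - ‖A‖⁻¹ • A x) =
      inner ℝ (A x) x - 2 * ‖A‖⁻¹ * ‖A x‖ ^ 2 + ‖A‖⁻¹ ^ 2 * inner ℝ (A (A x)) (A x) := by
    rw [map_sub, map_smul, inner_sub_left, inner_sub_right, inner_sub_right, inner_smul_left,
      inner_smul_right, inner_smul_left, inner_smul_right, hsym (A x) x,
      real_inner_self_eq_norm_sq]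
    simp only [RCLike.conj_to_real]
    ring
  rw [h3] at h1
  have h4 : ‖A‖⁻¹ ^ 2 * inner ℝ (A (A x)) (A x) ≤ ‖A‖⁻¹ * ‖A x‖ ^ 2 := by
    calc _ ≤ ‖A‖⁻¹ ^ 2 * (‖A‖ * ‖A x‖ ^ 2) := by gcongr
      _ = _ := by field_simp
  have h5 : ‖A‖⁻¹ * ‖A x‖ ^ 2 ≤ inner ℝ (A x) x := by linarith
  calc ‖A x‖ ^ 2 = ‖A‖ * (‖A‖⁻¹ * ‖A x‖ ^ 2) := by field_simp
    _ ≤ _ := by gcongr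

theorem norm_sub_smul_sq_le (hsym : ∀ x y, inner ℝ (A x) y = inner ℝ x (A y))
    (hpos : ∀ x, 0 ≤ inner ℝ (A x) x) (hA : 0 < ‖A‖) (x : H) :
    ‖A x - ‖A‖ • x‖ ^ 2 ≤ ‖A‖ * (‖A‖ * ‖x‖ ^ 2 - inner ℝ (A x) x) := by
  rw [norm_sub_sq_real, inner_smul_right, norm_smul, norm_norm]
  have := norm_sq_le_of_pos hsym hpos hA x
  linarith [mul_pow ‖A‖ ‖x‖ 2]

/-- `A` is a norm limit of the finite rank operators `A P`, where `P` projects onto the span of a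
finite orthonormal set carrying almost all of the trace. -/
theorem isCompactOperator_of_trace [CompleteSpace H]
    (hsym : ∀ x y, inner ℝ (A x) y = inner ℝ x (A y))
    (hpos : ∀ x, 0 ≤ inner ℝ (A x) x) (hA : 0 < ‖A‖) {c : ℝ}
    (htr : ∀ s : Finset H, Orthonormal ℝ ((↑) : s → H) → ∑ x ∈ s, inner ℝ (A x) x ≤ c) :
    IsCompactOperator A := by
  classical
  have key : ∀ ε : ℝ, 0 < ε → ∃ B : H →L[ℝ] H, IsCompactOperator B ∧ ‖A - B‖ ≤ √(‖A‖ * ε) := by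
    intro ε hε
    let T : Set ℝ := {t | ∃ s : Finset H, Orthonormal ℝ ((↑) : s → H) ∧
      t = ∑ x ∈ s, inner ℝ (A x) x}
    have hT0 : T.Nonempty := ⟨_, ∅, by
      constructor
      · intro i; exact absurd i.2 (Finset.notMem_empty _)
      · intro i; exact absurd i.2 (Finset.notMem_empty _), rfl⟩
    have hTb : BddAbove T := ⟨c, by rintro _ ⟨s, hs, rfl⟩; exact htr s hs⟩
    obtain ⟨_, ⟨s, hs, rfl⟩, hlt⟩ := exists_lt_of_lt_csSup hT0 (sub_lt_self (sSup T) hε)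
    let F : Submodule ℝ H := Submodule.span ℝ (s : Set H)
    have : FiniteDimensional ℝ F := FiniteDimensional.span_finset ℝ s
    have hun : ∀ u ∈ Fᗮ, ‖u‖ = 1 → inner ℝ (A u) u ≤ ε := by
      intro u hu hu1
      have hperp : ∀ x ∈ s, inner ℝ x u = 0 := fun x hx =>
        (Submodule.mem_orthogonal F u).1 hu x (Submodule.subset_span hx)
      have hus : u ∉ s := by
        intro h
        have := hperp u h
        rw [real_inner_self_eq_norm_sq, hu1] at this
        norm_num at this
      have hon : Orthonormal ℝ (Subtype.val : {x // x ∈ insert u s} → H) := by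
        constructor
        · rintro ⟨x, hx⟩
          rcases Finset.mem_insert.1 hx with rfl | hx
          · exact hu1
          · exact hs.1 ⟨x, hx⟩
        · rintro ⟨x, hx⟩ ⟨y, hy⟩ hxy
          have hxy' : x ≠ y := fun h => hxy (Subtype.ext h)
          change inner ℝ x y = 0
          rcases Finset.mem_insert.1 hx with hxu | hxs
          · rcases Finset.mem_insert.1 hy with hyu | hys
            · exact absurd (hxu.trans hyu.symm) hxy'
            · rw [hxu, real_inner_comm]
              exact hperp y hys
          · rcases Finset.mem_insert.1 hy with hyu | hys
            · rw [hyu]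
              exact hperp x hxs
            · exact hs.2 (i := ⟨x, hxs⟩) (j := ⟨y, hys⟩) (fun h => hxy' (congrArg Subtype.val h))
      have h1 := le_csSup hTb ⟨insert u s, hon, rfl⟩
      rw [Finset.sum_insert hus] at h1
      linarith
    have hperp : ∀ u ∈ Fᗮ, ‖A u‖ ≤ √(‖A‖ * ε) * ‖u‖ := by
      intro u hu
      by_cases h0 : u = 0
      · simp [h0]
      have h1 := hun (‖u‖⁻¹ • u) (Submodule.smul_mem _ _ hu) (norm_smul_inv_norm (𝕜 := ℝ) h0)
      have hu0 : 0 < ‖u‖ := norm_pos_iff.2 h0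
      rw [map_smul, inner_smul_left, inner_smul_right] at h1
      simp only [RCLike.conj_to_real] at h1
      have h2 : inner ℝ (A u) u ≤ ε * ‖u‖ ^ 2 := by
        calc inner ℝ (A u) u = (‖u‖⁻¹ * (‖u‖⁻¹ * inner ℝ (A u) u)) * ‖u‖ ^ 2 := by field_simp
          _ ≤ _ := by gcongr
      refine le_of_sq_le_sq ?_ (by positivity)
      rw [mul_pow, Real.sq_sqrt (by positivity)]
      calc ‖A u‖ ^ 2 ≤ ‖A‖ * inner ℝ (A u) u := norm_sq_le_of_pos hsym hpos hA u
        _ ≤ ‖A‖ * (ε * ‖u‖ ^ 2) := by gcongr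
        _ = _ := by ring
    refine ⟨A.comp F.starProjection, ?_, ?_⟩
    · have h1 : IsCompactOperator (A.comp F.subtypeL) :=
        isCompactOperator_of_locallyCompactSpace_rng (A.comp F.subtypeL)
      have h2 := h1.comp_clm F.orthogonalProjectionOnto
      exact h2
    · refine ContinuousLinearMap.opNorm_le_bound _ (Real.sqrt_nonneg _) fun v => ?_
      have h1 : (A - A.comp F.starProjection) v = A (v - F.starProjection v) := by simp
      rw [h1]
      have h2 : v - F.starProjection v ∈ Fᗮ := F.sub_starProjection_mem_orthogonal v
      refine (hperp _ h2).trans ?_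
      gcongr
      have h3 : inner ℝ (F.starProjection v) (v - F.starProjection v) = 0 :=
        (Submodule.mem_orthogonal F _).1 h2 _ (by simp)
      have h4 := norm_add_sq_real (F.starProjection v) (v - F.starProjection v)
      rw [h3, add_sub_cancel] at h4
      nlinarith [norm_nonneg v, norm_nonneg (v - F.starProjection v), sq_nonneg ‖F.starProjection v‖]
  choose B hB hAB using fun n : ℕ => key (1 / ((n : ℝ) + 1)) (by positivity)
  refine isCompactOperator_of_tendsto (l := Filter.atTop) (F := B) (f := A) ?_
    (Filter.Eventually.of_forall hB)
  rw [tendsto_iff_norm_sub_tendsto_zero]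
  have h1 : Filter.Tendsto (fun n : ℕ => √(‖A‖ * (1 / ((n : ℝ) + 1)))) Filter.atTop
      (nhds (√(‖A‖ * 0))) :=
    (Real.continuous_sqrt.tendsto _).comp (tendsto_one_div_add_atTop_nhds_zero_nat.const_mul _)
  rw [mul_zero, Real.sqrt_zero] at h1
  exact squeeze_zero (fun _ => norm_nonneg _) (fun n => (norm_sub_rev _ _).trans_le (hAB n)) h1

/-- The top eigenspace, characterized by attaining the norm of `A` in the quadratic form. It is nonzero,
since otherwise the Fredholm alternative bounds `A v - ‖A‖ v` below by a multiple of `v`, which forces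
`A` to have norm strictly smaller than `‖A‖`. -/
theorem exists_top_eigenspace [CompleteSpace H]
    (hsym : ∀ x y, inner ℝ (A x) y = inner ℝ x (A y))
    (hpos : ∀ x, 0 ≤ inner ℝ (A x) x) (hA : 0 < ‖A‖) {c : ℝ}
    (htr : ∀ s : Finset H, Orthonormal ℝ ((↑) : s → H) → ∑ x ∈ s, inner ℝ (A x) x ≤ c) :
    ∃ E : Submodule ℝ H, FiniteDimensional ℝ E ∧ E ≠ ⊥ ∧
      ∀ x, x ∈ E ↔ ‖A‖ * ‖x‖ ^ 2 ≤ inner ℝ (A x) x := by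
  have hc := isCompactOperator_of_trace hsym hpos hA htr
  refine ⟨Module.End.eigenspace (A : H →ₗ[ℝ] H) ‖A‖,
    ContinuousLinearMap.finite_dimensional_eigenspace hc _ hA.ne', ?_, fun x => ?_⟩
  · intro hbot
    obtain ⟨K, hK⟩ := IsCompactOperator.antilipschitz_of_not_hasEigenvalue hc hA.ne' (fun h => h hbot)
    have h1 : ∀ v, ‖v‖ ^ 2 ≤ K ^ 2 * (‖A‖ ^ 2 * ‖v‖ ^ 2 - ‖A v‖ ^ 2) := by
      intro v
      have h2 : ‖v‖ ≤ K * ‖A v - ‖A‖ • v‖ := by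
        have := hK.le_mul_dist v 0
        simpa using this
      have h3 := norm_sub_smul_sq_le hsym hpos hA v
      have h4 := norm_sq_le_of_pos hsym hpos hA v
      calc ‖v‖ ^ 2 ≤ (K * ‖A v - ‖A‖ • v‖) ^ 2 := by gcongr
        _ = K ^ 2 * ‖A v - ‖A‖ • v‖ ^ 2 := by ring
        _ ≤ _ := by gcongr; linarith
    have hK0 : 0 < (K : ℝ) ^ 2 := by
      by_contra h
      have h0 : (K : ℝ) ^ 2 = 0 := le_antisymm (not_lt.1 h) (sq_nonneg _)
      have : A = 0 := by
        ext v
        have := h1 v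
        rw [h0, zero_mul] at this
        have : ‖v‖ = 0 := by nlinarith [norm_nonneg v]
        simp [norm_eq_zero.1 this]
      simp [this] at hA
    have h2 : ∀ v, ‖A v‖ ^ 2 ≤ (‖A‖ ^ 2 - 1 / (K : ℝ) ^ 2) * ‖v‖ ^ 2 := by
      intro v
      have h3 := h1 v
      have : 1 / (K : ℝ) ^ 2 * ‖v‖ ^ 2 ≤ ‖A‖ ^ 2 * ‖v‖ ^ 2 - ‖A v‖ ^ 2 := by
        calc _ ≤ 1 / (K : ℝ) ^ 2 * (K ^ 2 * (‖A‖ ^ 2 * ‖v‖ ^ 2 - ‖A v‖ ^ 2)) := by gcongr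
          _ = _ := by rw [one_div, inv_mul_cancel_left₀ hK0.ne']
      linarith
    set r := ‖A‖ ^ 2 - 1 / (K : ℝ) ^ 2 with hr
    have h3 : ‖A‖ ≤ √(max r 0) := by
      refine ContinuousLinearMap.opNorm_le_bound _ (Real.sqrt_nonneg _) fun v => ?_
      refine le_of_sq_le_sq ?_ (by positivity)
      rw [mul_pow, Real.sq_sqrt (le_max_right _ _)]
      refine (h2 v).trans ?_
      gcongr
      exact le_max_left _ _
    have h4 : ‖A‖ ^ 2 ≤ max r 0 := by
      calc ‖A‖ ^ 2 ≤ √(max r 0) ^ 2 := by gcongr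
        _ = _ := Real.sq_sqrt (le_max_right _ _)
    have h5 : r < ‖A‖ ^ 2 := by rw [hr]; have : 0 < 1 / (K : ℝ) ^ 2 := by positivity
                                linarith
    have h6 : 0 < ‖A‖ ^ 2 := by positivity
    exact absurd h4 (not_le.2 (max_lt h5 h6))
  · rw [Module.End.mem_eigenspace_iff]
    change A x = ‖A‖ • x ↔ _
    constructor
    · intro h
      rw [h, inner_smul_left, real_inner_self_eq_norm_sq]
      rfl
    · intro h
      have h1 := norm_sub_smul_sq_le hsym hpos hA x
      have h2 : ‖A‖ * (‖A‖ * ‖x‖ ^ 2 - inner ℝ (A x) x) ≤ 0 :=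
        mul_nonpos_of_nonneg_of_nonpos hA.le (by linarith)
      have h3 : ‖A x - ‖A‖ • x‖ = 0 := by nlinarith [norm_nonneg (A x - ‖A‖ • x)]
      exact sub_eq_zero.1 (norm_eq_zero.1 h3)

end TraceClass

end PolyGrowth

/-! ### Second moments of a harmonic cocycle -/

namespace PolyGrowth

open Finset

universe u v

local notation "⟪" x "," y "⟫" => inner ℝ x y

section Moments

variable {G : Type u} [Group G] {S : Finset G} {w : G → ℝ}

theorem Ex_sum (n : ℕ) {ι : Type*} (t : Finset ι) (F : ι → G → ℝ) :
    Ex S w n (fun x => ∑ i ∈ t, F i x) = ∑ i ∈ t, Ex S w n (F i) := by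
  classical
  induction t using Finset.induction_on with
  | empty => simpa using Ex_mul S w n 0 (fun _ => 0)
  | insert i t hi ih =>
    simp only [Finset.sum_insert hi]
    rw [Ex_add, ih]

variable {H : Type v} [NormedAddCommGroup H] [InnerProductSpace ℝ H]
  {π : G →* (H ≃ₗᵢ[ℝ] H)} {b : G → H}

theorem IsHarmonic.map_one (hb : IsHarmonic S w π b) : b 1 = 0 := by
  have := hb.map_mul 1 1
  rw [mul_one, _root_.map_one] at this
  simpa using this

theorem IsHarmonic.inner_mul (hb : IsHarmonic S w π b) (s x : G) (v : H) :
    ⟪b (s * x), v⟫ = ⟪b s, v⟫ + ⟪b x, π s⁻¹ v⟫ := by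
  rw [hb.map_mul, inner_add_left, inner_rep_left π]

theorem IsHarmonic.sum_inner (hb : IsHarmonic S w π b) (v : H) :
    ∑ s ∈ S, w s * ⟪b s, v⟫ = 0 := by
  have : ⟪∑ s ∈ S, w s • b s, v⟫ = 0 := by rw [hb.harm, inner_zero_left]
  rw [_root_.sum_inner] at this
  rw [← this]
  exact Finset.sum_congr rfl fun s _ => by rw [inner_smul_left]; rfl

/-- The martingale property of the cocycle along the random walk. -/
theorem IsHarmonic.Ex_inner (hw : IsWeight S w) (hb : IsHarmonic S w π b) (n : ℕ) (v : H) :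
    Ex S w n (fun x => ⟪b x, v⟫) = 0 := by
  induction n generalizing v with
  | zero => simp [Ex, hb.map_one]
  | succ n ih =>
    simp only [Ex, hb.inner_mul]
    rw [← hb.sum_inner v]
    refine Finset.sum_congr rfl fun s _ => ?_
    rw [Ex_add, Ex_const hw, ih, add_zero]

variable (S w b) in
/-- The second moment of `b` in the direction `v` after `n` steps of the random walk. -/
noncomputable def mom (n : ℕ) (v : H) : ℝ := Ex S w n fun x => ⟪b x, v⟫ ^ 2

theorem IsHarmonic.Ex_sq_mul (hw : IsWeight S w) (hb : IsHarmonic S w π b) (n : ℕ) (s : G)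
    (v : H) :
    Ex S w n (fun x => ⟪b (s * x), v⟫ ^ 2) = ⟪b s, v⟫ ^ 2 + mom S w b n (π s⁻¹ v) := by
  have h1 : ∀ x, ⟪b (s * x), v⟫ ^ 2 =
      (⟪b s, v⟫ ^ 2 + (2 * ⟪b s, v⟫) * ⟪b x, π s⁻¹ v⟫) + ⟪b x, π s⁻¹ v⟫ ^ 2 := by
    intro x
    rw [hb.inner_mul]
    ring
  simp only [h1]
  rw [Ex_add, Ex_add, Ex_const hw, Ex_mul, hb.Ex_inner hw, mul_zero, add_zero]
  rfl

theorem IsHarmonic.mom_zero (hb : IsHarmonic S w π b) (v : H) : mom S w b 0 v = 0 := by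
  simp [mom, Ex, hb.map_one]

theorem IsHarmonic.mom_succ (hw : IsWeight S w) (hb : IsHarmonic S w π b) (n : ℕ) (v : H) :
    mom S w b (n + 1) v = ∑ s ∈ S, w s * (⟪b s, v⟫ ^ 2 + mom S w b n (π s⁻¹ v)) := by
  simp only [mom, Ex]
  exact Finset.sum_congr rfl fun s _ => by rw [hb.Ex_sq_mul hw]; rfl

theorem IsHarmonic.Ex_norm_sq (hw : IsWeight S w) (hb : IsHarmonic S w π b) (n : ℕ) :
    Ex S w n (fun x => ‖b x‖ ^ 2) = n * ∑ s ∈ S, w s * ‖b s‖ ^ 2 := by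
  induction n with
  | zero => simp [Ex, hb.map_one]
  | succ n ih =>
    have h1 : ∀ s ∈ S, w s * Ex S w n (fun x => ‖b (s * x)‖ ^ 2) =
        w s * ‖b s‖ ^ 2 + w s * (n * ∑ s ∈ S, w s * ‖b s‖ ^ 2) := by
      intro s _
      have h2 : ∀ x, ‖b (s * x)‖ ^ 2 = (‖b s‖ ^ 2 + 2 * ⟪b x, π s⁻¹ (b s)⟫) + ‖b x‖ ^ 2 := by
        intro x
        rw [hb.map_mul, norm_add_sq_real, LinearIsometryEquiv.norm_map, ← inner_rep_left π,
          real_inner_comm]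
      simp only [h2]
      rw [Ex_add, Ex_add, Ex_const hw, Ex_mul, hb.Ex_inner hw, ih]
      ring
    simp only [Ex]
    rw [Finset.sum_congr rfl h1, Finset.sum_add_distrib, ← Finset.sum_mul, hw.sum_eq]
    push_cast
    ring

theorem mom_nonneg (hw : IsWeight S w) (n : ℕ) (v : H) : 0 ≤ mom S w b n v :=
  Ex_nonneg hw n fun _ => sq_nonneg _

theorem norm_rep {g : G} (v : H) : ‖π g v‖ = ‖v‖ := LinearIsometryEquiv.norm_map _ _

theorem sum_inner_sq_nonneg (hw : IsWeight S w) (v : H) : 0 ≤ ∑ s ∈ S, w s * ⟪b s, v⟫ ^ 2 :=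
  Finset.sum_nonneg fun s hs => mul_nonneg (hw.pos s hs).le (sq_nonneg _)

theorem sum_inner_sq_le (hw : IsWeight S w) (v : H) :
    ∑ s ∈ S, w s * ⟪b s, v⟫ ^ 2 ≤ (∑ s ∈ S, w s * ‖b s‖ ^ 2) * ‖v‖ ^ 2 := by
  rw [Finset.sum_mul]
  refine Finset.sum_le_sum fun s hs => ?_
  rw [mul_assoc, ← mul_pow]
  refine mul_le_mul_of_nonneg_left ?_ (hw.pos s hs).le
  exact sq_le_sq.2 ((abs_real_inner_le_norm _ _).trans (le_abs_self _))

/-- The increments of the second moments are uniformly bounded. -/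
theorem IsHarmonic.mom_diff (hw : IsWeight S w) (hb : IsHarmonic S w π b) (n : ℕ) (v : H) :
    0 ≤ mom S w b (n + 1) v - mom S w b n v ∧
      mom S w b (n + 1) v - mom S w b n v ≤ (∑ s ∈ S, w s * ‖b s‖ ^ 2) * ‖v‖ ^ 2 := by
  induction n generalizing v with
  | zero =>
    rw [hb.mom_succ hw]
    simp only [hb.mom_zero, add_zero, sub_zero]
    exact ⟨sum_inner_sq_nonneg hw v, sum_inner_sq_le hw v⟩
  | succ n ih =>
    have h1 : mom S w b (n + 1 + 1) v - mom S w b (n + 1) v =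
        ∑ s ∈ S, w s * (mom S w b (n + 1) (π s⁻¹ v) - mom S w b n (π s⁻¹ v)) := by
      rw [hb.mom_succ hw (n + 1), hb.mom_succ hw n, ← Finset.sum_sub_distrib]
      exact Finset.sum_congr rfl fun s _ => by ring
    rw [h1]
    constructor
    · exact Finset.sum_nonneg fun s hs => mul_nonneg (hw.pos s hs).le (ih _).1
    · calc _ ≤ ∑ s ∈ S, w s * ((∑ s ∈ S, w s * ‖b s‖ ^ 2) * ‖v‖ ^ 2) := by
            refine Finset.sum_le_sum fun s hs => ?_
            refine mul_le_mul_of_nonneg_left ?_ (hw.pos s hs).le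
            have := (ih (π s⁻¹ v)).2
            rwa [norm_rep] at this
        _ = _ := by rw [← Finset.sum_mul, hw.sum_eq, one_mul]

end Moments

section Operator

variable {G : Type u} [Group G] {S : Finset G} {w : G → ℝ}
  {H : Type u} [NormedAddCommGroup H] [InnerProductSpace ℝ H]
  {π : G →* (H ≃ₗᵢ[ℝ] H)} {b : G → H}

variable (S w b) in
/-- The normalized mixed second moments of `b` in the directions `u` and `v`. -/
noncomputable def cov (u v : H) (n : ℕ) : ℝ := Ex S w n (fun x => ⟪b x, u⟫ * ⟪b x, v⟫) / (n + 1)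

theorem cov_self (v : H) (n : ℕ) : cov S w b v v n = mom S w b n v / (n + 1) := by
  simp only [cov, mom, sq]

theorem IsHarmonic.abs_cov_le (hw : IsWeight S w) (hb : IsHarmonic S w π b) (u v : H) (n : ℕ) :
    |cov S w b u v n| ≤ (∑ s ∈ S, w s * ‖b s‖ ^ 2) * ‖u‖ * ‖v‖ := by
  set c := ∑ s ∈ S, w s * ‖b s‖ ^ 2 with hc
  have hc0 : 0 ≤ c := Finset.sum_nonneg fun s hs => mul_nonneg (hw.pos s hs).le (sq_nonneg _)
  have h1 : ∀ x, |⟪b x, u⟫ * ⟪b x, v⟫| ≤ (‖u‖ * ‖v‖) * ‖b x‖ ^ 2 := by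
    intro x
    rw [abs_mul]
    calc |⟪b x, u⟫| * |⟪b x, v⟫| ≤ (‖b x‖ * ‖u‖) * (‖b x‖ * ‖v‖) := by
          gcongr <;> exact abs_real_inner_le_norm _ _
      _ = _ := by ring
  have h2 := Ex_mono hw n (fun x => (le_abs_self _).trans (h1 x))
  have h3 := Ex_mono hw n (fun x => (abs_le.1 (h1 x)).1)
  rw [Ex_mul, hb.Ex_norm_sq hw, ← hc] at h2
  have h4 : Ex S w n (fun x => -((‖u‖ * ‖v‖) * ‖b x‖ ^ 2)) = -((‖u‖ * ‖v‖) * (n * c)) := by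
    have : ∀ x, -((‖u‖ * ‖v‖) * ‖b x‖ ^ 2) = (-(‖u‖ * ‖v‖)) * ‖b x‖ ^ 2 := fun x => by ring
    simp only [this]
    rw [Ex_mul, hb.Ex_norm_sq hw, ← hc]
    ring
  rw [h4] at h3
  have h5 := abs_le.2 ⟨h3, h2⟩
  have hn : (0 : ℝ) < n + 1 := by positivity
  rw [cov, abs_div, abs_of_pos hn, div_le_iff₀ hn]
  refine h5.trans ?_
  have : 0 ≤ c * ‖u‖ * ‖v‖ := by positivity
  nlinarith

theorem IsHarmonic.tendsto_cov (hw : IsWeight S w) (hb : IsHarmonic S w π b) (U : Ultrafilter ℕ)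
    (u v : H) : Filter.Tendsto (cov S w b u v) U (nhds (ulim U (cov S w b u v))) :=
  tendsto_ulim U (hb.abs_cov_le hw u v)

theorem cov_comm (u v : H) : cov S w b u v = cov S w b v u := by
  funext n
  simp only [cov, mul_comm]

theorem cov_add (u v v' : H) (n : ℕ) :
    cov S w b u (v + v') n = cov S w b u v n + cov S w b u v' n := by
  simp only [cov, inner_add_right, mul_add]
  rw [Ex_add, add_div]

theorem cov_smul (r : ℝ) (u v : H) (n : ℕ) :
    cov S w b u (r • v) n = r * cov S w b u v n := by
  simp only [cov, inner_smul_right, mul_left_comm _ r]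
  rw [Ex_mul, mul_div_assoc]

/-- The asymptotic covariance operator of a harmonic cocycle: it is positive of finite trace, its
quadratic form is harmonic, and, by the choice of good times, dominates the cocycle. -/
theorem IsHarmonic.exists_operator [CompleteSpace H] (hw : IsWeight S w)
    (hb : IsHarmonic S w π b) {d : ℕ} (h : PG G d) :
    ∃ A : H →L[ℝ] H, (∀ x y, ⟪A x, y⟫ = ⟪x, A y⟫) ∧ (∀ x, 0 ≤ ⟪A x, x⟫) ∧
      (∀ s : Finset H, Orthonormal ℝ ((↑) : s → H) →
        ∑ x ∈ s, ⟪A x, x⟫ ≤ ∑ s ∈ S, w s * ‖b s‖ ^ 2) ∧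
      (∀ v, ⟪A v, v⟫ = ∑ s ∈ S, w s * ⟪A (π s⁻¹ v), π s⁻¹ v⟫) ∧
      (∃ C : ℝ, ∀ s ∈ S, ∀ v, ⟪b s, v⟫ ^ 2 ≤ C * (⟪A (π s⁻¹ v), π s⁻¹ v⟫ + ⟪A v, v⟫)) ∧
      ∀ v, (∀ n, mom S w b n v = 0) → ⟪A v, v⟫ = 0 := by
  classical
  obtain ⟨C, hC, hfreq⟩ := exists_good_times hw h
  set good : Set ℕ := {n | ∀ s ∈ S, ∀ F : G → ℝ,
      (Ex S w n (fun x => F (s * x)) - Ex S w n F) ^ 2 ≤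
        C / (n + 1) * (Ex S w n (fun x => F (s * x) ^ 2) + Ex S w n fun x => F x ^ 2)} with hgood
  have hne : (Filter.atTop ⊓ Filter.principal good).NeBot := Filter.frequently_mem_iff_neBot.1 hfreq
  let U : Ultrafilter ℕ := Ultrafilter.of (Filter.atTop ⊓ Filter.principal good)
  have hU : (U : Filter ℕ) ≤ Filter.atTop ⊓ Filter.principal good := Ultrafilter.of_le _
  have hUtop : (U : Filter ℕ) ≤ Filter.atTop := hU.trans inf_le_left
  have hUgood : ∀ᶠ n in (U : Filter ℕ), n ∈ good :=
    Filter.le_principal_iff.1 (hU.trans inf_le_right)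
  set c := ∑ s ∈ S, w s * ‖b s‖ ^ 2 with hc
  let B0 : H →ₗ⋆[ℝ] H →ₗ[ℝ] ℝ := LinearMap.mk₂'ₛₗ (starRingEnd ℝ) (RingHom.id ℝ)
    (fun u v => ulim U (cov S w b u v))
    (fun u u' v => by
      rw [cov_comm (u + u'), cov_comm u, cov_comm u']
      exact ulim_eq (((hb.tendsto_cov hw U v u).add (hb.tendsto_cov hw U v u')).congr
        fun n => (cov_add _ _ _ n).symm))
    (fun r u v => by
      rw [cov_comm (r • u), cov_comm u]
      exact ulim_eq (((hb.tendsto_cov hw U v u).const_mul r).congr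
        fun n => (cov_smul _ _ _ n).symm))
    (fun u v v' => ulim_eq (((hb.tendsto_cov hw U u v).add (hb.tendsto_cov hw U u v')).congr
        fun n => (cov_add _ _ _ n).symm))
    (fun r u v => ulim_eq (((hb.tendsto_cov hw U u v).const_mul r).congr
        fun n => (cov_smul _ _ _ n).symm))
  have hB0 : ∀ u v, ‖B0 u v‖ ≤ c * ‖u‖ * ‖v‖ := fun u v =>
    le_of_tendsto (hb.tendsto_cov hw U u v).abs
      (Filter.Eventually.of_forall (hb.abs_cov_le hw u v))
  let A : H →L[ℝ] H := InnerProductSpace.continuousLinearMapOfBilin (B0.mkContinuous₂ c hB0)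
  have hA : ∀ u v, ⟪A u, v⟫ = ulim U (cov S w b u v) := fun u v =>
    InnerProductSpace.continuousLinearMapOfBilin_apply _ _ _
  have hlim : ∀ v, Filter.Tendsto (fun n : ℕ => mom S w b n v / (n + 1)) U (nhds ⟪A v, v⟫) := by
    intro v
    rw [hA]
    exact (hb.tendsto_cov hw U v v).congr (cov_self v)
  have hinv : Filter.Tendsto (fun n : ℕ => 1 / ((n : ℝ) + 1)) U (nhds 0) :=
    tendsto_one_div_add_atTop_nhds_zero_nat.mono_left hUtop
  refine ⟨A, fun x y => ?_, fun x => ?_, fun s hs => ?_, fun v => ?_, ⟨C, fun s hs v => ?_⟩,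
    fun v hv => ?_⟩
  · rw [real_inner_comm (A y) x, hA, hA, cov_comm]
  · exact ge_of_tendsto (hlim x) (Filter.Eventually.of_forall fun n =>
      div_nonneg (mom_nonneg hw n x) (by positivity))
  · refine le_of_tendsto (tendsto_finsetSum s fun x _ => hlim x)
      (Filter.Eventually.of_forall fun n => ?_)
    have hn : (0 : ℝ) < n + 1 := by positivity
    rw [← Finset.sum_div, div_le_iff₀ hn]
    have h1 : ∑ x ∈ s, mom S w b n x ≤ n * c := by
      rw [hc, ← hb.Ex_norm_sq hw]
      simp only [mom]
      rw [← Ex_sum]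
      refine Ex_mono hw n fun g => ?_
      have h2 := hs.sum_inner_products_le (x := b g) (s := Finset.univ)
      rw [← Finset.sum_coe_sort s]
      refine le_trans (le_of_eq ?_) h2
      refine Finset.sum_congr rfl fun x _ => ?_
      rw [real_inner_comm, Real.norm_eq_abs, sq_abs]
    have h3 : 0 ≤ c := Finset.sum_nonneg fun s hs => mul_nonneg (hw.pos s hs).le (sq_nonneg _)
    linarith
  · have h1 : Filter.Tendsto (fun n : ℕ => ∑ s ∈ S, w s * (mom S w b n (π s⁻¹ v) / (n + 1))) U
        (nhds (∑ s ∈ S, w s * ⟪A (π s⁻¹ v), π s⁻¹ v⟫)) :=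
      tendsto_finsetSum S fun s _ => (hlim _).const_mul _
    have h2 : Filter.Tendsto (fun n : ℕ => mom S w b n v / (n + 1) -
        ∑ s ∈ S, w s * (mom S w b n (π s⁻¹ v) / (n + 1))) U (nhds 0) := by
      set K := ∑ s ∈ S, w s * ⟪b s, v⟫ ^ 2 with hK
      have h3 : ∀ n : ℕ, mom S w b n v / (n + 1) -
          ∑ s ∈ S, w s * (mom S w b n (π s⁻¹ v) / (n + 1)) =
          (K - (mom S w b (n + 1) v - mom S w b n v)) * (1 / ((n : ℝ) + 1)) := by
        intro n
        rw [hb.mom_succ hw n v, hK]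
        simp only [mul_add, Finset.sum_add_distrib]
        have : ∑ s ∈ S, w s * (mom S w b n (π s⁻¹ v) / (n + 1)) =
            (∑ s ∈ S, w s * mom S w b n (π s⁻¹ v)) / (n + 1) := by
          rw [Finset.sum_div]
          exact Finset.sum_congr rfl fun s _ => by ring
        rw [this]
        ring
      simp only [h3]
      refine squeeze_zero_norm (a := fun n : ℕ => (K + c * ‖v‖ ^ 2) * (1 / ((n : ℝ) + 1)))
        (fun n => ?_) (by simpa using hinv.const_mul (K + c * ‖v‖ ^ 2))
      rw [norm_mul, Real.norm_eq_abs, Real.norm_eq_abs, abs_of_nonneg (a := 1 / ((n : ℝ) + 1))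
        (by positivity)]
      refine mul_le_mul_of_nonneg_right ?_ (by positivity)
      have hK0 : 0 ≤ K := sum_inner_sq_nonneg hw v
      obtain ⟨h4, h5⟩ := hb.mom_diff hw n v
      rw [abs_le]
      constructor <;> linarith
    have h3 := tendsto_nhds_unique h2 ((hlim v).sub h1)
    linarith
  · have h1 : Filter.Tendsto (fun n : ℕ => C * (⟪b s, v⟫ ^ 2 * (1 / ((n : ℝ) + 1)) +
        mom S w b n (π s⁻¹ v) / (n + 1) + mom S w b n v / (n + 1))) U
        (nhds (C * (⟪b s, v⟫ ^ 2 * 0 + ⟪A (π s⁻¹ v), π s⁻¹ v⟫ + ⟪A v, v⟫))) :=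
      (((hinv.const_mul _).add (hlim _)).add (hlim _)).const_mul C
    rw [mul_zero, zero_add] at h1
    refine ge_of_tendsto h1 (hUgood.mono fun n hn => ?_)
    have h2 := hn s hs (fun x => ⟪b x, v⟫)
    rw [hb.Ex_inner hw n v, hb.Ex_sq_mul hw n s v] at h2
    have h3 : Ex S w n (fun x => ⟪b (s * x), v⟫) = ⟪b s, v⟫ := by
      simp only [hb.inner_mul]
      rw [Ex_add, Ex_const hw, hb.Ex_inner hw, add_zero]
    rw [h3, sub_zero] at h2
    refine h2.trans (le_of_eq ?_)
    change C / (n + 1) * (_ + mom S w b n v) = _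
    ring
  · refine tendsto_nhds_unique (hlim v) ?_
    simp only [hv, zero_div]
    exact tendsto_const_nhds

end Operator

end PolyGrowth

/-! ### A finite-dimensional harmonic cocycle -/

namespace PolyGrowth

open Finset

universe u v

local notation "⟪" x "," y "⟫" => inner ℝ x y

section Restrict

variable {G : Type u} [Group G] {H : Type v} [NormedAddCommGroup H] [InnerProductSpace ℝ H]
  (π : G →* (H ≃ₗᵢ[ℝ] H)) (E : Submodule ℝ H) (hE : ∀ g, ∀ x ∈ E, π g x ∈ E)

/-- The restriction of an orthogonal representation to an invariant subspace. -/
noncomputable def subRep : G →* (E ≃ₗᵢ[ℝ] E) where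
  toFun g :=
    { toFun := fun x => ⟨π g x, hE g x x.2⟩
      invFun := fun x => ⟨π g⁻¹ x, hE g⁻¹ x x.2⟩
      map_add' := fun x y => Subtype.ext (by simp)
      map_smul' := fun r x => Subtype.ext (by simp)
      left_inv := fun x => Subtype.ext (by
        change (π g⁻¹ * π g) x = x
        rw [← map_mul]
        simp)
      right_inv := fun x => Subtype.ext (by
        change (π g * π g⁻¹) x = x
        rw [← map_mul]
        simp)
      norm_map' := fun x => (π g).norm_map x }
  map_one' := by
    ext x
    change (π 1) (x : H) = x
    simp
  map_mul' g h := by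
    ext x
    change (π (g * h)) (x : H) = π g (π h x)
    rw [map_mul]
    rfl

theorem subRep_coe (g : G) (x : E) : (subRep π E hE g x : H) = π g x := rfl

/-- The orthogonal projection of a harmonic cocycle to an invariant subspace is harmonic. -/
theorem IsHarmonic.project [FiniteDimensional ℝ E] {S : Finset G} {w : G → ℝ} {b : G → H}
    (hb : IsHarmonic S w π b) :
    IsHarmonic S w (subRep π E hE) (fun x => E.orthogonalProjectionOnto (b x)) where
  map_mul x y := by
    rw [hb.map_mul, map_add]
    congr 1
    refine ext_inner_right ℝ fun v => ?_
    rw [Submodule.inner_orthogonalProjectionOnto_eq_of_mem_right, inner_rep_left π,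
      inner_rep_left (subRep π E hE), Submodule.inner_orthogonalProjectionOnto_eq_of_mem_right]
    rfl
  harm := by
    have := congrArg E.orthogonalProjectionOnto hb.harm
    rw [map_sum, map_zero] at this
    rw [← this]
    exact Finset.sum_congr rfl fun s _ => (map_smul _ _ _).symm

end Restrict

/-- If the cocycle is orthogonal on the generators to an invariant set `E`, its second moments
vanish on `E`. -/
theorem mom_eq_zero {G : Type u} [Group G] {S : Finset G} {w : G → ℝ} (hw : IsWeight S w)
    {H : Type v} [NormedAddCommGroup H] [InnerProductSpace ℝ H]
    {π : G →* (H ≃ₗᵢ[ℝ] H)} {b : G → H} (hb : IsHarmonic S w π b) (E : Set H)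
    (hE : ∀ g, ∀ x ∈ E, π g x ∈ E) (h0 : ∀ s ∈ S, ∀ v ∈ E, ⟪b s, v⟫ = 0) (n : ℕ) :
    ∀ v ∈ E, mom S w b n v = 0 := by
  induction n with
  | zero => exact fun v _ => hb.mom_zero v
  | succ n ih =>
    intro v hv
    rw [hb.mom_succ hw]
    refine Finset.sum_eq_zero fun s hs => ?_
    rw [h0 s hs v hv, ih _ (hE _ v hv)]
    simp

/-- The top eigenspace of the asymptotic covariance operator carries a nontrivial harmonic
cocycle. -/
theorem exists_finiteDimensional_harmonic {G : Type u} [Group G] {S : Finset G} {w : G → ℝ}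
    (hw : IsWeight S w) (hgen : Subgroup.closure (S : Set G) = ⊤) {d : ℕ} (h : PG G d)
    [Infinite G] :
    ∃ (E : Type u) (_ : NormedAddCommGroup E) (_ : InnerProductSpace ℝ E)
      (_ : FiniteDimensional ℝ E) (ρ : G →* (E ≃ₗᵢ[ℝ] E)) (b : G → E),
      IsHarmonic S w ρ b ∧ 0 < ∑ s ∈ S, w s * ‖b s‖ ^ 2 := by
  obtain ⟨H, i1, i2, i3, π, b, hb, hb1⟩ := exists_harmonic hw hgen h
  obtain ⟨A, hsym, hpos, htr, havg, ⟨C, hC⟩, hmom⟩ := hb.exists_operator hw h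
  have hA : 0 < ‖A‖ := by
    rw [norm_pos_iff]
    rintro rfl
    have h0 : ∀ s ∈ S, b s = 0 := by
      intro s hs
      have := hC s hs (b s)
      simp only [zero_apply, inner_zero_left, add_zero, mul_zero] at this
      have h1 : ⟪b s, b s⟫ = 0 := by nlinarith
      exact inner_self_eq_zero.1 h1
    rw [Finset.sum_eq_zero fun s hs => by rw [h0 s hs]; simp] at hb1
    exact zero_ne_one hb1
  obtain ⟨E, hfd, hne, hmem⟩ := exists_top_eigenspace hsym hpos hA htr
  have hle : ∀ x, ⟪A x, x⟫ ≤ ‖A‖ * ‖x‖ ^ 2 := by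
    intro x
    calc ⟪A x, x⟫ ≤ ‖A x‖ * ‖x‖ := real_inner_le_norm _ _
      _ ≤ (‖A‖ * ‖x‖) * ‖x‖ := by
          gcongr
          exact A.le_opNorm x
      _ = _ := by ring
  -- equality in an average of quantities bounded by `‖A‖ * ‖x‖ ^ 2`
  have hS : ∀ s ∈ S, ∀ x ∈ E, π s⁻¹ x ∈ E := by
    intro s hs x hx
    rw [hmem] at hx ⊢
    rw [norm_rep]
    have h1 : ∀ t ∈ S, w t * ⟪A (π t⁻¹ x), π t⁻¹ x⟫ ≤ w t * (‖A‖ * ‖x‖ ^ 2) := by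
      intro t ht
      refine mul_le_mul_of_nonneg_left ?_ (hw.pos t ht).le
      have := hle (π t⁻¹ x)
      rwa [norm_rep] at this
    have h2 : ∑ t ∈ S, w t * ⟪A (π t⁻¹ x), π t⁻¹ x⟫ = ∑ t ∈ S, w t * (‖A‖ * ‖x‖ ^ 2) := by
      refine le_antisymm (Finset.sum_le_sum h1) ?_
      rw [← havg, ← Finset.sum_mul, hw.sum_eq, one_mul]
      exact hx
    have h3 := (Finset.sum_eq_sum_iff_of_le h1).1 h2 s hs
    exact (mul_left_cancel₀ (hw.pos s hs).ne' h3).ge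
  have hS' : ∀ s ∈ S, ∀ x ∈ E, π s x ∈ E := by
    intro s hs x hx
    have := hS s⁻¹ (hw.inv_mem s hs) x hx
    rwa [inv_inv] at this
  have hE : ∀ g, ∀ x ∈ E, π g x ∈ E := by
    have key : ∀ g ∈ Subgroup.closure (S : Set G), ∀ x ∈ E, π g x ∈ E ∧ π g⁻¹ x ∈ E := by
      intro g hg
      induction hg using Subgroup.closure_induction with
      | mem s hs => exact fun x hx => ⟨hS' s hs x hx, hS s hs x hx⟩
      | one => intro x hx; simpa using hx
      | mul g k _ _ ihg ihk =>
        intro x hx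
        rw [mul_inv_rev, map_mul, map_mul]
        exact ⟨(ihg _ (ihk x hx).1).1, (ihk _ (ihg x hx).2).2⟩
      | inv g _ ih =>
        intro x hx
        rw [inv_inv]
        exact (ih x hx).symm
    exact fun g x hx => (key g (hgen ▸ Subgroup.mem_top g) x hx).1
  refine ⟨E, inferInstance, inferInstance, hfd, subRep π E hE, _, hb.project π E hE, ?_⟩
  have hnn : ∀ s ∈ S, 0 ≤ w s * ‖E.orthogonalProjectionOnto (b s)‖ ^ 2 :=
    fun s hs => mul_nonneg (hw.pos s hs).le (sq_nonneg _)
  refine lt_of_le_of_ne (Finset.sum_nonneg hnn) fun h0 => hne ?_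
  have h1 := (Finset.sum_eq_zero_iff_of_nonneg hnn).1 h0.symm
  have h2 : ∀ s ∈ S, ∀ v ∈ (E : Set H), ⟪b s, v⟫ = 0 := by
    intro s hs v hv
    have h3 : E.orthogonalProjectionOnto (b s) = 0 := by
      have := (mul_eq_zero.1 (h1 s hs)).resolve_left (hw.pos s hs).ne'
      exact norm_eq_zero.1 (pow_eq_zero_iff two_ne_zero |>.1 this)
    have h4 := Submodule.inner_orthogonalProjectionOnto_eq_of_mem_right (K := E) ⟨v, hv⟩ (b s)
    rw [h3, inner_zero_left] at h4
    exact h4.symm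
  rw [Submodule.eq_bot_iff]
  intro v hv
  have h3 := hmom v fun n => mom_eq_zero hw hb (E : Set H) hE h2 n v hv
  have h4 := (hmem v).1 hv
  rw [h3] at h4
  by_contra hv0
  have : 0 < ‖A‖ * ‖v‖ ^ 2 := by
    have := norm_pos_iff.2 hv0
    positivity
  linarith

end PolyGrowth

/-! ### Gromov's theorem -/

namespace PolyGrowth

open Finset

universe u v

/-- If the linear part has finite image, the cocycle restricts to an unbounded homomorphism from a
subgroup of finite index to a vector space. -/
theorem VZ.of_harmonic_finite {G : Type u} [Group G] [Group.FG G] {S : Finset G} {w : G → ℝ}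
    (hw : IsWeight S w) {E : Type v} [NormedAddCommGroup E] [InnerProductSpace ℝ E]
    {ρ : G →* (E ≃ₗᵢ[ℝ] E)} {b : G → E} (hb : IsHarmonic S w ρ b)
    (hb0 : 0 < ∑ s ∈ S, w s * ‖b s‖ ^ 2) (hfin : Finite ρ.range) : VZ G := by
  have hq : Finite (G ⧸ ρ.ker) :=
    Finite.of_equiv _ (QuotientGroup.quotientKerEquivRange ρ).symm.toEquiv
  have hfi : ρ.ker.FiniteIndex := Subgroup.finiteIndex_of_finite_quotient
  have hmul : ∀ x y, ρ x = 1 → b (x * y) = b x + b y := by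
    intro x y hx
    rw [hb.map_mul, hx]
    rfl
  let f : ρ.ker →* Multiplicative E :=
    { toFun := fun x => Multiplicative.ofAdd (b x)
      map_one' := congrArg Multiplicative.ofAdd hb.map_one
      map_mul' := fun x y => congrArg Multiplicative.ofAdd (hmul x y x.2) }
  refine VZ.of_subgroup ρ.ker ?_
  have hfg : Group.FG ρ.ker := inferInstance
  by_cases hf : Infinite f.range
  · obtain ⟨g, hg⟩ := exists_onto_int f hf
    refine ⟨⊤, inferInstance, g.comp Subgroup.topEquiv.toMonoidHom, hg.comp (MulEquiv.surjective _)⟩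
  exfalso
  rw [not_infinite_iff_finite] at hf
  choose t ht using fun y : ρ.range => y.2
  -- `b` takes finitely many values, hence is bounded
  have hb1 : Set.range b ⊆ Set.range fun p : f.range × ρ.range => p.1.1.toAdd + b (t p.2) := by
    rintro _ ⟨g, rfl⟩
    set r := t ⟨ρ g, g, rfl⟩ with hr
    have hr1 : ρ r = ρ g := ht _
    have hk : ρ (g * r⁻¹) = 1 := by rw [map_mul, map_inv, hr1, mul_inv_cancel]
    refine ⟨(⟨f ⟨g * r⁻¹, hk⟩, _, rfl⟩, ⟨ρ g, g, rfl⟩), ?_⟩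
    change b (g * r⁻¹) + b r = b g
    rw [← hmul _ _ hk, inv_mul_cancel_right]
  have hb2 : (Set.range b).Finite := (Set.finite_range _).subset hb1
  obtain ⟨R, hR⟩ := hb2.isBounded.exists_norm_le
  obtain ⟨n, hn⟩ := exists_nat_gt (R ^ 2 / ∑ s ∈ S, w s * ‖b s‖ ^ 2)
  rw [div_lt_iff₀ hb0, ← hb.Ex_norm_sq hw] at hn
  have h1 : Ex S w n (fun x => ‖b x‖ ^ 2) ≤ Ex S w n (fun _ => R ^ 2) :=
    Ex_mono hw n fun x => pow_le_pow_left₀ (norm_nonneg _) (hR _ ⟨x, rfl⟩) 2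
  rw [Ex_const hw] at h1
  linarith

/-- An infinite finitely generated group of polynomial growth virtually surjects onto `ℤ`. -/
theorem VZ.of_growth {G : Type u} [Group G] [Group.FG G] [Infinite G] {d : ℕ} (h : PG G d) :
    VZ G := by
  obtain ⟨S, h1, hinv, hgen⟩ := exists_symm_gen G
  obtain ⟨w, hw⟩ := exists_isWeight S h1 hinv
  obtain ⟨E, i1, i2, i3, ρ, b, hb, hb0⟩ := exists_finiteDimensional_harmonic hw hgen h
  by_cases hfin : Finite ρ.range
  · exact VZ.of_harmonic_finite hw hb hb0 hfin
  · exact VZ.of_rep h ρ (not_finite_iff_infinite.1 hfin)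

/-- Induction on the degree of growth, which drops when passing to the kernel of a surjection
onto `ℤ`. -/
theorem noeth_and_virtually_nilpotent (d : ℕ) : ∀ (G : Type u) [Group G] [Group.FG G], PG G d →
    Noeth G ∧ VN G := by
  have hfinite : ∀ (G : Type u) [Group G] [Finite G], Noeth G ∧ VN G := fun G _ _ =>
    ⟨Noeth.of_finite G, ⊥, inferInstance, inferInstance⟩
  induction d with
  | zero =>
    intro G _ _ h
    have := h.finite_of_zero
    exact hfinite G
  | succ d ih =>
    intro G _ _ h
    by_cases hG : Finite G
    · exact hfinite G
    have := not_finite_iff_infinite.1 hG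
    obtain ⟨G', hG', f, hf⟩ := VZ.of_growth h
    obtain ⟨t, ht⟩ := hf (Multiplicative.ofAdd 1)
    have hfg : Group.FG G' := inferInstance
    have h' := h.subgroup G'
    have hker : Group.FG f.ker := (Group.fg_iff_subgroup_fg _).2 (h'.ker_fg f t ht)
    obtain ⟨h1, h2⟩ := ih f.ker (h'.ker f t ht)
    have h3 : Noeth G' := Noeth.of_ext f h1 Noeth.int
    exact ⟨Noeth.of_finiteIndex G' h3, VN.of_finiteIndex G' (VN.of_ker h' h3 f t ht h2)⟩

end PolyGrowth

/-- **Gromov's theorem (1981).** A finitely generated group of polynomial growth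
is almost nilpotent: it contains a nilpotent subgroup of finite index. -/
theorem gromov_polynomial_growth_almost_nilpotent
    {G : Type*} [Group G] (S : Finset G)
    (hgen : Subgroup.closure (S : Set G) = ⊤)
    (C : ℝ) (hC : 0 < C) (d : ℕ)
    (hpoly : ∀ k : ℕ,
      (Nat.card {g : G | ∃ l : List G, l.length ≤ k ∧
          (∀ x ∈ l, x ∈ S ∨ x⁻¹ ∈ S) ∧ l.prod = g} : ℝ) ≤ C * ((k : ℝ) ^ d + 1)) :
    ∃ N : Subgroup G, N.FiniteIndex ∧ Group.IsNilpotent N := by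
  have : Group.FG G := Group.fg_iff.2 ⟨S, hgen, S.finite_toSet⟩
  exact (PolyGrowth.noeth_and_virtually_nilpotent d G
    (PolyGrowth.pg_of_balls S hgen C hC d hpoly)).2
end

section
/- Let $(X,d)$ be a proper metric space that is geodesic: for all $x, y \in X$ there exists a map $f : \mathbb{R} \to X$ with $f(0) = x$, $f(d(x,y)) = y$, and $d(f(s), f(t)) = |s - t|$ for all $s, t \in [0, d(x,y)]$. Suppose $X$ has at least two ends in the following sense: there exist a compact set $K \subseteq X$ and disjoint open sets $A, B \subseteq X$ with $A \cup B = X \setminus K$, such that both $A$ and $B$ are nonempty and unbounded. Then $X$ contains a line: there exists $\gamma : \mathbb{R} \to X$ with $d(\gamma(s), \gamma(t)) = |s - t|$ for all $s, t \in \mathbb{R}$. -/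
/-!
Choose a base point `p` and a radius `R` with `K` inside the ball of radius `R` about `p`, and for
each `n` choose `x ∈ A`, `y ∈ B` at distance more than `n + R` from `p`. A minimizing geodesic from
`x` to `y` is connected, so it cannot stay in the disjoint open sets `A` and `B`: it meets `K`
(`exists_geodesic_crossing`), at a time at least `n` away from both of its ends. Shifting time so
that this crossing occurs at `0` gives maps that are isometric on `[-n, n]` and send `0` into `K`
(`exists_long_segment`). For each fixed `t` the values at `t` eventually remain in a compact ball,
so these maps converge pointwise along a nonprincipal ultrafilter, and the limit is a line.
-/

open Filter Topology

theorem exists_geodesic_crossing {X : Type*} [MetricSpace X] {K A B : Set X}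
    (hA : IsOpen A) (hB : IsOpen B) (hdisj : Disjoint A B) (hcover : A ∪ B = Set.univ \ K)
    {L : ℝ} (hL : 0 ≤ L) {f : ℝ → X} (h0 : f 0 ∈ A) (h1 : f L ∈ B)
    (hf : ∀ s ∈ Set.Icc (0 : ℝ) L, ∀ t ∈ Set.Icc (0 : ℝ) L, dist (f s) (f t) = |s - t|) :
    ∃ u ∈ Set.Icc (0 : ℝ) L, f u ∈ K := by
  by_contra! hno
  have hcont : ContinuousOn f (Set.Icc 0 L) := by
    have hlip : LipschitzOnWith 1 f (Set.Icc 0 L) :=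
      LipschitzOnWith.of_dist_le_mul fun s hs t ht => by
        rw [hf s hs t ht, Real.dist_eq, NNReal.coe_one, one_mul]
    exact hlip.continuousOn
  have hconn : IsPreconnected (f '' Set.Icc 0 L) := isPreconnected_Icc.image f hcont
  have hsub : f '' Set.Icc 0 L ⊆ A ∪ B := by
    rintro _ ⟨u, hu, rfl⟩
    rw [hcover]
    exact ⟨trivial, hno u hu⟩
  obtain ⟨z, -, hzA, hzB⟩ := hconn A B hA hB hsub
    ⟨f 0, ⟨0, ⟨le_rfl, hL⟩, rfl⟩, h0⟩ ⟨f L, ⟨L, ⟨hL, le_rfl⟩, rfl⟩, h1⟩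
  exact Set.disjoint_left.mp hdisj hzA hzB

theorem exists_far_mem {X : Type*} [MetricSpace X] {S : Set X}
    (hS : ¬ Bornology.IsBounded S) (p : X) (r : ℝ) : ∃ x ∈ S, r < dist x p := by
  by_contra! h
  exact hS (Metric.isBounded_closedBall.subset fun x hx => Metric.mem_closedBall.mpr (h x hx))

/-- Geodesic segments reaching at least `n` to both sides of a point of `K`, parametrized so that
this point is at time `0`. -/
theorem exists_long_segment {X : Type*} [MetricSpace X]
    (hgeo : ∀ x y : X, ∃ f : ℝ → X, f 0 = x ∧ f (dist x y) = y ∧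
      ∀ s ∈ Set.Icc (0 : ℝ) (dist x y), ∀ t ∈ Set.Icc (0 : ℝ) (dist x y),
        dist (f s) (f t) = |s - t|)
    {K A B : Set X} {p : X} {R : ℝ} (hR : K ⊆ Metric.closedBall p R)
    (hA : IsOpen A) (hB : IsOpen B) (hdisj : Disjoint A B) (hcover : A ∪ B = Set.univ \ K)
    (hAunb : ¬ Bornology.IsBounded A) (hBunb : ¬ Bornology.IsBounded B) (n : ℕ) :
    ∃ g : ℝ → X, g 0 ∈ K ∧
      ∀ s t : ℝ, |s| ≤ n → |t| ≤ n → dist (g s) (g t) = |s - t| := by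
  obtain ⟨x, hxA, hx⟩ := exists_far_mem hAunb p (n + R)
  obtain ⟨y, hyB, hy⟩ := exists_far_mem hBunb p (n + R)
  obtain ⟨f, hf0, hf1, hf⟩ := hgeo x y
  obtain ⟨u, hu, huK⟩ := exists_geodesic_crossing hA hB hdisj hcover dist_nonneg
    (hf0 ▸ hxA) (hf1.symm ▸ hyB) hf
  have hup : dist (f u) p ≤ R := hR huK
  have hxu : dist x (f u) = u := by
    have h := hf 0 ⟨le_rfl, dist_nonneg⟩ u hu
    rwa [hf0, zero_sub, abs_neg, abs_of_nonneg hu.1] at h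
  have hyu : dist y (f u) = dist x y - u := by
    have h := hf (dist x y) ⟨dist_nonneg, le_rfl⟩ u hu
    rwa [hf1, abs_of_nonneg (sub_nonneg.mpr hu.2)] at h
  have hleft : (n : ℝ) ≤ u := by linarith [dist_triangle x (f u) p]
  have hright : u + n ≤ dist x y := by linarith [dist_triangle y (f u) p]
  refine ⟨fun t => f (u + t), by simpa using huK, fun s t hs ht => ?_⟩
  rw [abs_le] at hs ht
  have h := hf (u + s) ⟨by linarith, by linarith⟩ (u + t) ⟨by linarith, by linarith⟩
  simpa using h

/-- A proper geodesic metric space with (at least) two ends contains a line. -/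
theorem exists_line_of_two_ends
    {X : Type*} [MetricSpace X] [ProperSpace X]
    (hgeo : ∀ x y : X, ∃ f : ℝ → X, f 0 = x ∧ f (dist x y) = y ∧
      ∀ s ∈ Set.Icc (0 : ℝ) (dist x y), ∀ t ∈ Set.Icc (0 : ℝ) (dist x y),
        dist (f s) (f t) = |s - t|)
    (K : Set X) (hK : IsCompact K) (A B : Set X)
    (hA : IsOpen A) (hB : IsOpen B) (hdisj : Disjoint A B)
    (hcover : A ∪ B = Set.univ \ K)
    (hAne : A.Nonempty) (hBne : B.Nonempty)
    (hAunb : ¬ Bornology.IsBounded A) (hBunb : ¬ Bornology.IsBounded B) :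
    ∃ γ : ℝ → X, ∀ s t : ℝ, dist (γ s) (γ t) = |s - t| := by
  obtain ⟨p, -⟩ := hAne
  obtain ⟨R, hR⟩ := hK.isBounded.subset_closedBall p
  choose g hgK hg using
    exists_long_segment hgeo hR hA hB hdisj hcover hAunb hBunb
  have hlarge : ∀ t : ℝ, ∀ᶠ n : ℕ in (hyperfilter ℕ : Filter ℕ), |t| ≤ n := fun t =>
    Nat.hyperfilter_le_atTop (tendsto_natCast_atTop_atTop.eventually_ge_atTop |t|)
  have hlim : ∀ t : ℝ, ∃ z : X, Tendsto (fun n => g n t) (hyperfilter ℕ) (𝓝 z) := by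
    intro t
    have hball : ∀ᶠ n in (hyperfilter ℕ : Filter ℕ),
        g n t ∈ Metric.closedBall p (|t| + R) := by
      filter_upwards [hlarge t] with n hn
      have h0 : dist (g n 0) p ≤ R := hR (hgK n)
      have ht : dist (g n t) (g n 0) = |t| := by
        simpa using hg n t 0 hn (by simp)
      rw [Metric.mem_closedBall]
      linarith [dist_triangle (g n t) (g n 0) p]
    obtain ⟨z, -, hz⟩ := (isCompact_closedBall p (|t| + R)).ultrafilter_le_nhds
      ((hyperfilter ℕ).map fun n => g n t) (le_principal_iff.mpr hball)
    exact ⟨z, hz⟩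
  choose γ hγ using hlim
  refine ⟨γ, fun s t => tendsto_nhds_unique ((hγ s).dist (hγ t)) ?_⟩
  refine tendsto_const_nhds.congr' ?_
  filter_upwards [hlarge s, hlarge t] with n hs ht
  exact (hg n s t hs ht).symm
end
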